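/- arXiv:1404.7459 — 2 statements merged into one kernel-verified Lean document; each statement's English description precedes it below -/
import Mathlib

section
/- Let k be a field of characteristic p > 0 with at least 3 elements. Let K* = k(x,y) be the rational function field in two variables over k, set u = x^p(1+y) and v = y^p + x, let K = k(u,v) ⊆ K*, and let B = k[x,y]_{(x,y)} and A = k[u,v]_{(u,v)}. Then B dominates A, and there exists a valuation ring V* of K* containing k that dominates B, such that there do NOT exist regular algebraic local rings A' of K over k and B' of K* over k with V* dominating B', B' dominating A', A' dominating A, B' dominating B, and A' → B' a monomial extension. -/
/-! Counterexample to local and weak local monomialization in positive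
characteristic (Cutkosky).  Statement 1: the concrete counterexample
`u = x^p (1+y)`, `v = y^p + x` inside `K* = k(x,y)`. -/

open MvPolynomial

section Defs

variable {F : Type} [Field F]

/-- `V` is a valuation ring of the field `F`: a proper subring such that for
every nonzero `f ∈ F`, either `f ∈ V` or `f⁻¹ ∈ V`. -/
def IsValuationSubring (V : Subring F) : Prop :=
  V ≠ ⊤ ∧ ∀ z : F, z ≠ 0 → z ∈ V ∨ z⁻¹ ∈ V

/-- `S` dominates `R`: `R ⊆ S` and `m_S ∩ R = m_R`, i.e. an element of `R` is
a non-unit of `S` if and only if it is a non-unit of `R`. -/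
def Dominates (S R : Subring F) : Prop :=
  ∃ _ : R ≤ S, ∀ (z : F) (hR : z ∈ R) (hS : z ∈ S),
    (¬ IsUnit (⟨z, hS⟩ : S) ↔ ¬ IsUnit (⟨z, hR⟩ : R))

/-- `A` is a regular local ring of Krull dimension `n`: a Noetherian local
ring whose maximal ideal (= the ideal of non-units) is generated by
`n = dim A` elements (a regular system of parameters). -/
def IsRegularLocalOfDim (A : Subring F) (n : ℕ) : Prop :=
  IsNoetherianRing A ∧ IsLocalRing A ∧ ringKrullDim A = n ∧
  ∃ s : Fin n → A, ∀ z : A, z ∈ Ideal.span (Set.range s) ↔ ¬ IsUnit z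

/-- `A → B` is a monomial extension: `A` and `B` are regular local rings of a
common dimension `n` and there are regular systems of parameters
`x₁, …, xₙ` of `A` and `y₁, …, yₙ` of `B`, units `δ₁, …, δₙ` of `B` and an
`n × n` matrix `(a_{ij})` of natural numbers with nonzero determinant such
that `xᵢ = δᵢ ∏_j y_j^(a_{ij})` for all `i`. -/
def IsMonomialExtension (A B : Subring F) : Prop :=
  ∃ (n : ℕ) (hAB : A ≤ B),
    IsRegularLocalOfDim A n ∧ IsRegularLocalOfDim B n ∧
    ∃ (xs : Fin n → A) (ys : Fin n → B) (δ : Fin n → B)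
      (M : Matrix (Fin n) (Fin n) ℕ),
      (∀ z : A, z ∈ Ideal.span (Set.range xs) ↔ ¬ IsUnit z) ∧
      (∀ z : B, z ∈ Ideal.span (Set.range ys) ↔ ¬ IsUnit z) ∧
      (∀ i, IsUnit (δ i)) ∧
      (M.map ((↑·) : ℕ → ℚ)).det ≠ 0 ∧
      (∀ i, Subring.inclusion hAB (xs i) = δ i * ∏ j, (ys j) ^ (M i j))

variable (k : Type) [Field k] [Algebra k F]

/-- `A` is an algebraic local ring of `L` over `k`: a local domain with
quotient field `L` which is essentially of finite type over `k`, i.e. a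
localization of a finitely generated `k`-subalgebra `C` of `L` at a prime
ideal (necessarily `C ∩ m_A`): every element of `A` can be written as `a/b`
with `a, b ∈ C` and `b` a unit of `A`. -/
def IsAlgebraicLocalRingOf (L : IntermediateField k F) (A : Subring F) : Prop :=
  (A : Set F) ⊆ L ∧
  IsLocalRing A ∧
  (∀ z ∈ L, ∃ a ∈ A, ∃ b ∈ A, b ≠ 0 ∧ z * b = a) ∧
  ∃ C : Subalgebra k F, C.FG ∧ (C : Set F) ⊆ A ∧
    ∀ z ∈ A, ∃ a ∈ C, ∃ b ∈ C, (∃ b' ∈ A, b * b' = 1) ∧ z * b = a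

/-- The image in `F` of the localization of `k[x,y]` at the maximal ideal
`(x,y)` under a ring homomorphism `φ : k[x,y] →+* F`: the set of all
`z ∈ F` of the form `φ(f)/φ(g)` with `f, g ∈ k[x,y]` and `g(0,0) ≠ 0`.
For `φ` the canonical map into `F = k(x,y)` this is `k[x,y]_(x,y)`, and for
`φ = evaluation at (u,v)` (with `u, v` algebraically independent) it is
`k[u,v]_(u,v)`. -/
def localSubring {k : Type} [Field k] (φ : MvPolynomial (Fin 2) k →+* F) :
    Subring F where
  carrier := {z | ∃ f g : MvPolynomial (Fin 2) k,
    constantCoeff g ≠ 0 ∧ z * φ g = φ f}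
  zero_mem' := ⟨0, 1, by simp⟩
  one_mem' := ⟨1, 1, by simp⟩
  add_mem' := by
    rintro z₁ z₂ ⟨f₁, g₁, hg₁, h₁⟩ ⟨f₂, g₂, hg₂, h₂⟩
    refine ⟨f₁ * g₂ + f₂ * g₁, g₁ * g₂, by simp [mul_ne_zero hg₁ hg₂], ?_⟩
    rw [map_mul, map_add, map_mul, map_mul, ← h₁, ← h₂]
    ring
  mul_mem' := by
    rintro z₁ z₂ ⟨f₁, g₁, hg₁, h₁⟩ ⟨f₂, g₂, hg₂, h₂⟩
    refine ⟨f₁ * f₂, g₁ * g₂, by simp [mul_ne_zero hg₁ hg₂], ?_⟩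
    rw [map_mul, map_mul, ← h₁, ← h₂]
    ring
  neg_mem' := by
    rintro z ⟨f, g, hg, h⟩
    exact ⟨-f, g, hg, by rw [map_neg, ← h]; ring⟩

end Defs

/-!
Starting with `s₀ = x`, `s₁ = y`, `w₀ = u`, `w₁ = v`, write `sᵢ = sᵢ₊₁ ^ p * (sᵢ₊₂ + aᵢ)` and
`wᵢ = wᵢ₊₁ ^ p * (wᵢ₊₂ + bᵢ)` with constants `aᵢ, bᵢ ∈ k`. As `k` has a third element besides two
excluded ones, the constants can be chosen so that `k[wᵢ, wᵢ₊₁] → k[sᵢ, sᵢ₊₁]`, localized at the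
origins, keeps the shape of `A → B`: `wᵢ` is `sᵢ ^ p` times a unit and `wᵢ₊₁ = τ sᵢ₊₁ ^ p + Ω sᵢ`
with units `τ, Ω`. The valuation ring `V` dominates all these local rings.

A regular local ring of `K*` that contains `B` and is dominated by `V` is a localization of
`k[sₗ / sₗ₊₁ ^ m, sₗ₊₁]` with `m < p`, and similarly below. If such an extension is monomial, then
so is the extension over each further quadratic transform of the lower ring that is still dominated
by the upper one; hence one may take the lower ring to be the localization of `k[wₗ, wₗ₊₁]`. Put
`ξ = sₗ / sₗ₊₁ ^ m` and `η = sₗ₊₁`. Up to units, `wₗ` is `(ξ η ^ m) ^ p` and the Jacobian of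
`(wₗ, wₗ₊₁)` is `ξ ^ p η ^ (m p + m)`. If two parameters of the lower ring were monomial with
independent exponents, one of them would be divisible by the `p ^ 2`-th power of a prime; as `p`-th
powers are constants for derivations, this power would divide the Jacobian, whose exponents are
below `p ^ 2`.
-/

section KrullDimension

variable {k : Type*} [Field k]

theorem transcendental_adjoin_range_of_map_eq_zero {D E : Type*} [CommRing D] [IsDomain D]
    [CommRing E] [Algebra k D] [Algebra k E] (φ : D →ₐ[k] E) {ι : Type*} {w : ι → D}
    (hw : AlgebraicIndependent k (φ ∘ w)) {q : D} (hq : q ≠ 0) (hφq : φ q = 0) :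
    Transcendental (Algebra.adjoin k (Set.range w)) q := by
  intro halg
  obtain ⟨a, ha, b, hab⟩ := halg.exists_nonzero_dvd (mem_nonZeroDivisors_of_ne_zero hq)
  obtain ⟨f, hf⟩ := (hw.of_comp φ).aevalEquiv.surjective a
  have hf' : aeval w f = (a : D) := by simp [← hf]
  have hφf : aeval (φ ∘ w) f = 0 :=
    calc aeval (φ ∘ w) f = φ (aeval w f) := (comp_aeval_apply _ _ _).symm
      _ = φ (q * b) := by rw [hf']; exact congrArg φ hab
      _ = 0 := by rw [map_mul, hφq, zero_mul]
  have hf0 : f = 0 := hw (hφf.trans (map_zero _).symm)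
  exact ha (by rw [← hf, hf0, map_zero])

theorem trdeg_add_one_le_of_surjective.{v} {D E : Type v} [CommRing D] [IsDomain D]
    [CommRing E] [IsDomain E] [Algebra k D] [Algebra k E] {φ : D →ₐ[k] E}
    (hφ : Function.Surjective φ) {q : D} (hq : q ≠ 0) (hφq : φ q = 0) :
    Algebra.trdeg k E + 1 ≤ Algebra.trdeg k D := by
  obtain ⟨ι, z, hz⟩ := exists_isTranscendenceBasis' k E
  obtain ⟨w, rfl⟩ : ∃ w : ι → D, φ ∘ w = z := hφ.comp_left z
  have hqw := ((hz.1.of_comp φ).option_iff_transcendental q).2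
    (transcendental_adjoin_range_of_map_eq_zero φ hz.1 hq hφq)
  calc Algebra.trdeg k E + 1 = Cardinal.mk (Option ι) := by
        rw [← hz.cardinalMk_eq_trdeg, Cardinal.mk_option]
    _ ≤ Algebra.trdeg k D := hqw.cardinalMk_le_trdeg

variable {D : Type*} [CommRing D] [Algebra k D]

theorem trdeg_quotient_add_one_le {P Q : Ideal D} [P.IsPrime] [Q.IsPrime] (hPQ : P < Q) :
    Algebra.trdeg k (D ⧸ Q) + 1 ≤ Algebra.trdeg k (D ⧸ P) := by
  obtain ⟨q, hqQ, hqP⟩ := SetLike.exists_of_lt hPQ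
  refine trdeg_add_one_le_of_surjective (φ := Ideal.Quotient.factorₐ k hPQ.le)
    (Ideal.Quotient.factor_surjective hPQ.le) (q := Ideal.Quotient.mk P q) ?_ ?_
  · rwa [Ne, Ideal.Quotient.eq_zero_iff_mem]
  · exact Ideal.Quotient.eq_zero_iff_mem.2 hqQ

theorem length_le_trdeg_quotient_head (c : LTSeries (PrimeSpectrum D)) :
    c.length ≤ Algebra.trdeg k (D ⧸ c.head.asIdeal) := by
  induction c using RelSeries.inductionOn with
  | singleton P => simp
  | cons c P hP ih =>
    rw [RelSeries.head_cons]
    calc ((c.cons P hP).length : Cardinal) = c.length + 1 := by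
          rw [RelSeries.cons_length, Nat.cast_succ]
      _ ≤ Algebra.trdeg k (D ⧸ c.head.asIdeal) + 1 := by gcongr
      _ ≤ Algebra.trdeg k (D ⧸ P.asIdeal) := trdeg_quotient_add_one_le hP

theorem ringKrullDim_le_of_trdeg_le {N : ℕ} (h : Algebra.trdeg k D ≤ N) :
    ringKrullDim D ≤ N := by
  refine iSup_le fun c => ?_
  have hc : (c.length : Cardinal) ≤ N :=
    (length_le_trdeg_quotient_head c).trans <|
      (trdeg_le_of_surjective (Ideal.Quotient.mkₐ k _)
        (Ideal.Quotient.mkₐ_surjective k _)).trans h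
  exact_mod_cast hc

end KrullDimension

section Factorial

variable {R : Type*} [CommRing R] [IsLocalRing R]

open IsLocalRing

theorem maximalIdeal_quotient_eq_map {I : Ideal R} [IsLocalRing (R ⧸ I)] :
    maximalIdeal (R ⧸ I) = (maximalIdeal R).map (Ideal.Quotient.mk I) := by
  have : IsLocalHom (Ideal.Quotient.mk I) := Ideal.Quotient.mk_surjective.isLocalHom
  rw [← maximalIdeal_comap (Ideal.Quotient.mk I),
    Ideal.map_comap_of_surjective _ Ideal.Quotient.mk_surjective]

/-- `s, t` is a regular system of parameters of the two-dimensional regular local ring `R`. -/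
structure IsParameterPair (s t : R) : Prop where
  ringKrullDim_eq : ringKrullDim R = 2
  maximalIdeal_eq : maximalIdeal R = Ideal.span {s, t}

namespace IsParameterPair

variable {s t : R}

theorem symm (h : IsParameterPair s t) : IsParameterPair t s :=
  ⟨h.ringKrullDim_eq, h.maximalIdeal_eq.trans Ideal.span_pair_comm⟩

theorem left_mem (h : IsParameterPair s t) : s ∈ maximalIdeal R :=
  h.maximalIdeal_eq ▸ Ideal.subset_span (by simp)

theorem mul_add_mul (h : IsParameterPair s t) (a : R) {ω : R} (hω : IsUnit ω) :
    IsParameterPair (ω * s + a * t) t := by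
  refine ⟨h.ringKrullDim_eq, h.maximalIdeal_eq.trans ?_⟩
  rw [mul_comm a, Ideal.span_pair_add_right_mul, Ideal.span_insert, Ideal.span_insert,
    Ideal.span_singleton_mul_left_unit hω]

end IsParameterPair

variable [IsNoetherianRing R]

theorem le_span_singleton_of_forall_exists_eq_mul_add_mul {P : Ideal R} {f s : R}
    (hs : s ∈ maximalIdeal R) (h : ∀ g ∈ P, ∃ c, ∃ g' ∈ P, g = c * f + s * g') :
    P ≤ Ideal.span {f} := by
  refine Submodule.le_of_le_smul_of_le_jacobson_bot (I := maximalIdeal R)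
    (IsNoetherian.noetherian P) (maximalIdeal_le_jacobson _) fun g hg => ?_
  obtain ⟨c, g', hg', rfl⟩ := h g hg
  exact Submodule.add_mem_sup (Ideal.mul_mem_left _ _ (Ideal.mem_span_singleton_self f))
    (Submodule.smul_mem_smul hs hg')

theorem uniqueFactorizationMonoid_of_isPrincipalIdealRing_quotient [IsDomain R] {s : R}
    (hs : Prime s) [IsPrincipalIdealRing (R ⧸ Ideal.span {s})] : UniqueFactorizationMonoid R := by
  refine UniqueFactorizationMonoid.iff_exists_prime_mem_of_isPrime.2 fun P hP0 hP => ?_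
  by_cases hsP : s ∈ P
  · exact ⟨s, hsP, hs⟩
  let π := Ideal.Quotient.mk (Ideal.span {s})
  obtain ⟨f', hf' : P.map π = Ideal.span {f'}⟩ := IsPrincipalIdealRing.principal (P.map π)
  obtain ⟨f, hfP, rfl⟩ := (Ideal.mem_map_iff_of_surjective π Ideal.Quotient.mk_surjective).1
    (hf'.symm ▸ Ideal.mem_span_singleton_self f')
  have hle : P ≤ Ideal.span {f} := by
    refine le_span_singleton_of_forall_exists_eq_mul_add_mul
      ((mem_maximalIdeal s).2 hs.not_isUnit) fun g hg => ?_
    obtain ⟨c', hc'⟩ := Ideal.mem_span_singleton'.1 (hf' ▸ Ideal.mem_map_of_mem π hg)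
    obtain ⟨c, rfl⟩ := Ideal.Quotient.mk_surjective c'
    obtain ⟨h, hh⟩ : s ∣ g - c * f := by
      rw [← Ideal.mem_span_singleton, ← Ideal.Quotient.mk_eq_mk_iff_sub_mem, map_mul]
      exact hc'.symm
    have hhP : h ∈ P := (hP.mem_or_mem (show s * h ∈ P from
      hh ▸ P.sub_mem hg (P.mul_mem_left _ hfP))).resolve_left hsP
    exact ⟨c, h, hhP, by rw [← hh]; ring⟩
  have hPf : P = Ideal.span {f} := le_antisymm hle ((Ideal.span_singleton_le_iff_mem _).2 hfP)
  have hf0 : f ≠ 0 := fun hf0 => hP0 (by rw [hPf, hf0, Ideal.span_singleton_zero])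
  exact ⟨f, hfP, (Ideal.span_singleton_prime hf0).1 (hPf ▸ hP)⟩

namespace IsParameterPair

variable {s t : R}

theorem maximalIdeal_notMem_minimalPrimes (h : IsParameterPair s t) (z : R) :
    maximalIdeal R ∉ (Ideal.span {z}).minimalPrimes := by
  intro hz
  have hht := Ideal.height_le_one_of_isPrincipal_of_mem_minimalPrimes _ _ hz
  have hdim := maximalIdeal_height_eq_ringKrullDim (R := R)
  rw [h.ringKrullDim_eq] at hdim
  rw [show (maximalIdeal R).height = 2 from WithBot.coe_injective hdim] at hht
  exact absurd hht (by decide)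

theorem maximalIdeal_ne_span_singleton (h : IsParameterPair s t) (z : R) :
    maximalIdeal R ≠ Ideal.span {z} := by
  intro hz
  refine h.maximalIdeal_notMem_minimalPrimes z ?_
  rw [← hz, Ideal.minimalPrimes_eq_subsingleton_self]
  rfl

theorem not_dvd (h : IsParameterPair s t) : ¬ s ∣ t := fun hst =>
  h.maximalIdeal_ne_span_singleton s <|
    h.maximalIdeal_eq.trans (Ideal.span_pair_eq_span_left_iff_dvd.2 hst)

theorem left_ne_zero (h : IsParameterPair s t) : s ≠ 0 := by
  rintro rfl
  exact h.symm.not_dvd (dvd_zero t)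

theorem prime_left (h : IsParameterPair s t) : Prime s := by
  obtain ⟨P, hP, -⟩ := Ideal.exists_minimalPrimes_le
    ((Ideal.span_singleton_le_iff_mem _).2 h.left_mem)
  have hPp : P.IsPrime := hP.1.1
  have hPm : P ≤ Ideal.span {s, t} := h.maximalIdeal_eq ▸ le_maximalIdeal hPp.ne_top
  have hsP : s ∈ P := hP.1.2 (Ideal.mem_span_singleton_self s)
  have htP : t ∉ P := fun htP => h.maximalIdeal_notMem_minimalPrimes s <| by
    rwa [h.maximalIdeal_eq, le_antisymm (Ideal.span_le.2 (Set.pair_subset hsP htP)) hPm]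
  have hle : P ≤ Ideal.span {s} := by
    refine le_span_singleton_of_forall_exists_eq_mul_add_mul h.symm.left_mem fun f hf => ?_
    obtain ⟨a, b, rfl⟩ := Ideal.mem_span_pair.1 (hPm hf)
    have hbt : b * t ∈ P := (P.add_mem_iff_right (P.mul_mem_left a hsP)).1 hf
    exact ⟨a, b, (hPp.mem_or_mem hbt).resolve_right htP, by ring⟩
  have hPs : P = Ideal.span {s} := le_antisymm hle hP.1.2
  exact (Ideal.span_singleton_prime h.left_ne_zero).1 (hPs ▸ hPp)

theorem uniqueFactorizationMonoid [IsDomain R] (h : IsParameterPair s t) :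
    UniqueFactorizationMonoid R := by
  have : (Ideal.span {s}).IsPrime := (Ideal.span_singleton_prime h.left_ne_zero).2 h.prime_left
  have : IsLocalRing (R ⧸ Ideal.span {s}) :=
    IsLocalRing.of_surjective' _ Ideal.Quotient.mk_surjective
  have hmax : maximalIdeal (R ⧸ Ideal.span {s}) = Ideal.span {Ideal.Quotient.mk _ t} := by
    rw [maximalIdeal_quotient_eq_map, h.maximalIdeal_eq, Ideal.map_span, Set.image_pair,
      Ideal.Quotient.eq_zero_iff_mem.2 (Ideal.mem_span_singleton_self s), Ideal.span_pair_comm,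
      Ideal.span_pair_zero]
  have : IsPrincipalIdealRing (R ⧸ Ideal.span {s}) :=
    ((tfae_of_isNoetherianRing_of_isLocalRing_of_isDomain (R ⧸ Ideal.span {s})).out 0 4 :).2
      (⟨_, hmax⟩ : (maximalIdeal (R ⧸ Ideal.span {s})).IsPrincipal)
  exact uniqueFactorizationMonoid_of_isPrincipalIdealRing_quotient h.prime_left

end IsParameterPair

end Factorial

section StrictTransform

open IsLocalRing

variable {R : Type*} [CommRing R] [IsLocalRing R]

namespace IsParameterPair

variable {s t τ ω : R} {n : ℕ}

theorem mul_add_mul_pow (h : IsParameterPair s t) (τ : R) (hω : IsUnit ω) (hn : n ≠ 0) :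
    IsParameterPair (ω * s + τ * t ^ n) t := by
  have := h.mul_add_mul (τ * t ^ (n - 1)) hω
  rwa [mul_assoc, pow_sub_one_mul hn] at this

theorem exists_dvd_pow_mul_pow_sub (h : IsParameterPair s t) (hω : IsUnit ω) {z w : R}
    (hzw : IsParameterPair z w) (hz : z ∣ ω * s + τ * t ^ n) (a b : ℕ) :
    ∃ q, z ∣ s ^ a * t ^ b - q * w ^ (n * a + b) := by
  obtain ⟨ω, rfl⟩ := hω
  obtain ⟨r, η, hrη⟩ := Ideal.mem_span_pair.1 (hzw.maximalIdeal_eq ▸ h.symm.left_mem)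
  let π := Ideal.Quotient.mk (Ideal.span {z})
  have hπ {f : R} : π f = 0 ↔ z ∣ f := by
    rw [Ideal.Quotient.eq_zero_iff_mem, Ideal.mem_span_singleton]
  have ht : π t = π η * π w := by
    rw [← hrη, map_add, map_mul, hπ.2 dvd_rfl, mul_zero, zero_add, map_mul]
  have hs : π s = π (-(↑ω⁻¹ * τ)) * π t ^ n := by
    rw [← sub_eq_zero, ← map_pow, ← map_mul, ← map_sub, hπ]
    have := hz.mul_left ↑ω⁻¹
    rw [mul_add, Units.inv_mul_cancel_left] at this
    simpa [mul_assoc] using this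
  refine ⟨(-(↑ω⁻¹ * τ)) ^ a * η ^ (n * a + b), hπ.1 ?_⟩
  simp only [map_sub, map_mul, map_pow, hs, ht]
  ring

variable [IsNoetherianRing R]

theorem le_of_dvd_mul_pow_sub (h : IsParameterPair s t) {δ q : R} (hδ : IsUnit δ) {d n : ℕ}
    (hdvd : s ∣ δ * t ^ d - q * t ^ n) : n ≤ d := by
  by_contra! hlt
  have hfac : δ * t ^ d - q * t ^ n = t ^ d * (δ - q * t ^ (n - d)) := by
    rw [mul_sub, mul_left_comm, ← pow_add, Nat.add_sub_cancel' hlt.le]; ring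
  rcases h.prime_left.dvd_or_dvd (hfac ▸ hdvd) with hs | hs
  · exact h.not_dvd (h.prime_left.dvd_of_dvd_pow hs)
  · refine (mem_maximalIdeal δ).1 ?_ hδ
    have htn : q * t ^ (n - d) ∈ maximalIdeal R :=
      Ideal.mul_mem_left _ _ (Ideal.pow_mem_of_mem _ h.symm.left_mem _ (by omega))
    simpa using add_mem (Ideal.mem_of_dvd _ hs h.left_mem) htn

theorem not_dvd_pow_mul_pow (h : IsParameterPair s t) (hτ : IsUnit τ) (hω : IsUnit ω)
    (hn : n ≠ 0) (a b : ℕ) : ¬ ω * s + τ * t ^ n ∣ s ^ a * t ^ b := by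
  have hζ := h.mul_add_mul_pow τ hω hn
  have hζt (c : ℕ) : ¬ ω * s + τ * t ^ n ∣ t ^ c := fun hdvd =>
    hζ.not_dvd (hζ.prime_left.dvd_of_dvd_pow hdvd)
  intro hdvd
  rcases hζ.prime_left.dvd_or_dvd hdvd with hs | ht
  · have hζs := (hζ.prime_left.dvd_of_dvd_pow hs).mul_left ω
    exact hζt n (hτ.dvd_mul_left.1 ((dvd_add_right hζs).1 dvd_rfl))
  · exact hζt b ht

variable [IsDomain R]

theorem not_pow_dvd_pow_mul_pow (h : IsParameterPair s t) {z : R} (hz : Prime z) {a b n : ℕ}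
    (ha : a < n) (hb : b < n) : ¬ z ^ n ∣ s ^ a * t ^ b := by
  intro hdvd
  have not_pow_dvd_pow {r : R} {c : ℕ} (hr : Prime r) (hc : c < n) : ¬ z ^ n ∣ r ^ c := by
    intro hzr
    have hass : Associated z r := (hz.dvd_prime_iff_associated hr).1
      (hz.dvd_of_dvd_pow ((dvd_pow_self z (by omega)).trans hzr))
    exact hc.not_ge ((pow_dvd_pow_iff hr.ne_zero hr.not_isUnit).1
      (hass.pow_pow.dvd_iff_dvd_left.1 hzr))
  by_cases hzs : z ∣ s
  · have hzt : ¬ z ∣ t ^ b := fun hzt => h.not_dvd <|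
      ((hz.dvd_prime_iff_associated h.prime_left).1 hzs).dvd_iff_dvd_left.1 (hz.dvd_of_dvd_pow hzt)
    exact not_pow_dvd_pow h.prime_left ha (hz.pow_dvd_of_dvd_mul_right _ hzt hdvd)
  · exact not_pow_dvd_pow h.symm.prime_left hb
      (hz.pow_dvd_of_dvd_mul_left _ (fun hzs' => hzs (hz.dvd_of_dvd_pow hzs')) hdvd)

theorem pow_dvd_of_dvd_left (h : IsParameterPair s t) (hτ : IsUnit τ) (hω : IsUnit ω)
    (hn : n ≠ 0) {z w : R} (hzw : IsParameterPair z w) (hz : ω * s + τ * t ^ n ∣ z)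
    {u v γ δ : R} (hγ : IsUnit γ) (hδ : IsUnit δ) {a b c d : ℕ} (hu : u = s ^ a * t ^ b * γ)
    (hv : v = δ * z ^ c * w ^ d) (huv : u ∈ Ideal.span {ω * s + τ * t ^ n, v})
    (hvu : v ∈ Ideal.span {ω * s + τ * t ^ n, u}) : w ^ (n * a + b) ∣ v := by
  obtain ⟨e, f, hef⟩ := Ideal.mem_span_pair.1 huv
  obtain ⟨g, g', hgg⟩ := Ideal.mem_span_pair.1 hvu
  have hc : c = 0 := by
    by_contra hc
    refine h.not_dvd_pow_mul_pow hτ hω hn a b (hγ.dvd_mul_right.1 ?_)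
    rw [← hu, ← hef, hv]
    exact dvd_add (dvd_mul_left _ _)
      (((hz.trans (dvd_pow_self z hc)).mul_left δ).mul_right _ |>.mul_left f)
  have hzζ : z ∣ ω * s + τ * t ^ n := ((((h.mul_add_mul_pow τ hω hn).prime_left
    |>.dvd_prime_iff_associated hzw.prime_left).1 hz).symm).dvd
  obtain ⟨q, hq⟩ := h.exists_dvd_pow_mul_pow_sub hω hzw hzζ a b
  rw [hc, pow_zero, mul_one] at hv
  have hdvd : z ∣ δ * w ^ d - g' * γ * q * w ^ (n * a + b) := by
    have : δ * w ^ d - g' * γ * q * w ^ (n * a + b) = g * (ω * s + τ * t ^ n) +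
        g' * γ * (s ^ a * t ^ b - q * w ^ (n * a + b)) := by
      rw [← hv, ← hgg, hu]; ring
    exact this ▸ dvd_add (hzζ.mul_left g) (hq.mul_left _)
  exact hv ▸ (pow_dvd_pow w (hzw.le_of_dvd_mul_pow_sub hδ hdvd)).mul_left δ

end IsParameterPair

end StrictTransform

section BinaryPolynomials

variable {k : Type*} [Field k] {D : Type*} [CommRing D] [Algebra k D]

theorem aeval_sub_algebraMap_constantCoeff_mem {σ : Type*} (I : Ideal D) {s : σ → D}
    (hs : ∀ i, s i ∈ I) (f : MvPolynomial σ k) :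
    aeval s f - algebraMap k D (constantCoeff f) ∈ I := by
  have h0 : (fun i => Ideal.Quotient.mkₐ k I (s i)) = 0 :=
    funext fun i => Ideal.Quotient.eq_zero_iff_mem.2 (hs i)
  have h := comp_aeval_apply s (Ideal.Quotient.mkₐ k I) f
  rw [h0, aeval_zero] at h
  rw [← Ideal.Quotient.eq_zero_iff_mem, map_sub, sub_eq_zero]
  exact h

theorem isUnit_aeval_iff [IsLocalRing D] {σ : Type*} {s : σ → D} (hs : ∀ i, ¬ IsUnit (s i))
    (f : MvPolynomial σ k) : IsUnit (aeval s f) ↔ constantCoeff f ≠ 0 := by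
  have h := aeval_sub_algebraMap_constantCoeff_mem (IsLocalRing.maximalIdeal D) hs f
  refine ⟨fun hu h0 => ?_, fun h0 => ?_⟩
  · rw [h0, map_zero, sub_zero] at h
    exact h hu
  · by_contra hu
    have hmem := (Submodule.sub_mem_iff_right _
      (show aeval s f ∈ IsLocalRing.maximalIdeal D from hu)).1 h
    exact hmem ((isUnit_iff_ne_zero.2 h0).map (algebraMap k D))

theorem exists_aeval_mul_eq_pow_mul {E κ : Type*} [CommRing E] [Algebra k E] [Field κ]
    [Algebra k κ] {φ : E →ₐ[k] Polynomial κ} {z t : E} (hz : φ z = Polynomial.X) (ht : φ t = 0)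
    (d : ℕ) {f : MvPolynomial (Fin 2) k} (hf : ∀ m ∈ f.support, d ≤ m 0 + m 1) :
    ∃ w, aeval ![z * t, t] f = t ^ d * w ∧ ∀ m : Fin 2 →₀ ℕ, m 0 + m 1 = d →
      (φ w).coeff (m 0) = algebraMap k κ (coeff m f) := by
  let w (m : Fin 2 →₀ ℕ) : E :=
    algebraMap k E (coeff m f) * (z ^ m 0 * t ^ (m 0 + m 1 - d))
  refine ⟨∑ m ∈ f.support, w m, ?_, fun n hn => ?_⟩
  · rw [aeval_def, eval₂_eq', Finset.mul_sum]
    refine Finset.sum_congr rfl fun m hm => ?_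
    have hpow : t ^ (m 0 + m 1) = t ^ d * t ^ (m 0 + m 1 - d) := by
      rw [← pow_add, Nat.add_sub_cancel' (hf m hm)]
    rw [pow_add] at hpow
    simp only [Fin.prod_univ_two, Matrix.cons_val_zero, Matrix.cons_val_one, w]
    linear_combination algebraMap k E (coeff m f) * z ^ m 0 * hpow
  · have hφw (m : Fin 2 →₀ ℕ) : (φ (w m)).coeff (n 0) =
        algebraMap k κ (coeff m f) * if n 0 = m 0 ∧ m 0 + m 1 - d = 0 then 1 else 0 := by
      simp only [w, map_mul, map_pow, hz, ht, AlgHom.commutes, Polynomial.algebraMap_apply,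
        Polynomial.coeff_C_mul]
      rcases eq_or_ne (m 0 + m 1 - d) 0 with h0 | h0
      · simp [h0, Polynomial.coeff_X_pow]
      · simp [h0]
    rw [map_sum, Polynomial.finsetSum_coeff, Finset.sum_eq_single n]
    · simp [hφw, hn]
    · intro m hm hmn
      rw [hφw, if_neg, mul_zero]
      rintro ⟨h0, h1⟩
      have := hf m hm
      exact hmn (Finsupp.ext (Fin.forall_fin_two.2 ⟨h0.symm, by omega⟩))
    · intro hns
      simp [hφw, notMem_support_iff.1 hns]

section Factorial

variable [IsDomain D] [UniqueFactorizationMonoid D]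

theorem prime_C_mul_X_sub_C {s t : D} (hst : IsRelPrime s t) (ht : t ≠ 0) :
    Prime (Polynomial.C t * Polynomial.X - Polynomial.C s) := by
  rw [sub_eq_add_neg, ← Polynomial.C_neg]
  exact (Polynomial.irreducible_C_mul_X_add_C ht hst.symm.neg_right).prime

open Polynomial in
/-- `E` is the chart `D[T] / (t T - s)` of the blow-up of `(s, t)`, and `φ` restricts functions to
the exceptional curve. -/
theorem exists_algHom_residue_polynomial.{u} {D : Type u} [CommRing D] [Algebra k D] [IsDomain D]
    [UniqueFactorizationMonoid D] [IsLocalRing D] {s t : D} (hs : ¬ IsUnit s) (ht : ¬ IsUnit t)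
    (hst : IsRelPrime s t) :
    ∃ (E : Type u) (_ : CommRing E) (_ : IsDomain E) (_ : Algebra k E) (ι : D →ₐ[k] E)
      (φ : E →ₐ[k] (IsLocalRing.ResidueField D)[X]) (z : E), Function.Injective ι ∧
      φ z = Polynomial.X ∧ z * ι t = ι s ∧ ∀ c, ¬ IsUnit c → φ (ι c) = 0 := by
  have ht0 : t ≠ 0 := by
    rintro rfl
    exact hs (isRelPrime_zero_right.1 hst)
  let q := Polynomial.C t * Polynomial.X - Polynomial.C s
  have hq : Prime q := prime_C_mul_X_sub_C hst ht0
  have : (Ideal.span {q}).IsPrime := (Ideal.span_singleton_prime hq.ne_zero).2 hq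
  let ρ : D[X] →ₐ[k] (IsLocalRing.ResidueField D)[X] :=
    mapAlgHom (IsScalarTower.toAlgHom k D (IsLocalRing.ResidueField D))
  have hρ (c : D) (hc : ¬ IsUnit c) : ρ (Polynomial.C c) = 0 := by
    simpa [ρ] using hc
  have hρq : ∀ f ∈ Ideal.span {q}, ρ f = 0 := by
    intro f hf
    obtain ⟨r, rfl⟩ := Ideal.mem_span_singleton.1 hf
    simp only [q, map_mul, map_sub, hρ t ht, hρ s hs, zero_mul, sub_zero]
  refine ⟨D[X] ⧸ Ideal.span {q}, inferInstance, inferInstance, inferInstance,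
    (Ideal.Quotient.mkₐ k _).comp CAlgHom, Ideal.Quotient.liftₐ _ ρ hρq,
    Ideal.Quotient.mk _ Polynomial.X, ?_, ?_, ?_, hρ⟩
  · rw [injective_iff_map_eq_zero]
    intro c hc
    have hdvd : q ∣ Polynomial.C c :=
      Ideal.mem_span_singleton.1 (Ideal.Quotient.eq_zero_iff_mem.1 hc)
    have hdeg : q.degree = 1 := by
      rw [degree_sub_C (by simp [degree_C_mul_X ht0]), degree_C_mul_X ht0]
    exact C_eq_zero.1 (eq_zero_of_dvd_of_degree_lt hdvd
      (degree_C_le.trans_lt (hdeg ▸ zero_lt_one)))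
  · exact map_X _
  · refine Ideal.Quotient.eq.2 (Ideal.mem_span_singleton.2 (dvd_of_eq ?_))
    exact congrArg (· - _) (mul_comm _ _)

end Factorial

theorem two_le_height_of_isRelPrime {R : Type*} [CommRing R] [IsDomain R]
    [UniqueFactorizationMonoid R] {Q : Ideal R} [Q.IsPrime] {a b : R} (hab : IsRelPrime a b)
    (ha : a ∈ Q) (hb : b ∈ Q) : 2 ≤ Q.height := by
  have hQ : Q ≠ ⊥ := by
    rintro rfl
    rw [Ideal.mem_bot] at ha hb
    exact not_isUnit_zero (isRelPrime_zero_left.1 (ha ▸ hb ▸ hab))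
  obtain ⟨q, hqQ, hq⟩ := Ideal.IsPrime.exists_mem_prime_of_ne_bot ‹Q.IsPrime› hQ
  have : (Ideal.span {q}).IsPrime := (Ideal.span_singleton_prime hq.ne_zero).2 hq
  have hlt : Ideal.span {q} < Q := by
    refine lt_of_le_of_ne ((Ideal.span_singleton_le_iff_mem _).2 hqQ) fun h => hq.not_isUnit ?_
    exact hab (Ideal.mem_span_singleton.1 (h ▸ ha)) (Ideal.mem_span_singleton.1 (h ▸ hb))
  calc (2 : ℕ∞) = 1 + 1 := by norm_num
    _ ≤ (Ideal.span {q}).height + 1 := by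
      gcongr
      exact Ideal.one_le_height_span_singleton_of_mem_nonZeroDivisors
        (mem_nonZeroDivisors_of_ne_zero hq.ne_zero)
    _ ≤ Q.height := Ideal.height_add_one_le_of_lt_of_isPrime hlt

theorem isMaximal_of_isRelPrime_mem {Q : Ideal (MvPolynomial (Fin 2) k)} [Q.IsPrime]
    {a b : MvPolynomial (Fin 2) k} (hab : IsRelPrime a b) (ha : a ∈ Q) (hb : b ∈ Q) :
    Q.IsMaximal := by
  have hdim : ringKrullDim (MvPolynomial (Fin 2) k) = 2 := by
    simp [MvPolynomial.ringKrullDim_of_isNoetherianRing]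
  have hge : (2 : WithBot ℕ∞) ≤ Q.height :=
    WithBot.coe_le_coe.2 (two_le_height_of_isRelPrime hab ha hb)
  have : FiniteRingKrullDim (MvPolynomial (Fin 2) k) :=
    finiteRingKrullDim_iff_ne_bot_and_top.2 (hdim ▸ ⟨by decide, by decide⟩)
  exact Ideal.isMaximal_of_height_eq_ringKrullDim <|
    le_antisymm Ideal.height_le_ringKrullDim_of_isPrime (hdim.trans_le hge)

section LocalRing

variable [IsDomain D] [UniqueFactorizationMonoid D] [IsLocalRing D]

theorem order_lt_order_of_mul_aeval_eq {g s t c : D} (hg : ¬ IsUnit g) (hg0 : g ≠ 0)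
    (hs : ¬ IsUnit s) (ht : ¬ IsUnit t) (hst : IsRelPrime s t) (hc : ¬ IsUnit c)
    {f₁ f₂ : MvPolynomial (Fin 2) k} (hf₁ : f₁ ≠ 0)
    (h : c * aeval ![g * s, g * t] f₂ = aeval ![g * s, g * t] f₁) :
    (f₂ : MvPowerSeries (Fin 2) k).order < (f₁ : MvPowerSeries (Fin 2) k).order := by
  by_contra! hle
  have hdeg (m : Fin 2 →₀ ℕ) : m.degree = m 0 + m 1 := by
    rw [Finsupp.degree_eq_sum, Fin.sum_univ_two]
  obtain ⟨n, hn, hnd⟩ := MvPowerSeries.exists_coeff_ne_zero_and_order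
    (MvPowerSeries.ne_zero_iff_order_finite.1 ((coe_eq_zero_iff (σ := Fin 2)).not.2 hf₁))
  have hsupp (f : MvPolynomial (Fin 2) k)
      (hf : (f₁ : MvPowerSeries (Fin 2) k).order ≤ (f : MvPowerSeries (Fin 2) k).order) :
      ∀ m ∈ f.support, n.degree ≤ m 0 + m 1 := by
    intro m hm
    rw [← hdeg, ← Nat.cast_le (α := ℕ∞), hnd]
    exact hf.trans (MvPowerSeries.order_le (by simpa using hm))
  obtain ⟨E, _, _, _, ι, φ, z, hι, hz, hzt, hφ⟩ :=
    exists_algHom_residue_polynomial (k := k) hs ht hst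
  have haeval (f : MvPolynomial (Fin 2) k) :
      ι (aeval ![g * s, g * t] f) = aeval ![z * ι (g * t), ι (g * t)] f := by
    have hpair : (fun i => ι (![g * s, g * t] i)) = ![z * ι (g * t), ι (g * t)] :=
      funext (Fin.forall_fin_two.2 ⟨by simp [← hzt, mul_left_comm], rfl⟩)
    rw [← hpair, comp_aeval_apply]
  obtain ⟨w₁, hw₁, hcoeff⟩ := exists_aeval_mul_eq_pow_mul hz
    (hφ (g * t) fun hu => hg (isUnit_of_mul_isUnit_left hu)) n.degree (hsupp f₁ le_rfl)
  obtain ⟨w₂, hw₂, -⟩ := exists_aeval_mul_eq_pow_mul hz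
    (hφ (g * t) fun hu => hg (isUnit_of_mul_isUnit_left hu)) n.degree (hsupp f₂ hle)
  have ht0 : t ≠ 0 := by
    rintro rfl
    exact hs (isRelPrime_zero_right.1 hst)
  have hw : ι c * w₂ = w₁ := by
    refine mul_left_cancel₀ (pow_ne_zero n.degree
      ((map_ne_zero_iff ι hι).2 (mul_ne_zero hg0 ht0))) ?_
    rw [← hw₁, ← haeval, ← h, map_mul ι c, haeval, hw₂, mul_left_comm]
  have hzero := hcoeff n (hdeg n).symm
  rw [← hw, map_mul, hφ c hc, zero_mul, Polynomial.coeff_zero, eq_comm, map_eq_zero] at hzero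
  exact hn (by simpa using hzero)

theorem exists_constantCoeff_ne_zero_of_isRelPrime {s t : D} (hs : ¬ IsUnit s) (ht : ¬ IsUnit t)
    (hst : IsRelPrime s t) (hinj : Function.Injective (aeval (R := k) ![s, t]))
    (hfrac : ∀ z : D, ∃ f g : MvPolynomial (Fin 2) k, g ≠ 0 ∧
      z * aeval ![s, t] g = aeval ![s, t] f) (z : D) :
    ∃ f g : MvPolynomial (Fin 2) k, constantCoeff g ≠ 0 ∧
      z * aeval ![s, t] g = aeval ![s, t] f := by
  have hst' : ∀ i, ¬ IsUnit (![s, t] i) := Fin.forall_fin_two.2 ⟨hs, ht⟩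
  have haeval {f : MvPolynomial (Fin 2) k} (hf : f ≠ 0) : aeval ![s, t] f ≠ 0 :=
    (map_ne_zero_iff _ hinj).2 hf
  obtain ⟨f, g, hg, hfg⟩ := hfrac z
  obtain ⟨b, a, c, hab, rfl, rfl⟩ := UniqueFactorizationMonoid.exists_reduced_factors g hg f
  have hz : z * aeval ![s, t] b = aeval ![s, t] a := by
    refine mul_left_cancel₀ (haeval (left_ne_zero_of_mul hg)) ?_
    rw [map_mul, map_mul] at hfg
    linear_combination hfg
  refine ⟨a, b, fun hb0 => ?_, hz⟩
  have hb : ¬ IsUnit (aeval ![s, t] b) := (isUnit_aeval_iff hst' b).not.2 (not_not.2 hb0)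
  obtain ⟨q, hq, hqb⟩ := WfDvdMonoid.exists_irreducible_factor hb
    (haeval (right_ne_zero_of_mul hg))
  have hqI : (Ideal.span {q}).IsPrime := (Ideal.span_singleton_prime hq.ne_zero).2 hq.prime
  let Q := (Ideal.span {q}).comap (aeval (R := k) ![s, t])
  have hQ {w : MvPolynomial (Fin 2) k} : w ∈ Q ↔ q ∣ aeval ![s, t] w := by
    rw [Ideal.mem_comap, Ideal.mem_span_singleton]
  have hmax : Q.IsMaximal := isMaximal_of_isRelPrime_mem hab (hQ.2 hqb) (hQ.2 (hz ▸ hqb.mul_left z))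
  have hle : Q ≤ RingHom.ker constantCoeff := fun w hw => by_contra fun hw0 =>
    hq.not_isUnit (isUnit_of_dvd_unit (hQ.1 hw) ((isUnit_aeval_iff hst' w).2 hw0))
  have hX (i : Fin 2) : q ∣ ![s, t] i := by
    have : X i ∈ Q := hmax.eq_of_le (RingHom.ker_ne_top _) hle ▸ constantCoeff_X k i
    simpa using hQ.1 this
  exact hq.not_isUnit (hst (hX 0) (hX 1))

theorem isUnit_of_birational_mul {g s t : D} (hg0 : g ≠ 0) (hs : ¬ IsUnit s)
    (ht : ¬ IsUnit t) (hst : IsRelPrime s t)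
    (hinj : Function.Injective (aeval (R := k) ![g * s, g * t]))
    (hfrac : ∀ z : D, ∃ f h : MvPolynomial (Fin 2) k, h ≠ 0 ∧
      z * aeval ![g * s, g * t] h = aeval ![g * s, g * t] f) : IsUnit g := by
  by_contra hg
  have ht0 : t ≠ 0 := by
    rintro rfl
    exact hs (isRelPrime_zero_right.1 hst)
  have hlt {c : D} (hc : ¬ IsUnit c) (hc0 : c ≠ 0) {f h : MvPolynomial (Fin 2) k} (hh : h ≠ 0)
      (hfh : c * aeval ![g * s, g * t] h = aeval ![g * s, g * t] f) :
      (h : MvPowerSeries (Fin 2) k).order + 1 ≤ (f : MvPowerSeries (Fin 2) k).order := by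
    refine Order.add_one_le_of_lt (order_lt_order_of_mul_aeval_eq hg hg0 hs ht hst hc ?_ hfh)
    rintro rfl
    exact mul_ne_zero hc0 ((map_ne_zero_iff _ hinj).2 hh) (hfh.trans (map_zero _))
  obtain ⟨b₁, a₁, ha₁, hab₁⟩ := hfrac g
  obtain ⟨b₂, a₂, ha₂, hab₂⟩ := hfrac t
  have heq : X 1 * a₁ * a₂ = b₁ * b₂ := by
    apply hinj
    rw [map_mul, map_mul, map_mul, ← hab₁, ← hab₂, aeval_X]
    simp only [Matrix.cons_val_one, Matrix.cons_val_fin_one]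
    ring
  have hX : (MvPowerSeries.X 1 : MvPowerSeries (Fin 2) k).order = 1 := by
    simp [MvPowerSeries.X, MvPowerSeries.order_monomial_of_ne_zero]
  have hord := congrArg (fun f : MvPolynomial (Fin 2) k => (f : MvPowerSeries (Fin 2) k).order) heq
  simp only [coe_mul, coe_X, MvPowerSeries.order_mul, hX] at hord
  have hle := hord ▸ add_le_add (hlt hg hg0 ha₁ hab₁) (hlt ht ht0 ha₂ hab₂)
  lift (a₁ : MvPowerSeries (Fin 2) k).order to ℕ using by simpa using ha₁ with n₁
  lift (a₂ : MvPowerSeries (Fin 2) k).order to ℕ using by simpa using ha₂ with n₂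
  norm_cast at hle
  omega

theorem dvd_or_dvd_or_exists_constantCoeff_ne_zero {s t : D} (hs : ¬ IsUnit s) (ht : ¬ IsUnit t)
    (hinj : Function.Injective (aeval (R := k) ![s, t]))
    (hfrac : ∀ z : D, ∃ f g : MvPolynomial (Fin 2) k, g ≠ 0 ∧
      z * aeval ![s, t] g = aeval ![s, t] f) :
    s ∣ t ∨ t ∣ s ∨ ∀ z : D, ∃ f g : MvPolynomial (Fin 2) k, constantCoeff g ≠ 0 ∧
      z * aeval ![s, t] g = aeval ![s, t] f := by
  by_cases hsdvd : s ∣ t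
  · exact .inl hsdvd
  by_cases htdvd : t ∣ s
  · exact .inr (.inl htdvd)
  have hs0 : s ≠ 0 := fun h => htdvd (h ▸ dvd_zero t)
  obtain ⟨s', t', g, hrel, rfl, rfl⟩ := UniqueFactorizationMonoid.exists_reduced_factors s hs0 t
  have hg : IsUnit g := isUnit_of_birational_mul (left_ne_zero_of_mul hs0)
    (fun h => hsdvd (mul_dvd_mul_left _ h.dvd)) (fun h => htdvd (mul_dvd_mul_left _ h.dvd))
    hrel hinj hfrac
  exact .inr (.inr (exists_constantCoeff_ne_zero_of_isRelPrime hs ht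
    ((isRelPrime_mul_unit_left hg).2 hrel) hinj hfrac))

end LocalRing

end BinaryPolynomials

section UnitsInSubrings

variable {F : Type*} [Field F]

/-- `z` is a unit of the subring `S` of a field, stated for elements of the field so that units of
different subrings can be compared. -/
structure IsUnitIn (S : Subring F) (z : F) : Prop where
  mem : z ∈ S
  ne_zero : z ≠ 0
  inv_mem : z⁻¹ ∈ S

/-- `z` is a non-unit of the subring `S` of a field, the counterpart of `IsUnitIn`. -/
structure IsNonunitIn (S : Subring F) (z : F) : Prop where
  mem : z ∈ S
  not_isUnitIn : ¬ IsUnitIn S z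

variable {S T : Subring F} {z w : F}

theorem isUnit_mk_iff (hz : z ∈ S) : IsUnit (⟨z, hz⟩ : S) ↔ IsUnitIn S z := by
  refine ⟨fun h => ?_, fun h => ?_⟩
  · obtain ⟨w, hw⟩ := isUnit_iff_exists_inv.1 h
    have hw' : z * w = 1 := congrArg Subtype.val hw
    exact ⟨hz, left_ne_zero_of_mul_eq_one hw', eq_inv_of_mul_eq_one_right hw' ▸ w.2⟩
  · exact isUnit_iff_exists_inv.2 ⟨⟨_, h.inv_mem⟩, Subtype.ext (mul_inv_cancel₀ h.ne_zero)⟩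

theorem isNonunitIn_iff_mem_maximalIdeal [IsLocalRing S] (hz : z ∈ S) :
    IsNonunitIn S z ↔ (⟨z, hz⟩ : S) ∈ IsLocalRing.maximalIdeal S := by
  rw [IsLocalRing.mem_maximalIdeal, mem_nonunits_iff, isUnit_mk_iff]
  exact ⟨fun h => h.2, fun h => ⟨hz, h⟩⟩

namespace IsUnitIn

theorem one (S : Subring F) : IsUnitIn S 1 :=
  ⟨one_mem S, one_ne_zero, by rw [inv_one]; exact one_mem S⟩

theorem mul (hz : IsUnitIn S z) (hw : IsUnitIn S w) : IsUnitIn S (z * w) :=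
  ⟨mul_mem hz.mem hw.mem, mul_ne_zero hz.ne_zero hw.ne_zero, by
    rw [mul_inv]; exact mul_mem hz.inv_mem hw.inv_mem⟩

theorem neg (hz : IsUnitIn S z) : IsUnitIn S (-z) :=
  ⟨neg_mem hz.mem, neg_ne_zero.2 hz.ne_zero, by rw [inv_neg]; exact neg_mem hz.inv_mem⟩

theorem inv (hz : IsUnitIn S z) : IsUnitIn S z⁻¹ :=
  ⟨hz.inv_mem, inv_ne_zero hz.ne_zero, by rw [inv_inv]; exact hz.mem⟩

theorem pow (hz : IsUnitIn S z) (n : ℕ) : IsUnitIn S (z ^ n) :=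
  ⟨pow_mem hz.mem n, pow_ne_zero n hz.ne_zero, by rw [← inv_pow]; exact pow_mem hz.inv_mem n⟩

theorem mono (hz : IsUnitIn S z) (h : S ≤ T) : IsUnitIn T z :=
  ⟨h hz.mem, hz.ne_zero, h hz.inv_mem⟩

theorem of_mul_left (h : IsUnitIn S (z * w)) (hz : z ∈ S) (hw : w ∈ S) : IsUnitIn S z := by
  rw [← isUnit_mk_iff (mul_mem hz hw)] at h
  exact (isUnit_mk_iff hz).1 (isUnit_of_mul_isUnit_left (x := (⟨z, hz⟩ : S)) (y := ⟨w, hw⟩) h)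

end IsUnitIn

namespace IsNonunitIn

theorem of_le (h : S ≤ T) (hz : z ∈ S) (hT : IsNonunitIn T z) : IsNonunitIn S z :=
  ⟨hz, fun hu => hT.not_isUnitIn (hu.mono h)⟩

theorem mul_right (hz : IsNonunitIn S z) (hw : w ∈ S) : IsNonunitIn S (z * w) :=
  ⟨mul_mem hz.mem hw, fun h => hz.not_isUnitIn (h.of_mul_left hz.mem hw)⟩

theorem mul_left (hz : IsNonunitIn S z) (hw : w ∈ S) : IsNonunitIn S (w * z) :=
  mul_comm z w ▸ hz.mul_right hw

theorem pow (hz : IsNonunitIn S z) {n : ℕ} (hn : n ≠ 0) : IsNonunitIn S (z ^ n) := by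
  obtain ⟨n, rfl⟩ := Nat.exists_eq_succ_of_ne_zero hn
  exact pow_succ z n ▸ hz.mul_left (pow_mem hz.mem n)

theorem add [IsLocalRing S] (hz : IsNonunitIn S z) (hw : IsNonunitIn S w) :
    IsNonunitIn S (z + w) :=
  (isNonunitIn_iff_mem_maximalIdeal (add_mem hz.mem hw.mem)).2 <|
    add_mem ((isNonunitIn_iff_mem_maximalIdeal hz.mem).1 hz)
      ((isNonunitIn_iff_mem_maximalIdeal hw.mem).1 hw)

theorem neg (hz : IsNonunitIn S z) : IsNonunitIn S (-z) := by
  simpa using hz.mul_left (neg_mem (one_mem S))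

theorem isUnitIn_add [IsLocalRing S] (hz : IsNonunitIn S z) (hw : IsUnitIn S w) :
    IsUnitIn S (w + z) := by
  by_contra h
  have := IsNonunitIn.add ⟨add_mem hw.mem hz.mem, h⟩ hz.neg
  exact this.not_isUnitIn (by rwa [add_neg_cancel_right])

end IsNonunitIn

theorem dvd_mk_iff (hz : z ∈ S) (hw : w ∈ S) (hz0 : z ≠ 0) :
    (⟨z, hz⟩ : S) ∣ ⟨w, hw⟩ ↔ w / z ∈ S := by
  refine ⟨?_, fun h => ⟨⟨w / z, h⟩, Subtype.ext (mul_div_cancel₀ w hz0).symm⟩⟩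
  rintro ⟨c, hc⟩
  have hc' : w = z * c := congrArg Subtype.val hc
  rw [hc', mul_div_cancel_left₀ _ hz0]
  exact c.2

end UnitsInSubrings

section Dominates

variable {F : Type} [Field F] {R S T : Subring F} {z : F}

theorem dominates_iff : Dominates S R ↔ R ≤ S ∧ ∀ z ∈ R, IsUnitIn S z → IsUnitIn R z := by
  refine ⟨fun ⟨hle, h⟩ => ⟨hle, fun z hz hu => ?_⟩, fun ⟨hle, h⟩ => ⟨hle, fun z hR hS => ?_⟩⟩
  · rw [← isUnit_mk_iff hz, ← not_iff_not.1 (h z hz (hle hz)), isUnit_mk_iff]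
    exact hu
  · rw [isUnit_mk_iff, isUnit_mk_iff]
    exact not_congr ⟨h z hR, fun hu => hu.mono hle⟩

namespace Dominates

theorem le (h : Dominates S R) : R ≤ S := (dominates_iff.1 h).1

theorem isUnitIn (h : Dominates S R) (hz : z ∈ R) (hu : IsUnitIn S z) : IsUnitIn R z :=
  (dominates_iff.1 h).2 z hz hu

theorem isNonunitIn (h : Dominates S R) (hz : IsNonunitIn R z) : IsNonunitIn S z :=
  ⟨h.le hz.mem, fun hu => hz.not_isUnitIn (h.isUnitIn hz.mem hu)⟩

theorem refl (R : Subring F) : Dominates R R := dominates_iff.2 ⟨le_rfl, fun _ _ h => h⟩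

theorem trans (h : Dominates T S) (h' : Dominates S R) : Dominates T R :=
  dominates_iff.2 ⟨h'.le.trans h.le, fun _ hz hu => h'.isUnitIn hz (h.isUnitIn (h'.le hz) hu)⟩

end Dominates

theorem isLocalRing_iSup_of_monotone {R : ℕ → Subring F} (hloc : ∀ i, IsLocalRing (R i))
    (hR : Monotone R) : IsLocalRing (⨆ i, R i : Subring F) := by
  refine IsLocalRing.of_isUnit_or_isUnit_one_sub_self fun ⟨a, ha⟩ => ?_
  obtain ⟨i, hi⟩ := (Subring.mem_iSup_of_directed hR.directed_le).1 ha
  have := (hloc i).isUnit_or_isUnit_of_add_one (add_sub_cancel (⟨a, hi⟩ : R i) 1)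
  exact this.imp (IsUnit.map (Subring.inclusion (le_iSup R i)))
    (IsUnit.map (Subring.inclusion (le_iSup R i)))

theorem exists_valuationSubring_dominates (R : Subring F) [IsLocalRing R] :
    ∃ V : ValuationSubring F, Dominates V.toSubring R := by
  obtain ⟨V, hle, hV⟩ := Ideal.image_subset_nonunits_valuationSubring
    (IsLocalRing.maximalIdeal R) (Ideal.IsPrime.ne_top inferInstance)
  refine ⟨V, dominates_iff.2 ⟨hle, fun z hz hu => ?_⟩⟩
  by_contra hzR
  have hzV := hV ⟨_, (isNonunitIn_iff_mem_maximalIdeal hz).1 ⟨hz, hzR⟩, rfl⟩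
  exact (V.mem_nonunits_iff.1 hzV).ne
    ((V.valuation_eq_one_iff ⟨z, hu.mem⟩).1 ((isUnit_mk_iff hu.mem).2 hu))

theorem exists_valuationSubring_dominates_of_chain {R : ℕ → Subring F}
    (hloc : ∀ i, IsLocalRing (R i)) (hdom : ∀ i, Dominates (R (i + 1)) (R i)) :
    ∃ V : ValuationSubring F, ∀ i, Dominates V.toSubring (R i) := by
  have hdom' {i j : ℕ} (hij : i ≤ j) : Dominates (R j) (R i) :=
    Nat.le_induction (.refl _) (fun j _ ih => (hdom j).trans ih) j hij
  have hR : Monotone R := fun i j hij => (hdom' hij).le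
  have := isLocalRing_iSup_of_monotone hloc hR
  obtain ⟨V, hV⟩ := exists_valuationSubring_dominates (⨆ i, R i)
  refine ⟨V, fun i => hV.trans (dominates_iff.2 ⟨le_iSup R i, fun z hz hu => ?_⟩)⟩
  obtain ⟨j, hj⟩ := (Subring.mem_iSup_of_directed hR.directed_le).1 hu.inv_mem
  exact (hdom' (le_max_left i j)).isUnitIn hz
    ⟨hR (le_max_left i j) hz, hu.ne_zero, hR (le_max_right i j) hj⟩

theorem isValuationSubring_toSubring (V : ValuationSubring F) (hz : IsNonunitIn V.toSubring z)
    (hz0 : z ≠ 0) : IsValuationSubring V.toSubring := by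
  refine ⟨fun htop => hz.not_isUnitIn ⟨hz.mem, hz0, ?_⟩, fun z _ => V.mem_or_inv_mem z⟩
  rw [htop]
  trivial

end Dominates

section PairLocalization

variable {F : Type} [Field F] (k : Type) [Field k] [Algebra k F]

/-- The local ring `k[s, t]_(s, t)` inside a field containing `s` and `t`. -/
abbrev pairLocalization (s t : F) : Subring F :=
  localSubring (aeval (R := k) ![s, t]).toRingHom

variable {k} {s t z : F}

theorem mem_pairLocalization : z ∈ pairLocalization k s t ↔
    ∃ f g : MvPolynomial (Fin 2) k, constantCoeff g ≠ 0 ∧ z * aeval ![s, t] g = aeval ![s, t] f :=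
  Iff.rfl

theorem aeval_mem_pairLocalization (s t : F) (f : MvPolynomial (Fin 2) k) :
    aeval ![s, t] f ∈ pairLocalization k s t := ⟨f, 1, by simp, by simp⟩

theorem algebraMap_mem_pairLocalization (s t : F) (c : k) :
    algebraMap k F c ∈ pairLocalization k s t := by
  simpa using aeval_mem_pairLocalization s t (C c : MvPolynomial (Fin 2) k)

theorem left_mem_pairLocalization (s t : F) : s ∈ pairLocalization k s t := by
  simpa using aeval_mem_pairLocalization s t (X 0 : MvPolynomial (Fin 2) k)

theorem right_mem_pairLocalization (s t : F) : t ∈ pairLocalization k s t := by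
  simpa using aeval_mem_pairLocalization s t (X 1 : MvPolynomial (Fin 2) k)

theorem isUnitIn_algebraMap {S : Subring F} (hk : ∀ c : k, algebraMap k F c ∈ S) {c : k}
    (hc : c ≠ 0) : IsUnitIn S (algebraMap k F c) :=
  ⟨hk c, by simpa using hc, by rw [← map_inv₀]; exact hk _⟩

theorem isUnitIn_aeval_iff {S : Subring F} [IsLocalRing S] (hk : ∀ c : k, algebraMap k F c ∈ S)
    (hs : IsNonunitIn S s) (ht : IsNonunitIn S t) (f : MvPolynomial (Fin 2) k) :
    IsUnitIn S (aeval ![s, t] f) ↔ constantCoeff f ≠ 0 := by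
  let : Algebra k S := ((algebraMap k F).codRestrict S hk).toAlgebra
  have : IsScalarTower k S F := IsScalarTower.of_algebraMap_eq fun _ => rfl
  let σ : Fin 2 → S := ![⟨s, hs.mem⟩, ⟨t, ht.mem⟩]
  have hσ : ∀ i, ¬ IsUnit (σ i) := Fin.forall_fin_two.2
    ⟨(isUnit_mk_iff hs.mem).not.2 hs.not_isUnitIn, (isUnit_mk_iff ht.mem).not.2 ht.not_isUnitIn⟩
  have hpair : algebraMap S F ∘ σ = ![s, t] := funext (Fin.forall_fin_two.2 ⟨rfl, rfl⟩)
  rw [← isUnit_aeval_iff hσ, ← hpair, aeval_algebraMap_apply]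
  exact (isUnit_mk_iff (aeval σ f : S).2).symm

theorem dominates_pairLocalization {S : Subring F} [IsLocalRing S]
    (hk : ∀ c : k, algebraMap k F c ∈ S) (hs : IsNonunitIn S s) (ht : IsNonunitIn S t) :
    Dominates S (pairLocalization k s t) := by
  have hf : ∀ f : MvPolynomial (Fin 2) k, aeval ![s, t] f ∈ S := fun f =>
    f.induction_on (by simpa using hk)
      (fun f g hf hg => map_add (aeval ![s, t]) f g ▸ add_mem hf hg)
      fun f i hf => by
        rw [map_mul, aeval_X]
        exact mul_mem hf <|
          Fin.forall_fin_two (p := fun i => ![s, t] i ∈ S).2 ⟨hs.mem, ht.mem⟩ i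
  have hunit := isUnitIn_aeval_iff hk hs ht
  refine dominates_iff.2 ⟨?_, ?_⟩
  · rintro z ⟨f, g, hg, hfg⟩
    have hgu := (hunit g).2 hg
    rw [(eq_mul_inv_iff_mul_eq₀ hgu.ne_zero).2 hfg]
    exact mul_mem (hf f) hgu.inv_mem
  · rintro z ⟨f, g, hg, hfg⟩ hz
    refine ⟨⟨f, g, hg, hfg⟩, hz.ne_zero, g, f, (hunit f).1 ?_, ?_⟩
    · exact hfg ▸ hz.mul ((hunit g).2 hg)
    · exact hfg ▸ inv_mul_cancel_left₀ hz.ne_zero _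

section AlgebraicIndependent

theorem isUnitIn_of_mul_aeval_eq (h : AlgebraicIndependent k ![s, t])
    {f g : MvPolynomial (Fin 2) k} (hf : constantCoeff f ≠ 0) (hg : constantCoeff g ≠ 0)
    (hz : z * aeval ![s, t] g = aeval ![s, t] f) : IsUnitIn (pairLocalization k s t) z := by
  have hz0 : z ≠ 0 := by
    rintro rfl
    rw [zero_mul, eq_comm, map_eq_zero_iff _ h] at hz
    exact hf (hz ▸ map_zero _)
  exact ⟨⟨f, g, hg, hz⟩, hz0, g, f, hf, hz ▸ inv_mul_cancel_left₀ hz0 _⟩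

theorem isLocalRing_pairLocalization (h : AlgebraicIndependent k ![s, t]) :
    IsLocalRing (pairLocalization k s t) := by
  refine IsLocalRing.of_isUnit_or_isUnit_one_sub_self fun ⟨z, hz⟩ => ?_
  obtain ⟨f, g, hg, hfg⟩ := mem_pairLocalization.1 hz
  by_cases hf : constantCoeff f = 0
  · refine .inr ((isUnit_mk_iff _).2 (isUnitIn_of_mul_aeval_eq h (f := g - f) ?_ hg ?_))
    · rwa [map_sub, hf, sub_zero]
    · change (1 - z) * _ = _
      rw [map_sub, sub_mul, one_mul, hfg]
  · exact .inl ((isUnit_mk_iff _).2 (isUnitIn_of_mul_aeval_eq h hf hg hfg))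

theorem isNonunitIn_aeval (h : AlgebraicIndependent k ![s, t]) {f : MvPolynomial (Fin 2) k}
    (hf : constantCoeff f = 0) : IsNonunitIn (pairLocalization k s t) (aeval ![s, t] f) := by
  refine ⟨aeval_mem_pairLocalization s t f, fun ⟨_, h0, f', g, hg, hfg⟩ => hg ?_⟩
  have hg' : g = f * f' := h (by
    rw [map_mul]
    exact (inv_mul_eq_iff_eq_mul₀ h0).1 hfg)
  rw [hg', map_mul, hf, zero_mul]

theorem isNonunitIn_left (h : AlgebraicIndependent k ![s, t]) :
    IsNonunitIn (pairLocalization k s t) s := by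
  simpa using isNonunitIn_aeval h (constantCoeff_X k 0)

theorem isNonunitIn_right (h : AlgebraicIndependent k ![s, t]) :
    IsNonunitIn (pairLocalization k s t) t := by
  simpa using isNonunitIn_aeval h (constantCoeff_X k 1)

theorem IsNonunitIn.exists_eq_mul_add_mul (h : AlgebraicIndependent k ![s, t])
    (hz : IsNonunitIn (pairLocalization k s t) z) :
    ∃ a ∈ pairLocalization k s t, ∃ b ∈ pairLocalization k s t, z = a * s + b * t := by
  obtain ⟨f, g, hg, hfg⟩ := mem_pairLocalization.1 hz.mem
  have hf : constantCoeff f = 0 :=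
    not_not.1 fun hf => hz.not_isUnitIn (isUnitIn_of_mul_aeval_eq h hf hg hfg)
  have hmem := aeval_sub_algebraMap_constantCoeff_mem (k := k)
    (Ideal.span {X 0, X 1}) (s := (X : Fin 2 → MvPolynomial (Fin 2) k))
    (Fin.forall_fin_two.2 ⟨Ideal.subset_span (by simp), Ideal.subset_span (by simp)⟩) f
  rw [hf, map_zero, sub_zero, aeval_X_left_apply, Ideal.mem_span_pair] at hmem
  obtain ⟨a, b, rfl⟩ := hmem
  have hgu : IsUnitIn (pairLocalization k s t) (aeval ![s, t] g) :=
    isUnitIn_of_mul_aeval_eq h hg (g := 1) (by simp) (by rw [map_one, mul_one])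
  refine ⟨_, mul_mem hgu.inv_mem (aeval_mem_pairLocalization s t a),
    _, mul_mem hgu.inv_mem (aeval_mem_pairLocalization s t b), ?_⟩
  rw [(eq_mul_inv_iff_mul_eq₀ hgu.ne_zero).2 hfg, map_add, map_mul, map_mul, aeval_X, aeval_X,
    Matrix.cons_val_zero, Matrix.cons_val_one, Matrix.cons_val_zero]
  ring

theorem exists_eq_algebraMap_add (h : AlgebraicIndependent k ![s, t])
    (hz : z ∈ pairLocalization k s t) :
    ∃ c : k, ∃ a ∈ pairLocalization k s t, ∃ b ∈ pairLocalization k s t,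
      z = algebraMap k F c + a * s + b * t := by
  have := isLocalRing_pairLocalization h
  obtain ⟨f, g, hg, hfg⟩ := mem_pairLocalization.1 hz
  let c := constantCoeff f / constantCoeff g
  have hgu : IsUnitIn (pairLocalization k s t) (aeval ![s, t] g) :=
    isUnitIn_of_mul_aeval_eq h hg (g := 1) (by simp) (by rw [map_one, mul_one])
  have hnonunit : IsNonunitIn (pairLocalization k s t) (z - algebraMap k F c) := by
    have hcoeff : constantCoeff (f - C c * g) = 0 := by simp [c, hg]
    have := (isNonunitIn_aeval h hcoeff).mul_right hgu.inv_mem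
    rwa [map_sub, map_mul, aeval_C, ← hfg, ← sub_mul, mul_inv_cancel_right₀ hgu.ne_zero] at this
  obtain ⟨a, ha, b, hb, hab⟩ := hnonunit.exists_eq_mul_add_mul h
  exact ⟨c, a, ha, b, hb, by rw [add_assoc, ← hab, add_sub_cancel]⟩

theorem pairLocalization_swap (h : AlgebraicIndependent k ![s, t]) :
    pairLocalization k s t = pairLocalization k t s := by
  have hle {s t : F} (h : AlgebraicIndependent k ![s, t]) :
      pairLocalization k t s ≤ pairLocalization k s t :=
    have := isLocalRing_pairLocalization h
    (dominates_pairLocalization (algebraMap_mem_pairLocalization s t) (isNonunitIn_right h)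
      (isNonunitIn_left h)).le
  have hswap : AlgebraicIndependent k ![t, s] := by
    convert h.comp (Equiv.swap 0 1) (Equiv.injective _) using 1
    exact funext (Fin.forall_fin_two.2 ⟨rfl, rfl⟩)
  exact le_antisymm (hle hswap) (hle h)

end AlgebraicIndependent

end PairLocalization

section GeneratingPairs

theorem isTranscendenceBasis_of_forall_isAlgebraic {k F ι : Type*} [Field k] [Field F]
    [Algebra k F] [Finite ι] {x y : ι → F} (hx : IsTranscendenceBasis k x)
    (h : ∀ i, IsAlgebraic (Algebra.adjoin k (Set.range y)) (x i)) : IsTranscendenceBasis k y := by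
  have : Algebra.IsAlgebraic (Algebra.adjoin k (Set.range y)) F :=
    ⟨fun z => (hx.isAlgebraic.isAlgebraic z).adjoin_of_forall_isAlgebraic
      fun _ hz => Set.forall_mem_range.2 h _ hz.1⟩
  exact Algebra.IsAlgebraic.isTranscendenceBasis_of_lift_le_trdeg_of_finite k y
    hx.lift_cardinalMk_eq_trdeg.le

variable {F : Type} [Field F] {k : Type} [Field k] [Algebra k F] {s t s' t' : F}

theorem isTranscendenceBasis_pair_of_mem_adjoin (h : IsTranscendenceBasis k ![s, t])
    (hs : s ∈ Algebra.adjoin k {s', t'}) (ht : t ∈ Algebra.adjoin k {s', t'}) :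
    IsTranscendenceBasis k ![s', t'] := by
  refine isTranscendenceBasis_of_forall_isAlgebraic h ?_
  rw [Matrix.range_cons_cons_empty]
  exact Fin.forall_fin_two.2 ⟨isAlgebraic_algebraMap (⟨s, hs⟩ : Algebra.adjoin k {s', t'}),
    isAlgebraic_algebraMap (⟨t, ht⟩ : Algebra.adjoin k {s', t'})⟩

theorem adjoin_pair_le_of_mem_adjoin (hs : s ∈ Algebra.adjoin k {s', t'})
    (ht : t ∈ Algebra.adjoin k {s', t'}) :
    IntermediateField.adjoin k {s, t} ≤ IntermediateField.adjoin k {s', t'} := by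
  have hle := IntermediateField.algebra_adjoin_le_adjoin k {s', t'}
  exact IntermediateField.adjoin_le_iff.2 (Set.pair_subset (hle hs) (hle ht))

theorem pow_mul_add_mem_adjoin (p : ℕ) (α : k) :
    s ^ p * (t + algebraMap k F α) ∈ Algebra.adjoin k {s, t} :=
  mul_mem (pow_mem (Algebra.subset_adjoin (by simp)) p)
    (add_mem (Algebra.subset_adjoin (by simp)) (algebraMap_mem _ _))

theorem exists_eq_pow_mul_add_isTranscendenceBasis (h : IsTranscendenceBasis k ![s, t]) (p : ℕ)
    (α : k) : ∃ s', s = t ^ p * (s' + algebraMap k F α) ∧ IsTranscendenceBasis k ![t, s'] := by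
  have ht : t ≠ 0 := h.1.ne_zero 1
  obtain ⟨s', rfl⟩ : ∃ s', s = t ^ p * (s' + algebraMap k F α) :=
    ⟨s / t ^ p - algebraMap k F α, by rw [sub_add_cancel, mul_div_cancel₀ _ (pow_ne_zero p ht)]⟩
  exact ⟨s', rfl, isTranscendenceBasis_pair_of_mem_adjoin h (pow_mul_add_mem_adjoin p α)
    (Algebra.subset_adjoin (by simp))⟩

theorem dominates_pairLocalization_pow_mul_add (h : AlgebraicIndependent k ![s, t]) {p : ℕ}
    (hp : p ≠ 0) (α : k) : Dominates (pairLocalization k s t)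
      (pairLocalization k (s ^ p * (t + algebraMap k F α)) s) := by
  have := isLocalRing_pairLocalization h
  have hk := algebraMap_mem_pairLocalization (k := k) s t
  exact dominates_pairLocalization hk (((isNonunitIn_left h).pow hp).mul_right
    (add_mem (right_mem_pairLocalization _ _) (hk α))) (isNonunitIn_left h)

theorem eq_pairLocalization_or_div_mem {S : Subring F} [IsLocalRing S]
    [UniqueFactorizationMonoid S] (hk : ∀ c : k, algebraMap k F c ∈ S) (hs : IsNonunitIn S s)
    (ht : IsNonunitIn S t) (hst : AlgebraicIndependent k ![s, t])
    (hS : ∀ z ∈ S, z ∈ IntermediateField.adjoin k {s, t}) :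
    S = pairLocalization k s t ∨ s / t ∈ S ∨ t / s ∈ S := by
  let : Algebra k S := ((algebraMap k F).codRestrict S hk).toAlgebra
  have : IsScalarTower k S F := IsScalarTower.of_algebraMap_eq fun _ => rfl
  let s' : S := ⟨s, hs.mem⟩
  let t' : S := ⟨t, ht.mem⟩
  have hval (f : MvPolynomial (Fin 2) k) : (aeval ![s', t'] f : F) = aeval ![s, t] f := by
    rw [← show algebraMap S F ∘ ![s', t'] = ![s, t] from
      funext (Fin.forall_fin_two.2 ⟨rfl, rfl⟩)]
    exact (aeval_algebraMap_apply F ![s', t'] f).symm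
  have hinj : Function.Injective (aeval (R := k) ![s', t']) := fun f g hfg => hst <| by
    rw [← hval, ← hval, hfg]
  have hfrac (z : S) : ∃ f g : MvPolynomial (Fin 2) k, g ≠ 0 ∧
      z * aeval ![s', t'] g = aeval ![s', t'] f := by
    have hz := hS z z.2
    rw [← Matrix.range_cons_cons_empty s t ![], IntermediateField.mem_adjoin_range_iff] at hz
    obtain ⟨f, g, hfg⟩ := hz
    rcases eq_or_ne g 0 with rfl | hg
    · exact ⟨0, 1, one_ne_zero, Subtype.ext (by simp [hfg])⟩
    · have hg0 : aeval ![s, t] g ≠ 0 := (map_ne_zero_iff _ hst).2 hg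
      refine ⟨f, g, hg, Subtype.ext ?_⟩
      rw [Subring.coe_mul, hval, hval, hfg, div_mul_cancel₀ _ hg0]
  rcases dvd_or_dvd_or_exists_constantCoeff_ne_zero (k := k) (s := s') (t := t')
    ((isUnit_mk_iff _).not.2 hs.not_isUnitIn) ((isUnit_mk_iff _).not.2 ht.not_isUnitIn)
    hinj hfrac with h | h | h
  · exact .inr (.inr ((dvd_mk_iff _ _ (hst.ne_zero 0)).1 h))
  · exact .inr (.inl ((dvd_mk_iff _ _ (hst.ne_zero 1)).1 h))
  · refine .inl (le_antisymm (fun z hz => ?_) (dominates_pairLocalization hk hs ht).le)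
    obtain ⟨f, g, hg, hfg⟩ := h ⟨z, hz⟩
    exact mem_pairLocalization.2 ⟨f, g, hg, by rw [← hval, ← hval, ← hfg, Subring.coe_mul]⟩

end GeneratingPairs

section BlowUpSequence

variable {F : Type} [Field F] {k : Type} [Field k] [Algebra k F]

/-- A sequence of parameters of successive blow-ups: `s i` and `s (i + 1)` are parameters of the
`i`-th local ring `k[s i, s (i + 1)]_(s i, s (i + 1))`, which `p` quadratic transforms, the last
one taken at the point `a i` of the exceptional curve, turn into the next one. -/
structure IsBlowUpSequence (p : ℕ) (a : ℕ → k) (s : ℕ → F) : Prop where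
  isTranscendenceBasis_zero : IsTranscendenceBasis k ![s 0, s 1]
  eq (i : ℕ) : s i = s (i + 1) ^ p * (s (i + 2) + algebraMap k F (a i))

namespace IsBlowUpSequence

variable {p : ℕ} {a : ℕ → k} {s : ℕ → F}

theorem mem_adjoin (h : IsBlowUpSequence p a s) (i : ℕ) :
    s i ∈ Algebra.adjoin k {s (i + 1), s (i + 2)} :=
  h.eq i ▸ pow_mul_add_mem_adjoin p (a i)

theorem isTranscendenceBasis (h : IsBlowUpSequence p a s) (i : ℕ) :
    IsTranscendenceBasis k ![s i, s (i + 1)] := by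
  induction i with
  | zero => exact h.isTranscendenceBasis_zero
  | succ i ih =>
    exact isTranscendenceBasis_pair_of_mem_adjoin ih (h.mem_adjoin i)
      (Algebra.subset_adjoin (by simp))

theorem ne_zero (h : IsBlowUpSequence p a s) (i : ℕ) : s i ≠ 0 :=
  (h.isTranscendenceBasis i).1.ne_zero 0

theorem mem_adjoin_div (h : IsBlowUpSequence p a s) (i m : ℕ) :
    s i ∈ Algebra.adjoin k {s i / s (i + 1) ^ m, s (i + 1)} := by
  have hmul : s i / s (i + 1) ^ m * s (i + 1) ^ m ∈
      Algebra.adjoin k {s i / s (i + 1) ^ m, s (i + 1)} :=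
    mul_mem (Algebra.subset_adjoin (by simp)) (pow_mem (Algebra.subset_adjoin (by simp)) m)
  rwa [div_mul_cancel₀ _ (pow_ne_zero m (h.ne_zero _))] at hmul

theorem isTranscendenceBasis_div (h : IsBlowUpSequence p a s) (i m : ℕ) :
    IsTranscendenceBasis k ![s i / s (i + 1) ^ m, s (i + 1)] :=
  isTranscendenceBasis_pair_of_mem_adjoin (h.isTranscendenceBasis i) (h.mem_adjoin_div i m)
    (Algebra.subset_adjoin (by simp))

theorem adjoin_le (h : IsBlowUpSequence p a s) (i : ℕ) :
    IntermediateField.adjoin k {s 0, s 1} ≤ IntermediateField.adjoin k {s i, s (i + 1)} := by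
  induction i with
  | zero => exact le_rfl
  | succ i ih =>
    exact ih.trans
      (adjoin_pair_le_of_mem_adjoin (h.mem_adjoin i) (Algebra.subset_adjoin (by simp)))

theorem adjoin_le_div (h : IsBlowUpSequence p a s) (i m : ℕ) :
    IntermediateField.adjoin k {s 0, s 1} ≤
      IntermediateField.adjoin k {s i / s (i + 1) ^ m, s (i + 1)} :=
  (h.adjoin_le i).trans
    (adjoin_pair_le_of_mem_adjoin (h.mem_adjoin_div i m) (Algebra.subset_adjoin (by simp)))

theorem div_pow_eq (h : IsBlowUpSequence p a s) (i : ℕ) {m : ℕ} (hm : m ≤ p) :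
    s i / s (i + 1) ^ m = s (i + 1) ^ (p - m) * (s (i + 2) + algebraMap k F (a i)) := by
  rw [div_eq_iff (pow_ne_zero m (h.ne_zero _)), mul_right_comm, ← pow_add, Nat.sub_add_cancel hm]
  exact h.eq i

theorem isNonunitIn_div_pow (h : IsBlowUpSequence p a s) {V : Subring F}
    (hk : ∀ c : k, algebraMap k F c ∈ V) {i m : ℕ} (hs : IsNonunitIn V (s (i + 1)))
    (hs' : s (i + 2) ∈ V) (hm : m < p) : IsNonunitIn V (s i / s (i + 1) ^ m) := by
  rw [h.div_pow_eq i hm.le]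
  exact (hs.pow (Nat.sub_ne_zero_of_lt hm)).mul_right (add_mem hs' (hk _))

theorem dominates_succ (h : IsBlowUpSequence p a s) (hp : p ≠ 0) (i : ℕ) :
    Dominates (pairLocalization k (s (i + 1)) (s (i + 2)))
      (pairLocalization k (s i) (s (i + 1))) :=
  h.eq i ▸ dominates_pairLocalization_pow_mul_add (h.isTranscendenceBasis (i + 1)).1 hp (a i)

section NoetherianDominated

variable {V S : Subring F} [IsLocalRing S] [IsNoetherianRing S]

theorem eq_zero_of_forall_mem (h : IsBlowUpSequence p a s) (hp : 1 < p)
    (hk : ∀ c : k, algebraMap k F c ∈ S) (hs : ∀ i, IsNonunitIn S (s i)) : s 0 = 0 := by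
  let r (i : ℕ) : S := ⟨s i, (hs i).mem⟩
  have hdvd (n i : ℕ) : r (i + n) ^ p ^ n ∣ r i := by
    induction n generalizing i with
    | zero => simp
    | succ n ih =>
      have hrec : r i = r (i + 1) ^ p * (r (i + 2) + ⟨_, hk (a i)⟩) := Subtype.ext (h.eq i)
      rw [hrec, pow_succ, pow_mul, show i + (n + 1) = i + 1 + n by omega]
      exact (pow_dvd_pow_of_dvd (ih (i + 1)) p).mul_right _
  refine congrArg Subtype.val (?_ : r 0 = 0)
  rw [← Ideal.mem_bot, ← Ideal.iInf_pow_eq_bot_of_isLocalRing (IsLocalRing.maximalIdeal S)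
    (Ideal.IsPrime.ne_top inferInstance), Ideal.mem_iInf]
  intro n
  have hr : r (0 + n) ∈ IsLocalRing.maximalIdeal S :=
    (isNonunitIn_iff_mem_maximalIdeal _).1 (hs (0 + n))
  exact Ideal.pow_le_pow_right (Nat.lt_pow_self hp).le
    (Ideal.mem_of_dvd _ (hdvd n 0) (Ideal.pow_mem_pow hr _))

theorem exists_div_notMem (h : IsBlowUpSequence p a s) (hp : 1 < p)
    (hk : ∀ c : k, algebraMap k F c ∈ S) (hVS : Dominates V S)
    (hV : ∀ i, IsNonunitIn V (s i)) (h0 : s 0 ∈ S) (h1 : s 1 ∈ S) :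
    ∃ i m, m < p ∧ IsNonunitIn S (s i / s (i + 1) ^ m) ∧ IsNonunitIn S (s (i + 1)) ∧
      s i / s (i + 1) ^ m / s (i + 1) ∉ S ∧ s (i + 1) / (s i / s (i + 1) ^ m) ∉ S := by
  by_contra! hcon
  have hkV (c : k) : algebraMap k F c ∈ V := hVS.le (hk c)
  have hinner {i : ℕ} (hi : s i ∈ S) (hi' : s (i + 1) ∈ S) {m : ℕ} (hm : m ≤ p) :
      s i / s (i + 1) ^ m ∈ S := by
    induction m with
    | zero => simpa using hi
    | succ m ih =>
      have hdiv : s i / s (i + 1) ^ m / s (i + 1) = s i / s (i + 1) ^ (m + 1) := by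
        rw [div_div, ← pow_succ]
      have hσV := h.isNonunitIn_div_pow hkV (hV (i + 1)) (hV (i + 2)).mem hm
      have hdivV : s i / s (i + 1) ^ (m + 1) ∈ V := by
        rw [h.div_pow_eq i hm]
        exact mul_mem (pow_mem (hV _).mem _) (add_mem (hV _).mem (hkV _))
      by_contra hmem
      have hmem' := hcon i m hm (hσV.of_le hVS.le (ih (Nat.le_of_succ_le hm)))
        ((hV _).of_le hVS.le hi') (hdiv ▸ hmem)
      rw [← inv_div, hdiv] at hmem'
      refine hmem (inv_inv (s i / s (i + 1) ^ (m + 1)) ▸ (hVS.isUnitIn hmem' ?_).inv_mem)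
      exact IsUnitIn.inv ⟨hdivV, div_ne_zero (h.ne_zero _) (pow_ne_zero _ (h.ne_zero _)),
        hVS.le hmem'⟩
  have hall (i : ℕ) : s i ∈ S ∧ s (i + 1) ∈ S := by
    induction i with
    | zero => exact ⟨h0, h1⟩
    | succ i ih =>
      have hlast := hinner ih.1 ih.2 le_rfl
      rw [h.div_pow_eq i le_rfl, Nat.sub_self, pow_zero, one_mul] at hlast
      exact ⟨ih.2, by simpa using sub_mem hlast (hk (a i))⟩
  exact h.ne_zero 0 (h.eq_zero_of_forall_mem hp hk fun i => (hV i).of_le hVS.le (hall i).1)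

theorem exists_eq_pairLocalization (h : IsBlowUpSequence p a s) (hp : 1 < p)
    [UniqueFactorizationMonoid S] (hk : ∀ c : k, algebraMap k F c ∈ S) (hVS : Dominates V S)
    (hV : ∀ i, IsNonunitIn V (s i)) (h0 : s 0 ∈ S) (h1 : s 1 ∈ S)
    (hS : ∀ z ∈ S, z ∈ IntermediateField.adjoin k {s 0, s 1}) :
    ∃ i m, m < p ∧ S = pairLocalization k (s i / s (i + 1) ^ m) (s (i + 1)) := by
  obtain ⟨i, m, hm, hl, hr, hdiv, hdiv'⟩ := h.exists_div_notMem hp hk hVS hV h0 h1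
  exact ⟨i, m, hm, (eq_pairLocalization_or_div_mem hk hl hr (h.isTranscendenceBasis_div i m).1
    fun z hz => h.adjoin_le_div i m (hS z hz)).resolve_right (not_or_intro hdiv hdiv')⟩

theorem not_valuationRing (h : IsBlowUpSequence p a s) (hp : 1 < p)
    (hk : ∀ c : k, algebraMap k F c ∈ S) (hVS : Dominates V S)
    (hV : ∀ i, IsNonunitIn V (s i)) (h0 : s 0 ∈ S) (h1 : s 1 ∈ S) : ¬ ValuationRing S := by
  intro
  obtain ⟨i, m, -, hl, hr, hdiv, hdiv'⟩ := h.exists_div_notMem hp hk hVS hV h0 h1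
  have hl0 : s i / s (i + 1) ^ m ≠ 0 := (h.isTranscendenceBasis_div i m).1.ne_zero 0
  rcases ValuationRing.dvd_total (⟨_, hl.mem⟩ : S) ⟨_, hr.mem⟩ with hdvd | hdvd
  · exact hdiv' ((dvd_mk_iff _ _ hl0).1 hdvd)
  · exact hdiv ((dvd_mk_iff _ _ (h.ne_zero _)).1 hdvd)

end NoetherianDominated

end IsBlowUpSequence

end BlowUpSequence

theorem exists_derivation_algebraMap_eq {R A B : Type*} [CommRing R] [CommRing A] [CommRing B]
    [Algebra R A] [Algebra R B] [Algebra A B] [IsScalarTower R A B] (M : Submonoid A)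
    [IsLocalization M B] (d : Derivation R A B) :
    ∃ D : Derivation R B B, ∀ a, D (algebraMap A B a) = d a := by
  have hunit := IsLocalizedModule.map_units (S := M) (IsScalarTower.toAlgHom A A B).toLinearMap
  let f := IsLocalizedModule.lift M (KaehlerDifferential.map R R A B) d.liftKaehlerDifferential
    hunit
  refine ⟨(f.extendScalarsOfIsLocalization M B).compDer (KaehlerDifferential.D R B), fun a => ?_⟩
  have hf := IsLocalizedModule.lift_apply M (KaehlerDifferential.map R R A B)
    d.liftKaehlerDifferential hunit (KaehlerDifferential.D R A a)
  rwa [KaehlerDifferential.map_D, Derivation.liftKaehlerDifferential_comp_D] at hf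

section JacobianBracket

/-- The Jacobian determinant of `f` and `g` with respect to two derivations: for `∂/∂x` and `∂/∂y`
on `k(x, y)` it is `∂(f, g)/∂(x, y)`. -/
def jacobianBracket {k F : Type*} [Field k] [Field F] [Algebra k F] (D₀ D₁ : Derivation k F F)
    (f g : F) : F :=
  D₀ f * D₁ g - D₁ f * D₀ g

theorem derivation_pow_mul {k F : Type*} [Field k] [Field F] [Algebra k F]
    (D : Derivation k F F) {p : ℕ} [CharP k p] (f g : F) : D (f ^ p * g) = f ^ p * D g := by
  have : CharP F p := charP_of_injective_algebraMap (algebraMap k F).injective p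
  simp only [D.leibniz, D.leibniz_pow, nsmul_eq_mul, CharP.cast_eq_zero, zero_mul, smul_eq_mul,
    mul_zero, add_zero]

variable {F : Type} [Field F] {k : Type} [Field k] [Algebra k F]

theorem exists_derivation_eq_of_mem_pairLocalization {s t z : F}
    (h : AlgebraicIndependent k ![s, t]) (hz : z ∈ pairLocalization k s t) :
    ∃ a ∈ pairLocalization k s t, ∃ b ∈ pairLocalization k s t,
      ∀ D : Derivation k F F, D z = a * D s + b * D t := by
  have hpoly (f : MvPolynomial (Fin 2) k) (D : Derivation k F F) : D (aeval ![s, t] f) =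
      aeval ![s, t] (pderiv 0 f) * D s + aeval ![s, t] (pderiv 1 f) * D t := by
    induction f using MvPolynomial.induction_on with
    | C c => simp [← algebraMap_eq]
    | add f g hf hg => simp only [map_add, hf, hg]; ring
    | mul_X f i hf => fin_cases i <;> simp [Derivation.leibniz, pderiv_X, hf] <;> ring
  obtain ⟨f, g, hg, hfg⟩ := mem_pairLocalization.1 hz
  have hgu : IsUnitIn (pairLocalization k s t) (aeval ![s, t] g) :=
    isUnitIn_of_mul_aeval_eq h hg (g := 1) (by simp) (by rw [map_one, mul_one])
  have hmem (f' g' : MvPolynomial (Fin 2) k) : (aeval ![s, t] g)⁻¹ *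
      (aeval ![s, t] f' - z * aeval ![s, t] g') ∈ pairLocalization k s t :=
    mul_mem hgu.inv_mem (sub_mem (aeval_mem_pairLocalization s t f')
      (mul_mem hz (aeval_mem_pairLocalization s t g')))
  refine ⟨_, hmem (pderiv 0 f) (pderiv 0 g), _, hmem (pderiv 1 f) (pderiv 1 g), fun D => ?_⟩
  have hD := congrArg D hfg
  rw [D.leibniz, hpoly, hpoly, smul_eq_mul, smul_eq_mul] at hD
  have hg0 := hgu.ne_zero
  field_simp
  linear_combination hD

variable (D₀ D₁ : Derivation k F F)

theorem exists_jacobianBracket_eq_mul {s t f g : F} (h : AlgebraicIndependent k ![s, t])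
    (hf : f ∈ pairLocalization k s t) (hg : g ∈ pairLocalization k s t) :
    ∃ c ∈ pairLocalization k s t, jacobianBracket D₀ D₁ f g = c * jacobianBracket D₀ D₁ s t := by
  obtain ⟨a, ha, b, hb, hab⟩ := exists_derivation_eq_of_mem_pairLocalization h hf
  obtain ⟨c, hc, d, hd, hcd⟩ := exists_derivation_eq_of_mem_pairLocalization h hg
  refine ⟨a * d - b * c, sub_mem (mul_mem ha hd) (mul_mem hb hc), ?_⟩
  simp only [jacobianBracket, hab, hcd]
  ring

theorem exists_isUnitIn_mul_jacobianBracket {u v u' v' e f e' f' : F}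
    (h : AlgebraicIndependent k ![u, v])
    (hu' : IsNonunitIn (pairLocalization k u v) u') (hv' : IsNonunitIn (pairLocalization k u v) v')
    (he : e ∈ pairLocalization k u v) (hf : f ∈ pairLocalization k u v)
    (he' : e' ∈ pairLocalization k u v) (hf' : f' ∈ pairLocalization k u v)
    (hu : u = e * u' + f * v') (hv : v = e' * u' + f' * v') :
    ∃ ω, IsUnitIn (pairLocalization k u v) ω ∧ ∃ E ∈ pairLocalization k u v,
      ω * jacobianBracket D₀ D₁ u v = E * jacobianBracket D₀ D₁ u' v' := by
  have := isLocalRing_pairLocalization h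
  have hvm : v ∈ pairLocalization k u v := right_mem_pairLocalization u v
  obtain ⟨c₁, hc₁, h₁⟩ := exists_jacobianBracket_eq_mul D₀ D₁ h he hvm
  obtain ⟨c₂, hc₂, h₂⟩ := exists_jacobianBracket_eq_mul D₀ D₁ h hf hvm
  obtain ⟨c₃, hc₃, h₃⟩ := exists_jacobianBracket_eq_mul D₀ D₁ h hu'.mem he'
  obtain ⟨c₄, hc₄, h₄⟩ := exists_jacobianBracket_eq_mul D₀ D₁ h hu'.mem hf'
  obtain ⟨c₅, hc₅, h₅⟩ := exists_jacobianBracket_eq_mul D₀ D₁ h hv'.mem he'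
  obtain ⟨c₆, hc₆, h₆⟩ := exists_jacobianBracket_eq_mul D₀ D₁ h hv'.mem hf'
  have hμ := (hu'.mul_left (add_mem (add_mem hc₁ (mul_mem he hc₃)) (mul_mem hf hc₅))).add
    (hv'.mul_left (add_mem (add_mem hc₂ (mul_mem he hc₄)) (mul_mem hf hc₆)))
  refine ⟨_, hμ.neg.isUnitIn_add (.one _),
    e * f' - f * e', sub_mem (mul_mem he hf') (mul_mem hf he'), ?_⟩
  have hDu (D : Derivation k F F) : D u = e * D u' + u' * D e + (f * D v' + v' * D f) := by
    simpa only [map_add, Derivation.leibniz, smul_eq_mul] using congrArg D hu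
  have hDv (D : Derivation k F F) : D v = e' * D u' + u' * D e' + (f' * D v' + v' * D f') := by
    simpa only [map_add, Derivation.leibniz, smul_eq_mul] using congrArg D hv
  have hexp : jacobianBracket D₀ D₁ u v = e * (u' * jacobianBracket D₀ D₁ u' e' +
      f' * jacobianBracket D₀ D₁ u' v' + v' * jacobianBracket D₀ D₁ u' f') +
      u' * jacobianBracket D₀ D₁ e v + f * (u' * jacobianBracket D₀ D₁ v' e' -
      e' * jacobianBracket D₀ D₁ u' v' + v' * jacobianBracket D₀ D₁ v' f') +
      v' * jacobianBracket D₀ D₁ f v := by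
    simp only [jacobianBracket]
    rw [hDu, hDu, hDv, hDv]
    ring
  rw [h₁, h₂, h₃, h₄, h₅, h₆] at hexp
  linear_combination hexp

end JacobianBracket

section StableForm

variable {F : Type} [Field F] {k : Type} [Field k] [Algebra k F]

/-- The shape of the extension `k[u, v]_(u, v) → k[x, y]_(x, y)` which survives simultaneous
sequences of quadratic transforms. The coefficients are taken in a subring `S`, so that the shape
can be transported to larger local rings. -/
structure IsStableForm (k : Type) [Field k] [Algebra k F] (p : ℕ) (S : Subring F)
    (x y u v : F) : Prop where
  exists_eq_pow_mul : ∃ c : k, c ≠ 0 ∧ ∃ a ∈ S, ∃ b, IsUnitIn S b ∧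
    u = x ^ p * (algebraMap k F c + a * x + b * y)
  exists_eq_mul_pow_add : ∃ τ, IsUnitIn S τ ∧ ∃ Ω, IsUnitIn S Ω ∧ v = τ * y ^ p + Ω * x

theorem IsStableForm.mono {p : ℕ} {S T : Subring F} {x y u v : F}
    (h : IsStableForm k p S x y u v) (hST : S ≤ T) : IsStableForm k p T x y u v := by
  obtain ⟨c, hc, a, ha, b, hb, hu⟩ := h.exists_eq_pow_mul
  obtain ⟨τ, hτ, Ω, hΩ, hv⟩ := h.exists_eq_mul_pow_add
  exact ⟨⟨c, hc, a, hST ha, b, hb.mono hST, hu⟩, τ, hτ.mono hST, Ω, hΩ.mono hST, hv⟩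

theorem isUnitIn_algebraMap_add {S : Subring F} [IsLocalRing S] (hk : ∀ c : k, algebraMap k F c ∈ S)
    {c : k} (hc : c ≠ 0) {z : F} (hz : IsNonunitIn S z) : IsUnitIn S (algebraMap k F c + z) :=
  hz.isUnitIn_add (isUnitIn_algebraMap hk hc)

theorem IsStableForm.exists_eq_pow_mul_isUnitIn {p : ℕ} {S : Subring F} [IsLocalRing S]
    (hk : ∀ c : k, algebraMap k F c ∈ S) {x y u v : F} (h : IsStableForm k p S x y u v)
    (hx : IsNonunitIn S x) (hy : IsNonunitIn S y) : ∃ γ, IsUnitIn S γ ∧ u = x ^ p * γ := by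
  obtain ⟨c, hc, a, ha, b, hb, hu⟩ := h.exists_eq_pow_mul
  exact ⟨_, (hy.mul_left hb.mem).isUnitIn_add (isUnitIn_algebraMap_add hk hc (hx.mul_left ha)), hu⟩

theorem IsStableForm.isNonunitIn_fst {p : ℕ} {S : Subring F} [IsLocalRing S]
    (hk : ∀ c : k, algebraMap k F c ∈ S) {x y u v : F} (h : IsStableForm k p S x y u v)
    (hp : p ≠ 0) (hx : IsNonunitIn S x) (hy : IsNonunitIn S y) : IsNonunitIn S u := by
  obtain ⟨γ, hγ, hu⟩ := h.exists_eq_pow_mul_isUnitIn hk hx hy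
  exact hu ▸ (hx.pow hp).mul_right hγ.mem

theorem IsStableForm.isNonunitIn_snd {p : ℕ} {S : Subring F} [IsLocalRing S] {x y u v : F}
    (h : IsStableForm k p S x y u v) (hp : p ≠ 0) (hx : IsNonunitIn S x)
    (hy : IsNonunitIn S y) : IsNonunitIn S v := by
  obtain ⟨τ, hτ, Ω, hΩ, hv⟩ := h.exists_eq_mul_pow_add
  exact hv ▸ ((hy.pow hp).mul_left hτ.mem).add (hx.mul_left hΩ.mem)

theorem exists_mul_add_pow_eq {k : Type*} [Field k] {p : ℕ} [Fact p.Prime] [CharP k p]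
    {c α τ Ω : k} (hc : c ≠ 0) (hτ : τ ≠ 0) (hδ : τ + α * Ω ≠ 0) :
    ∃ β, β * (τ + α * Ω) ^ p = α ^ p * c ∧ c - β * Ω ^ p ≠ 0 := by
  have hβ : α ^ p * c / (τ + α * Ω) ^ p * (τ + α * Ω) ^ p = α ^ p * c :=
    div_mul_cancel₀ _ (pow_ne_zero _ hδ)
  refine ⟨_, hβ, fun h => mul_ne_zero hc (pow_ne_zero p hτ) ?_⟩
  have hpow : (τ + α * Ω) ^ p = τ ^ p + α ^ p * Ω ^ p := by rw [add_pow_char, mul_pow]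
  linear_combination (τ + α * Ω) ^ p * h + Ω ^ p * hβ - c * hpow

theorem add_pow_mul_eq_add_mul_pow {R : Type*} [CommRing R] {p : ℕ} [Fact p.Prime] [CharP R p]
    {α β δ Ω c : R} (hβ : β * δ ^ p = α ^ p * c) (b ρ y y₁ : R) :
    (y₁ + α) ^ p * (c + b * y) = (c - β * Ω ^ p) * y₁ ^ p +
      (b * (y₁ + α) ^ p - β * y ^ (p - 1) * ρ ^ p) * y + β * (δ + ρ * y + Ω * y₁) ^ p := by
  have hy : y ^ p = y ^ (p - 1) * y := by
    rw [← pow_succ, Nat.sub_add_cancel (Fact.out : p.Prime).one_le]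
  simp only [add_pow_char, mul_pow]
  rw [hy]
  linear_combination -hβ

/-- The two units change places: the new `b` is the coefficient `Ω` of `y₁` in `v / y ^ p`, and the
new `Ω` is, up to non-units, the coefficient of `y` in `(y₁ + α) ^ p * (c + b * y)`. -/
theorem exists_isStableForm_of_eq_pow_mul {p : ℕ} [Fact p.Prime] [CharP k p] {S : Subring F}
    [IsLocalRing S] (hk : ∀ c : k, algebraMap k F c ∈ S) {u v y y₁ b ρ : F}
    (hy : IsNonunitIn S y) (hy₁ : IsNonunitIn S y₁) (hb : IsUnitIn S b) (hρ : ρ ∈ S)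
    {c τ Ω α : k} (hc : c ≠ 0) (hτ : τ ≠ 0) (hΩ : Ω ≠ 0) (hα : α ≠ 0) (hδ : τ + α * Ω ≠ 0)
    (hu : u = (y ^ p) ^ p * ((y₁ + algebraMap k F α) ^ p * (algebraMap k F c + b * y)))
    (hv : v = y ^ p * (algebraMap k F (τ + α * Ω) + ρ * y + algebraMap k F Ω * y₁)) :
    ∃ β v₁, u = v ^ p * (v₁ + algebraMap k F β) ∧ IsStableForm k p S y y₁ v v₁ := by
  have : CharP F p := charP_of_injective_algebraMap (algebraMap k F).injective p
  have hyp : IsNonunitIn S (y ^ (p - 1)) :=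
    hy.pow (Nat.sub_ne_zero_of_lt (Fact.out : p.Prime).one_lt)
  have hyα : IsUnitIn S (y₁ + algebraMap k F α) :=
    add_comm (algebraMap k F α) y₁ ▸ isUnitIn_algebraMap_add hk hα hy₁
  obtain ⟨β, hβ, hτ₁⟩ := exists_mul_add_pow_eq hc hτ hδ
  have hβ' : algebraMap k F β * algebraMap k F (τ + α * Ω) ^ p =
      algebraMap k F α ^ p * algebraMap k F c := by
    simpa only [map_mul, map_pow] using congrArg (algebraMap k F) hβ
  have hkey := add_pow_mul_eq_add_mul_pow (Ω := algebraMap k F Ω) hβ' b ρ y y₁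
  have hΩ₁ : IsUnitIn S (b * (y₁ + algebraMap k F α) ^ p -
      algebraMap k F β * y ^ (p - 1) * ρ ^ p) := by
    rw [sub_eq_add_neg]
    exact ((hyp.mul_left (hk β)).mul_right (pow_mem hρ p)).neg.isUnitIn_add (hb.mul (hyα.pow p))
  have hγ₁ : IsUnitIn S (algebraMap k F (τ + α * Ω) + ρ * y + algebraMap k F Ω * y₁) :=
    (hy₁.mul_left (hk Ω)).isUnitIn_add (isUnitIn_algebraMap_add hk hδ (hy.mul_left hρ))
  refine ⟨β, (algebraMap k F (c - β * Ω ^ p) * y₁ ^ p + (b * (y₁ + algebraMap k F α) ^ p -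
    algebraMap k F β * y ^ (p - 1) * ρ ^ p) * y) / (algebraMap k F (τ + α * Ω) + ρ * y +
      algebraMap k F Ω * y₁) ^ p, ?_, ⟨_, hδ, ρ, hρ, _, isUnitIn_algebraMap hk hΩ, hv⟩,
    _, (isUnitIn_algebraMap hk hτ₁).mul (hγ₁.pow p).inv, _, hΩ₁.mul (hγ₁.pow p).inv, ?_⟩
  · rw [hu, hkey, hv, mul_pow _ _ p, mul_assoc ((y ^ p) ^ p), mul_add _ (_ / _),
      mul_div_cancel₀ _ (hγ₁.pow p).ne_zero, mul_comm (_ ^ p) (algebraMap k F β),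
      map_sub, map_mul, map_pow]
  · ring

theorem IsUnitIn.exists_eq_algebraMap_add {x y z : F} (h : AlgebraicIndependent k ![x, y])
    (hz : IsUnitIn (pairLocalization k x y) z) : ∃ c : k, c ≠ 0 ∧
      ∃ a ∈ pairLocalization k x y, ∃ b ∈ pairLocalization k x y,
        z = algebraMap k F c + a * x + b * y := by
  have := isLocalRing_pairLocalization h
  obtain ⟨c, a, ha, b, hb, rfl⟩ := _root_.exists_eq_algebraMap_add h hz.mem
  refine ⟨c, ?_, a, ha, b, hb, rfl⟩
  rintro rfl
  have hnonunit := ((isNonunitIn_left h).mul_left ha).add ((isNonunitIn_right h).mul_left hb)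
  exact hnonunit.not_isUnitIn (by simpa only [map_zero, zero_add] using hz)

theorem exists_ne_zero_add_mul_ne_zero {k : Type*} [Field k] (hcard : 3 ≤ Cardinal.mk k) (τ : k)
    {Ω : k} (hΩ : Ω ≠ 0) : ∃ α : k, α ≠ 0 ∧ τ + α * Ω ≠ 0 := by
  obtain ⟨α, hα, hατ⟩ := Cardinal.exists_ne_ne_of_three_le hcard 0 (-τ / Ω)
  exact ⟨α, hα, fun h => hατ ((eq_div_iff hΩ).2 (eq_neg_of_add_eq_zero_right h))⟩

theorem IsStableForm.exists_next {p : ℕ} [Fact p.Prime] [CharP k p] (hcard : 3 ≤ Cardinal.mk k)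
    {x y u v : F} (hxy : IsTranscendenceBasis k ![x, y])
    (h : IsStableForm k p (pairLocalization k x y) x y u v) :
    ∃ α β y₁ v₁, x = y ^ p * (y₁ + algebraMap k F α) ∧ u = v ^ p * (v₁ + algebraMap k F β) ∧
      IsStableForm k p (pairLocalization k y y₁) y y₁ v v₁ := by
  have hp : p.Prime := Fact.out
  obtain ⟨c, hc, a, ha, b, hb, hu⟩ := h.exists_eq_pow_mul
  obtain ⟨τ, hτ, Ω, hΩ, hv⟩ := h.exists_eq_mul_pow_add
  obtain ⟨τ₀, hτ₀, aτ, haτ, bτ, hbτ, rfl⟩ := hτ.exists_eq_algebraMap_add hxy.1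
  obtain ⟨Ω₀, hΩ₀, aΩ, haΩ, bΩ, hbΩ, rfl⟩ := hΩ.exists_eq_algebraMap_add hxy.1
  obtain ⟨α, hα, hδ⟩ := exists_ne_zero_add_mul_ne_zero hcard τ₀ hΩ₀
  obtain ⟨y₁, rfl, hind, -⟩ := exists_eq_pow_mul_add_isTranscendenceBasis hxy p α
  have := isLocalRing_pairLocalization hind
  have hle := (dominates_pairLocalization_pow_mul_add hind hp.ne_zero α).le
  have hk := algebraMap_mem_pairLocalization (k := k) y y₁
  have hy := isNonunitIn_left hind
  have hyα : y₁ + algebraMap k F α ∈ pairLocalization k y y₁ :=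
    add_mem (right_mem_pairLocalization _ _) (hk α)
  obtain ⟨ξ, hξ, hyξ⟩ : ∃ ξ, IsNonunitIn (pairLocalization k y y₁) ξ ∧
      y ^ p * (y₁ + algebraMap k F α) = ξ * y := by
    refine ⟨_, (hy.pow (Nat.sub_ne_zero_of_lt hp.one_lt)).mul_right hyα, ?_⟩
    rw [mul_right_comm, ← pow_succ, Nat.sub_add_cancel hp.one_le]
  obtain ⟨β, v₁, huv, hform⟩ := exists_isStableForm_of_eq_pow_mul (u := u) (v := v) hk hy
    (isNonunitIn_right hind) ((hξ.mul_left (hle ha)).isUnitIn_add (hb.mono hle))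
    (add_mem (add_mem (mul_mem (hle haτ) hξ.mem) (hle hbτ))
      (mul_mem (add_mem (mul_mem (hle haΩ) hξ.mem) (hle hbΩ)) hyα)) hc hτ₀ hΩ₀ hα hδ
    (by rw [hu, mul_pow]; linear_combination (y ^ p) ^ p * (y₁ + algebraMap k F α) ^ p * a * hyξ)
    (by
      rw [hv, map_add, map_mul]
      linear_combination (aτ * y ^ p + aΩ * y ^ p * (y₁ + algebraMap k F α)) * hyξ)
  exact ⟨α, β, y₁, v₁, rfl, huv, hform⟩

theorem jacobianBracket_pow_mul_mul_pow_add (D₀ D₁ : Derivation k F F) {p : ℕ} [CharP k p]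
    (x y γ τ Ω : F) : jacobianBracket D₀ D₁ (x ^ p * γ) (τ * y ^ p + Ω * x) =
      x ^ p * (y ^ p * jacobianBracket D₀ D₁ γ τ + x * jacobianBracket D₀ D₁ γ Ω +
        Ω * jacobianBracket D₀ D₁ γ x) := by
  simp only [jacobianBracket, mul_comm τ, map_add, derivation_pow_mul]
  simp only [Derivation.leibniz, smul_eq_mul]
  ring

theorem IsStableForm.exists_jacobianBracket_eq {p : ℕ} [Fact p.Prime] [CharP k p]
    (D₀ D₁ : Derivation k F F) {x y u v : F} (hxy : AlgebraicIndependent k ![x, y])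
    (h : IsStableForm k p (pairLocalization k x y) x y u v) :
    ∃ ε, IsUnitIn (pairLocalization k x y) ε ∧
      jacobianBracket D₀ D₁ u v = ε * x ^ p * jacobianBracket D₀ D₁ x y := by
  have := isLocalRing_pairLocalization hxy
  have hx := isNonunitIn_left hxy
  have hy := isNonunitIn_right hxy
  have hyp := hy.pow (Fact.out : p.Prime).ne_zero
  obtain ⟨c, -, a, ha, b, hb, hu⟩ := h.exists_eq_pow_mul
  obtain ⟨τ, hτ, Ω, hΩ, hv⟩ := h.exists_eq_mul_pow_add
  obtain ⟨γ, hγ⟩ : ∃ γ, γ = algebraMap k F c + a * x + b * y := ⟨_, rfl⟩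
  have hγmem : γ ∈ pairLocalization k x y := hγ ▸ add_mem (add_mem
    (algebraMap_mem_pairLocalization x y c) (mul_mem ha hx.mem)) (mul_mem hb.mem hy.mem)
  obtain ⟨c₁, hc₁, h₁⟩ := exists_jacobianBracket_eq_mul D₀ D₁ hxy hγmem hτ.mem
  obtain ⟨c₂, hc₂, h₂⟩ := exists_jacobianBracket_eq_mul D₀ D₁ hxy hγmem hΩ.mem
  obtain ⟨c₃, hc₃, h₃⟩ := exists_jacobianBracket_eq_mul D₀ D₁ hxy ha hx.mem
  obtain ⟨c₄, hc₄, h₄⟩ := exists_jacobianBracket_eq_mul D₀ D₁ hxy hb.mem hx.mem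
  have hnonunit := ((hyp.mul_left hc₁).add (hx.mul_left hc₂)).add
    (((hx.mul_left hc₃).add (hy.mul_left hc₄)).mul_left hΩ.mem)
  refine ⟨_, hnonunit.isUnitIn_add (hΩ.mul hb).neg, ?_⟩
  have hDγ (D : Derivation k F F) : D γ = a * D x + x * D a + (b * D y + y * D b) := by
    simpa only [map_add, Derivation.map_algebraMap, zero_add, Derivation.leibniz, smul_eq_mul]
      using congrArg D hγ
  have hγx : jacobianBracket D₀ D₁ γ x = x * jacobianBracket D₀ D₁ a x +
      y * jacobianBracket D₀ D₁ b x - b * jacobianBracket D₀ D₁ x y := by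
    simp only [jacobianBracket, hDγ]
    ring
  rw [hu, ← hγ, hv, jacobianBracket_pow_mul_mul_pow_add, hγx, h₁, h₂, h₃, h₄]
  ring

/-- Simultaneous sequences of quadratic transforms of `k[s 0, s 1]_(s 0, s 1)` and of its subring
`k[w 0, w 1]_(w 0, w 1)` which keep the extension in stable form. -/
structure IsStableSequence {k : Type} [Field k] [Algebra k F] (p : ℕ)
    (a b : ℕ → k) (s w : ℕ → F) : Prop where
  upper : IsBlowUpSequence p a s
  lower : IsBlowUpSequence p b w
  isStableForm (i : ℕ) :
    IsStableForm k p (pairLocalization k (s i) (s (i + 1))) (s i) (s (i + 1)) (w i) (w (i + 1))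

theorem IsStableForm.exists_isStableSequence {p : ℕ} [Fact p.Prime] [CharP k p]
    (hcard : 3 ≤ Cardinal.mk k) {x y u v : F} (hxy : IsTranscendenceBasis k ![x, y])
    (huv : IsTranscendenceBasis k ![u, v])
    (h : IsStableForm k p (pairLocalization k x y) x y u v) :
    ∃ (a b : ℕ → k) (s w : ℕ → F), IsStableSequence p a b s w ∧
      s 0 = x ∧ s 1 = y ∧ w 0 = u ∧ w 1 = v := by
  let State := {q : (F × F) × F × F // IsTranscendenceBasis k ![q.1.1, q.1.2] ∧
    IsStableForm k p (pairLocalization k q.1.1 q.1.2) q.1.1 q.1.2 q.2.1 q.2.2}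
  have hnext (q : State) : ∃ (α β : k) (q' : State), q'.1.1.1 = q.1.1.2 ∧ q'.1.2.1 = q.1.2.2 ∧
      q.1.1.1 = q.1.1.2 ^ p * (q'.1.1.2 + algebraMap k F α) ∧
      q.1.2.1 = q.1.2.2 ^ p * (q'.1.2.2 + algebraMap k F β) := by
    obtain ⟨⟨⟨x, y⟩, u, v⟩, hxy, h⟩ := q
    obtain ⟨α, β, y₁, v₁, hx, hu, h₁⟩ := h.exists_next hcard hxy
    have hyy₁ := isTranscendenceBasis_pair_of_mem_adjoin hxy
      (hx ▸ pow_mul_add_mem_adjoin p α) (Algebra.subset_adjoin (by simp))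
    exact ⟨α, β, ⟨⟨⟨y, y₁⟩, v, v₁⟩, hyy₁, h₁⟩, rfl, rfl, hx, hu⟩
  choose α β next hx hu hxeq hueq using hnext
  let q (i : ℕ) : State := next^[i] ⟨⟨⟨x, y⟩, u, v⟩, hxy, h⟩
  have hq (i : ℕ) : q (i + 1) = next (q i) := Function.iterate_succ_apply' _ _ _
  let s (i : ℕ) : F := (q i).1.1.1
  let w (i : ℕ) : F := (q i).1.2.1
  have hs (i : ℕ) : s (i + 1) = (q i).1.1.2 := by rw [← hx, ← hq]
  have hw (i : ℕ) : w (i + 1) = (q i).1.2.2 := by rw [← hu, ← hq]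
  refine ⟨fun i => α (q i), fun i => β (q i), s, w, ⟨⟨?_, fun i => ?_⟩, ⟨?_, fun i => ?_⟩,
    fun i => ?_⟩, rfl, hs 0, rfl, hw 0⟩
  · rwa [hs]
  · rw [hs (i + 1), hs i, hq]
    exact hxeq _
  · rwa [hw]
  · rw [hw (i + 1), hw i, hq]
    exact hueq _
  · rw [hs, hw]
    exact (q i).2.2

end StableForm

section MonomialPairs

variable {R : Type*} [CommRing R]

/-- `u` and `v` are monomials in `y₁, y₂`, up to units, with an invertible matrix of exponents. -/
def IsMonomialPair (y₁ y₂ u v : R) : Prop :=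
  ∃ (δ₁ δ₂ : Rˣ) (a b c d : ℕ), a * d ≠ b * c ∧
    u = δ₁ * y₁ ^ a * y₂ ^ b ∧ v = δ₂ * y₁ ^ c * y₂ ^ d

variable {y₁ y₂ u v w : R}

theorem IsMonomialPair.symm (h : IsMonomialPair y₁ y₂ u v) : IsMonomialPair y₁ y₂ v u := by
  obtain ⟨δ₁, δ₂, a, b, c, d, hdet, hu, hv⟩ := h
  exact ⟨δ₂, δ₁, c, d, a, b, by rwa [mul_comm c, mul_comm d, ne_comm], hv, hu⟩

variable [IsLocalRing R]

theorem IsParameterPair.le_of_pow_dvd_mul [IsNoetherianRing R] [IsDomain R]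
    (h : IsParameterPair y₁ y₂) (δ : Rˣ) {a c d : ℕ} (hdvd : y₁ ^ a ∣ δ * y₁ ^ c * y₂ ^ d) :
    a ≤ c := by
  have hndvd : ¬ y₁ ∣ y₂ ^ d := fun hd => h.not_dvd (h.prime_left.dvd_of_dvd_pow hd)
  have := h.prime_left.pow_dvd_of_dvd_mul_right a hndvd hdvd
  rw [δ.dvd_mul_left] at this
  exact (pow_dvd_pow_iff h.left_ne_zero h.left_mem).1 this

namespace IsMonomialPair

theorem right_mem (h : IsMonomialPair y₁ y₂ u v) (hy₁ : y₁ ∈ IsLocalRing.maximalIdeal R)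
    (hy₂ : y₂ ∈ IsLocalRing.maximalIdeal R) : v ∈ IsLocalRing.maximalIdeal R := by
  obtain ⟨-, δ₂, a, b, c, d, hdet, -, rfl⟩ := h
  by_cases hc : c = 0
  · have hd : d ≠ 0 := fun hd => hdet (by rw [hc, hd, mul_zero, mul_zero])
    exact Ideal.mul_mem_left _ _ (Ideal.pow_mem_of_mem _ hy₂ d (Nat.pos_of_ne_zero hd))
  · exact Ideal.mul_mem_right _ _
      (Ideal.mul_mem_left _ _ (Ideal.pow_mem_of_mem _ hy₁ c (Nat.pos_of_ne_zero hc)))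

theorem of_mul_right [IsNoetherianRing R] [IsDomain R] (hy : IsParameterPair y₁ y₂)
    (h : IsMonomialPair y₁ y₂ u (u * w)) : IsMonomialPair y₁ y₂ u w := by
  obtain ⟨δ₁, δ₂, a, b, c, d, hdet, hu, huw⟩ := h
  have hac : a ≤ c := hy.le_of_pow_dvd_mul δ₂ (d := d)
    (huw ▸ hu ▸ ((dvd_mul_left _ _).mul_right _).mul_right w)
  have hbd : b ≤ d := hy.symm.le_of_pow_dvd_mul δ₂ (d := c)
    (by rw [mul_right_comm, ← huw, hu]; exact (dvd_mul_left _ _).mul_right w)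
  obtain ⟨c, rfl⟩ := Nat.exists_eq_add_of_le hac
  obtain ⟨d, rfl⟩ := Nat.exists_eq_add_of_le hbd
  refine ⟨δ₁, δ₁⁻¹ * δ₂, a, b, c, d, fun hcd => hdet (by linear_combination hcd), hu, ?_⟩
  have hu0 : u ≠ 0 := hu ▸ mul_ne_zero (mul_ne_zero δ₁.ne_zero (pow_ne_zero a hy.left_ne_zero))
    (pow_ne_zero b hy.symm.left_ne_zero)
  refine mul_left_cancel₀ hu0 ?_
  rw [huw, hu, Units.val_mul]
  linear_combination (-(δ₂ : R) * y₁ ^ (a + c) * y₂ ^ (b + d)) * δ₁.mul_inv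

end IsMonomialPair

end MonomialPairs

section QuadraticTransforms

variable {F : Type} [Field F]

/-- `u` and `v` generate the ideal of non-units of the local ring `A ⊆ F`, stated for elements of
`F` as in `IsNonunitIn`. -/
structure GeneratesMaximalIdeal (A : Subring F) (u v : F) : Prop where
  left : IsNonunitIn A u
  right : IsNonunitIn A v
  exists_eq (z : F) : IsNonunitIn A z → ∃ g ∈ A, ∃ h ∈ A, z = g * u + h * v

theorem GeneratesMaximalIdeal.symm {A : Subring F} {u v : F} (h : GeneratesMaximalIdeal A u v) :
    GeneratesMaximalIdeal A v u := by
  refine ⟨h.right, h.left, fun z hz => ?_⟩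
  obtain ⟨a, ha, b, hb, rfl⟩ := h.exists_eq z hz
  exact ⟨b, hb, a, ha, add_comm _ _⟩

/-- Some generators of the maximal ideal of `A` are monomials in the parameters `y₁, y₂` of `S`, up
to units, with an invertible matrix of exponents. -/
def HasMonomialParams (A S : Subring F) (y₁ y₂ : S) : Prop :=
  ∃ u v : S, GeneratesMaximalIdeal A (u : F) v ∧ IsMonomialPair y₁ y₂ u v

variable {k : Type} [Field k] [Algebra k F] {c : k} {σ σ' τ z u w : F}

section Chart

theorem isTranscendenceBasis_of_eq_mul_add (h : IsTranscendenceBasis k ![σ, τ])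
    (hσ : σ = τ * (σ' + algebraMap k F c)) : IsTranscendenceBasis k ![σ', τ] := by
  refine isTranscendenceBasis_pair_of_mem_adjoin h ?_ (Algebra.subset_adjoin (by simp))
  rw [hσ, Set.pair_comm]
  simpa only [pow_one] using pow_mul_add_mem_adjoin 1 c

theorem dominates_pairLocalization_mul_add (h : AlgebraicIndependent k ![σ', τ])
    (hσ : σ = τ * (σ' + algebraMap k F c)) :
    Dominates (pairLocalization k σ' τ) (pairLocalization k σ τ) := by
  have := isLocalRing_pairLocalization h
  have hk := algebraMap_mem_pairLocalization (k := k) σ' τ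
  exact dominates_pairLocalization hk (hσ ▸ (isNonunitIn_right h).mul_right
    (add_mem (left_mem_pairLocalization _ _) (hk c))) (isNonunitIn_right h)

theorem IsNonunitIn.div_mem_pairLocalization (h : IsTranscendenceBasis k ![σ, τ])
    (hσ : σ = τ * (σ' + algebraMap k F c)) (hz : IsNonunitIn (pairLocalization k σ τ) z) :
    z / τ ∈ pairLocalization k σ' τ := by
  have hle := (dominates_pairLocalization_mul_add (isTranscendenceBasis_of_eq_mul_add h hσ).1 hσ).le
  obtain ⟨e, he, f, hf, rfl⟩ := hz.exists_eq_mul_add_mul h.1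
  have hτ : τ ≠ 0 := h.1.ne_zero 1
  have hdiv : (e * σ + f * τ) / τ = e * (σ' + algebraMap k F c) + f := by
    rw [hσ]
    field_simp
  exact hdiv ▸ add_mem (mul_mem (hle he) (add_mem (left_mem_pairLocalization _ _)
    (algebraMap_mem_pairLocalization _ _ c))) (hle hf)

theorem exists_eq_algebraMap_add_mul (h : IsTranscendenceBasis k ![σ, τ])
    (hσ : σ = τ * (σ' + algebraMap k F c)) (hz : z ∈ pairLocalization k σ τ) :
    ∃ c₀ : k, ∃ t ∈ pairLocalization k σ' τ, z = algebraMap k F c₀ + t * τ := by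
  have hle := (dominates_pairLocalization_mul_add (isTranscendenceBasis_of_eq_mul_add h hσ).1 hσ).le
  obtain ⟨c₀, a, ha, b, hb, rfl⟩ := exists_eq_algebraMap_add h.1 hz
  refine ⟨c₀, a * (σ' + algebraMap k F c) + b, add_mem (mul_mem (hle ha) (add_mem
    (left_mem_pairLocalization _ _) (algebraMap_mem_pairLocalization _ _ c))) (hle hb), ?_⟩
  rw [hσ]
  ring

theorem GeneratesMaximalIdeal.exists_div_eq (h : IsTranscendenceBasis k ![σ, τ])
    (hσ : σ = τ * (σ' + algebraMap k F c))
    (hA : GeneratesMaximalIdeal (pairLocalization k σ τ) u (u * w))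
    (hu : u / τ ∈ pairLocalization k σ' τ)
    (hz : IsNonunitIn (pairLocalization k σ τ) z) :
    ∃ c₀ : k, ∃ P ∈ pairLocalization k σ' τ, ∃ Q ∈ pairLocalization k σ' τ,
      z / τ = algebraMap k F c₀ * (u / τ) + P * u + Q * w := by
  have hle := (dominates_pairLocalization_mul_add (isTranscendenceBasis_of_eq_mul_add h hσ).1 hσ).le
  have hτ : τ ≠ 0 := h.1.ne_zero 1
  obtain ⟨g, hg, q, hq, rfl⟩ := hA.exists_eq z hz
  obtain ⟨c₀, t, ht, rfl⟩ := exists_eq_algebraMap_add_mul h hσ hg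
  exact ⟨c₀, t, ht, q * (u / τ), mul_mem (hle hq) hu, by field_simp⟩

/-- Modulo `(u, w)` the first parameter `σ'` of the chart is a constant, because both `σ / τ` and
`1 = τ / τ` are constant multiples of the unit `u / τ`; a constant non-unit is zero. -/
theorem GeneratesMaximalIdeal.exists_left_eq (h : IsTranscendenceBasis k ![σ, τ])
    (hσ : σ = τ * (σ' + algebraMap k F c))
    (hA : GeneratesMaximalIdeal (pairLocalization k σ τ) u (u * w))
    (hu : u / τ ∈ pairLocalization k σ' τ) (hw : IsNonunitIn (pairLocalization k σ' τ) w) :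
    ∃ P ∈ pairLocalization k σ' τ, ∃ Q ∈ pairLocalization k σ' τ, σ' = P * u + Q * w := by
  have h' := (isTranscendenceBasis_of_eq_mul_add h hσ).1
  have hk := algebraMap_mem_pairLocalization (k := k) σ' τ
  have := isLocalRing_pairLocalization h'
  have hτ : τ ≠ 0 := h.1.ne_zero 1
  have hu' := (dominates_pairLocalization_mul_add h' hσ).isNonunitIn hA.left
  have hcomb {P Q : F} (hP : P ∈ pairLocalization k σ' τ) (hQ : Q ∈ pairLocalization k σ' τ) :
      IsNonunitIn (pairLocalization k σ' τ) (P * u + Q * w) :=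
    (hu'.mul_left hP).add (hw.mul_left hQ)
  obtain ⟨c₁, P₁, hP₁, Q₁, hQ₁, h₁⟩ := hA.exists_div_eq h hσ hu (isNonunitIn_left h.1)
  obtain ⟨c₂, P₂, hP₂, Q₂, hQ₂, h₂⟩ := hA.exists_div_eq h hσ hu (isNonunitIn_right h.1)
  rw [hσ, mul_div_cancel_left₀ _ hτ] at h₁
  rw [div_self hτ] at h₂
  have hc₂ : c₂ ≠ 0 := by
    rintro rfl
    rw [map_zero, zero_mul, zero_add] at h₂
    exact (hcomb hP₂ hQ₂).not_isUnitIn (h₂ ▸ .one _)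
  have hP := sub_mem hP₁ (mul_mem (hk (c₁ / c₂)) hP₂)
  have hQ := sub_mem hQ₁ (mul_mem (hk (c₁ / c₂)) hQ₂)
  have hconst : σ' + algebraMap k F (c - c₁ / c₂) = (P₁ - algebraMap k F (c₁ / c₂) * P₂) * u +
      (Q₁ - algebraMap k F (c₁ / c₂) * Q₂) * w := by
    have : algebraMap k F (c₁ / c₂) * algebraMap k F c₂ = algebraMap k F c₁ := by
      rw [← map_mul, div_mul_cancel₀ _ hc₂]
    rw [map_sub]
    linear_combination h₁ - algebraMap k F (c₁ / c₂) * h₂ - u / τ * this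
  have hc : c - c₁ / c₂ = 0 := by
    by_contra hc
    exact (hconst ▸ hcomb hP hQ).not_isUnitIn
      (add_comm σ' _ ▸ (isNonunitIn_left h').isUnitIn_add (isUnitIn_algebraMap hk hc))
  exact ⟨_, hP, _, hQ, by rw [← hconst, hc, map_zero, add_zero]⟩

theorem GeneratesMaximalIdeal.quadratic (h : IsTranscendenceBasis k ![σ, τ])
    (hσ : σ = τ * (σ' + algebraMap k F c))
    (hA : GeneratesMaximalIdeal (pairLocalization k σ τ) u (u * w))
    (hu : IsUnitIn (pairLocalization k σ' τ) (u / τ))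
    (hw : IsNonunitIn (pairLocalization k σ' τ) w) :
    GeneratesMaximalIdeal (pairLocalization k σ' τ) u w := by
  have h' := (isTranscendenceBasis_of_eq_mul_add h hσ).1
  refine ⟨(dominates_pairLocalization_mul_add h' hσ).isNonunitIn hA.left, hw, fun z hz => ?_⟩
  obtain ⟨P, hP, Q, hQ, hPQ⟩ := hA.exists_left_eq h hσ hu.mem hw
  obtain ⟨e, he, f, hf, rfl⟩ := hz.exists_eq_mul_add_mul h'
  have hτ : τ = (u / τ)⁻¹ * u := by
    rw [inv_div, div_mul_cancel₀ _ (div_ne_zero_iff.1 hu.ne_zero).1]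
  refine ⟨e * P + f * (u / τ)⁻¹, add_mem (mul_mem he hP) (mul_mem hf hu.inv_mem), e * Q,
    mul_mem he hQ, ?_⟩
  linear_combination e * hPQ + f * hτ

end Chart

section Monomial

variable {S : Subring F} [IsLocalRing S] [IsNoetherianRing S] {y₁ y₂ : S}

theorem GeneratesMaximalIdeal.hasMonomialParams_quadratic (hy : IsParameterPair y₁ y₂)
    (h : IsTranscendenceBasis k ![σ, τ]) (hσ : σ = τ * (σ' + algebraMap k F c))
    (hS : Dominates S (pairLocalization k σ' τ)) {u v : S}
    (hA : GeneratesMaximalIdeal (pairLocalization k σ τ) (u : F) v)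
    (hmon : IsMonomialPair y₁ y₂ u v) (hu : IsUnitIn (pairLocalization k σ' τ) (u / τ)) :
    HasMonomialParams (pairLocalization k σ' τ) S y₁ y₂ := by
  obtain ⟨hu0, hτ⟩ := div_ne_zero_iff.1 hu.ne_zero
  have hw : (v / u : F) ∈ pairLocalization k σ' τ := by
    have := mul_mem (hA.right.div_mem_pairLocalization h hσ) hu.inv_mem
    rwa [inv_div, div_mul_div_cancel₀ hτ] at this
  let w : S := ⟨v / u, hS.le hw⟩
  have hvw : v = u * w := Subtype.ext (mul_div_cancel₀ _ hu0).symm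
  rw [hvw] at hA hmon
  have hmon' := hmon.of_mul_right hy
  have hwS : IsNonunitIn S w := (isNonunitIn_iff_mem_maximalIdeal w.2).2
    (hmon'.right_mem hy.left_mem hy.symm.left_mem)
  exact ⟨u, w, hA.quadratic h hσ hu (.of_le hS.le hw hwS), hmon'⟩

theorem HasMonomialParams.quadratic (hy : IsParameterPair y₁ y₂)
    (h : IsTranscendenceBasis k ![σ, τ]) (hσ : σ = τ * (σ' + algebraMap k F c))
    (hS : Dominates S (pairLocalization k σ' τ))
    (hm : HasMonomialParams (pairLocalization k σ τ) S y₁ y₂) :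
    HasMonomialParams (pairLocalization k σ' τ) S y₁ y₂ := by
  have h' := (isTranscendenceBasis_of_eq_mul_add h hσ).1
  have := isLocalRing_pairLocalization h'
  have hle := (dominates_pairLocalization_mul_add h' hσ).le
  obtain ⟨u, v, hA, hmon⟩ := hm
  have hu := hA.left.div_mem_pairLocalization h hσ
  have hv := hA.right.div_mem_pairLocalization h hσ
  by_cases hu' : IsUnitIn (pairLocalization k σ' τ) (u / τ)
  · exact hA.hasMonomialParams_quadratic hy h hσ hS hmon hu'
  refine hA.symm.hasMonomialParams_quadratic hy h hσ hS hmon.symm (by_contra fun hv' => ?_)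
  obtain ⟨g, hg, g', hg', hgg⟩ := hA.exists_eq τ (isNonunitIn_right h.1)
  have hτ : τ ≠ 0 := h.1.ne_zero 1
  have hone : g * (u / τ) + g' * (v / τ) = 1 := by
    rw [mul_div_assoc', mul_div_assoc', ← add_div, ← hgg, div_self hτ]
  have hnon := IsNonunitIn.add (.mul_left ⟨hu, hu'⟩ (hle hg)) (.mul_left ⟨hv, hv'⟩ (hle hg'))
  exact hnon.not_isUnitIn (hone ▸ .one _)

end Monomial

end QuadraticTransforms

section Iterate

variable {F : Type} [Field F] {k : Type} [Field k] [Algebra k F] {p : ℕ} {b : ℕ → k} {w : ℕ → F}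
  {S : Subring F} [IsLocalRing S] [IsNoetherianRing S] {y₁ y₂ : S} {i l m : ℕ}

namespace IsBlowUpSequence

theorem hasMonomialParams_succ (h : IsBlowUpSequence p b w) (hy : IsParameterPair y₁ y₂)
    (hk : ∀ c : k, algebraMap k F c ∈ S) (hw : IsNonunitIn S (w (i + 1)))
    (hw' : IsNonunitIn S (w (i + 2))) (hm : m < p)
    (hmon : HasMonomialParams (pairLocalization k (w i / w (i + 1) ^ m) (w (i + 1))) S y₁ y₂) :
    HasMonomialParams (pairLocalization k (w (i + 1)) (w (i + 2))) S y₁ y₂ := by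
  obtain ⟨n, hn⟩ : ∃ n, m + n + 1 = p := ⟨p - (m + 1), by lia⟩
  induction n generalizing m with
  | zero =>
    rw [pairLocalization_swap (h.isTranscendenceBasis (i + 1)).1]
    refine hmon.quadratic hy (c := b i) (h.isTranscendenceBasis_div i m) ?_
      (dominates_pairLocalization hk hw' hw)
    rw [h.div_pow_eq i hm.le, ← hn, add_zero, Nat.add_sub_cancel_left, pow_one]
  | succ n ih =>
    have hm' : m + 1 < p := by lia
    refine ih hm' (hmon.quadratic hy (c := 0) (h.isTranscendenceBasis_div i m) ?_
      (dominates_pairLocalization hk (h.isNonunitIn_div_pow hk hw hw'.mem hm') hw)) (by lia)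
    rw [map_zero, add_zero, pow_succ, ← div_div, mul_div_cancel₀ _ (h.ne_zero (i + 1))]

theorem hasMonomialParams_of_le (h : IsBlowUpSequence p b w) (hp : 0 < p)
    (hy : IsParameterPair y₁ y₂) (hk : ∀ c : k, algebraMap k F c ∈ S)
    (hw : ∀ j ≤ l + 1, IsNonunitIn S (w j)) (hil : i ≤ l)
    (hmon : HasMonomialParams (pairLocalization k (w i) (w (i + 1))) S y₁ y₂) :
    HasMonomialParams (pairLocalization k (w l) (w (l + 1))) S y₁ y₂ := by
  induction l, hil using Nat.le_induction with
  | base => exact hmon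
  | succ l _ ih =>
    refine h.hasMonomialParams_succ hy hk (m := 0) (hw _ (by lia)) (hw _ (by lia)) hp ?_
    rw [pow_zero, div_one]
    exact ih fun j hj => hw j (by lia)

end IsBlowUpSequence

end Iterate

section RationalFunctions

section IsFractionRing

variable (k : Type*) [Field k] (ι : Type*) (K : Type*) [Field K] [Algebra k K]
  [Algebra (MvPolynomial ι k) K] [IsScalarTower k (MvPolynomial ι k) K]
  [IsFractionRing (MvPolynomial ι k) K]

theorem isTranscendenceBasis_algebraMap_X :
    IsTranscendenceBasis k fun i : ι => algebraMap (MvPolynomial ι k) K (X i) := by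
  have := IsLocalization.isAlgebraic (S := K) (nonZeroDivisors (MvPolynomial ι k))
  exact (IsTranscendenceBasis.mvPolynomial ι k).algebraMap_comp

theorem adjoin_range_algebraMap_X :
    IntermediateField.adjoin k (Set.range fun i : ι => algebraMap (MvPolynomial ι k) K (X i)) =
      ⊤ := by
  have hrange : (IsScalarTower.toAlgHom k (MvPolynomial ι k) K).range =
      Algebra.adjoin k (Set.range fun i : ι => algebraMap (MvPolynomial ι k) K (X i)) := by
    rw [← Algebra.map_top, ← adjoin_range_X, AlgHom.map_adjoin, ← Set.range_comp]
    rfl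
  rw [← IsFractionRing.algHom_fieldRange_eq_of_comp_eq_of_range_eq (K := K)
    (f := AlgHom.id k K) rfl hrange]
  exact AlgHom.fieldRange_eq_top.2 Function.surjective_id

theorem exists_derivation_algebraMap_X_eq (z : ι → K) :
    ∃ D : Derivation k K K, ∀ i, D (algebraMap (MvPolynomial ι k) K (X i)) = z i := by
  obtain ⟨D, hD⟩ := exists_derivation_algebraMap_eq (nonZeroDivisors (MvPolynomial ι k))
    (mkDerivation k z)
  exact ⟨D, fun i => by rw [hD, mkDerivation_X]⟩

end IsFractionRing

theorem localSubring_algebraMap (k F : Type) [Field k] [Field F] [Algebra k F]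
    [Algebra (MvPolynomial (Fin 2) k) F] [IsScalarTower k (MvPolynomial (Fin 2) k) F] :
    localSubring (algebraMap (MvPolynomial (Fin 2) k) F) =
      pairLocalization k (algebraMap (MvPolynomial (Fin 2) k) F (X 0))
        (algebraMap (MvPolynomial (Fin 2) k) F (X 1)) := by
  have h : aeval ![algebraMap (MvPolynomial (Fin 2) k) F (X 0),
      algebraMap (MvPolynomial (Fin 2) k) F (X 1)] =
      IsScalarTower.toAlgHom k (MvPolynomial (Fin 2) k) F :=
    algHom_ext fun i => by fin_cases i <;> simp
  rw [pairLocalization, h]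
  rfl

theorem exists_jacobianBracket_eq_one {k F : Type} [Field k] [Field F] [Algebra k F]
    [Algebra (MvPolynomial (Fin 2) k) F] [IsScalarTower k (MvPolynomial (Fin 2) k) F]
    [IsFractionRing (MvPolynomial (Fin 2) k) F] :
    ∃ D₀ D₁ : Derivation k F F,
      jacobianBracket D₀ D₁ (algebraMap (MvPolynomial (Fin 2) k) F (X 0))
        (algebraMap (MvPolynomial (Fin 2) k) F (X 1)) = 1 := by
  obtain ⟨D₀, h₀⟩ := exists_derivation_algebraMap_X_eq k (Fin 2) F ![1, 0]
  obtain ⟨D₁, h₁⟩ := exists_derivation_algebraMap_X_eq k (Fin 2) F ![0, 1]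
  exact ⟨D₀, D₁, by simp [jacobianBracket, h₀, h₁]⟩

theorem isTranscendenceBasis_pow_mul_one_add_pow_add {k F : Type} [Field k] [Field F]
    [Algebra k F] {p : ℕ} [Fact p.Prime] [CharP k p] {x y : F}
    (h : IsTranscendenceBasis k ![x, y]) :
    IsTranscendenceBasis k ![x ^ p * (1 + y), y ^ p + x] := by
  have : CharP F p := charP_of_injective_algebraMap (algebraMap k F).injective p
  let R := Algebra.adjoin k (Set.range ![x ^ p * (1 + y), y ^ p + x])
  let u : R := ⟨x ^ p * (1 + y), Algebra.subset_adjoin ⟨0, rfl⟩⟩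
  let v : R := ⟨y ^ p + x, Algebra.subset_adjoin ⟨1, rfl⟩⟩
  have hu' : algebraMap R F u = x ^ p * (1 + y) := rfl
  have hv' : algebraMap R F v = y ^ p + x := rfl
  have hu : u ≠ 0 := fun hu => by
    have := isLocalRing_pairLocalization h.1
    exact mul_ne_zero (pow_ne_zero p (h.1.ne_zero 0))
      ((isNonunitIn_right h.1).isUnitIn_add (.one _)).ne_zero (congrArg Subtype.val hu)
  -- `y` is a root of `(v ^ p - T ^ (p * p)) * (1 + T) - u`, as `x ^ p = v ^ p - y ^ (p * p)`
  have hy : IsAlgebraic R y := by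
    refine ⟨(Polynomial.C (v ^ p) - Polynomial.X ^ (p * p)) * (1 + Polynomial.X) - Polynomial.C u,
      fun h0 => hu ?_, ?_⟩
    · simpa using congrArg (Polynomial.eval (-1)) h0
    · simp only [map_add, map_mul, map_sub, map_pow, Polynomial.aeval_X, Polynomial.aeval_C,
        map_one, hu', hv', add_pow_char, ← pow_mul, add_sub_cancel_left, sub_self]
  have hx : IsAlgebraic R x := by
    have hvy := (isAlgebraic_algebraMap (A := F) v).sub (hy.pow p)
    rwa [hv', add_sub_cancel_left] at hvy
  exact isTranscendenceBasis_of_forall_isAlgebraic h (Fin.forall_fin_two.2 ⟨hx, hy⟩)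

end RationalFunctions

section MonomialContradiction

section LocalRing

open IsLocalRing

variable {R : Type*} [CommRing R] [IsLocalRing R] {ξ y z w u v u' v' α β γ τ Ω : R} {m p : ℕ}

namespace IsParameterPair

theorem exists_mul_add_mul_eq (h : IsParameterPair ξ y) (hp : 1 < p) (hm : m ≤ p)
    (hβ : IsUnit β) (hΩ : IsUnit Ω) (α γ τ : R) : ∃ ω, IsUnit ω ∧
      α * (ξ ^ p * y ^ (m * p) * γ) + β * (τ * y ^ p + Ω * (ξ * y ^ m)) =
        y ^ m * (ω * ξ + β * τ * y ^ (p - m)) := by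
  have hnon : α * γ * y ^ (m * (p - 1)) * ξ ^ (p - 1) ∈ nonunits R := (mem_maximalIdeal _).1
    (Ideal.mul_mem_left _ _ (Ideal.pow_mem_of_mem _ h.left_mem _ (Nat.sub_pos_of_lt hp)))
  refine ⟨β * Ω + α * γ * y ^ (m * (p - 1)) * ξ ^ (p - 1), ?_, ?_⟩
  · by_contra hω
    exact (mem_maximalIdeal _).1 ((add_mem_cancel_right hnon).1 hω) (hβ.mul hΩ)
  · obtain ⟨n, rfl⟩ := Nat.exists_eq_add_of_lt hp
    obtain ⟨d, hd⟩ := Nat.exists_eq_add_of_le hm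
    rw [hd, Nat.add_sub_cancel_left, ← hd, Nat.add_sub_cancel, pow_succ ξ, Nat.mul_succ]
    rw [show y ^ (1 + n + 1) = y ^ m * y ^ d by rw [hd, pow_add]]
    ring

variable [IsNoetherianRing R]

theorem not_pow_add_mul_dvd (h : IsParameterPair ξ y) (hp : 1 < p) (hm : m < p) (hτ : IsUnit τ)
    (hΩ : IsUnit Ω) (hγ : IsUnit γ) (hu : u = ξ ^ p * y ^ (m * p) * γ)
    (hv : v = τ * y ^ p + Ω * (ξ * y ^ m)) : ¬ v ∣ u := by
  obtain ⟨ω, hω, hωv⟩ := h.exists_mul_add_mul_eq hp hm.le isUnit_one hΩ 0 γ τ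
  rw [zero_mul, zero_add, one_mul, one_mul, ← hv] at hωv
  intro hdvd
  refine h.not_dvd_pow_mul_pow hτ hω (Nat.sub_ne_zero_of_lt hm) p (m * p) (hγ.dvd_mul_right.1 ?_)
  exact hu ▸ (hωv ▸ dvd_mul_left _ _ : _ ∣ v).trans hdvd

variable [IsDomain R]

theorem exists_prime_pow_dvd (h : IsParameterPair ξ y) (hp : 1 < p) (hm : m < p) (hτ : IsUnit τ)
    (hΩ : IsUnit Ω) (hγ : IsUnit γ) (hu : u = ξ ^ p * y ^ (m * p) * γ)
    (hv : v = τ * y ^ p + Ω * (ξ * y ^ m)) (hzw : IsParameterPair z w)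
    (hmon : IsMonomialPair z w u' v') (hβ : IsUnit β) (hu' : u' = α * u + β * v)
    (hv' : v' ∈ Ideal.span {u, v}) (huv' : u ∈ Ideal.span {u', v'}) :
    ∃ q, Prime q ∧ q ^ (p * p) ∣ v' := by
  obtain ⟨ω, hω, hζ⟩ := h.exists_mul_add_mul_eq hp hm.le hβ hΩ α γ τ
  rw [← hu, ← hv, ← hu'] at hζ
  have hζdvd : ω * ξ + β * τ * y ^ (p - m) ∣ u' := hζ ▸ dvd_mul_left _ _
  have hn : p - m ≠ 0 := Nat.sub_ne_zero_of_lt hm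
  have hv'' : v' ∈ Ideal.span {ω * ξ + β * τ * y ^ (p - m), u} := by
    obtain ⟨c, d, hcd⟩ := Ideal.mem_span_pair.1 hv'
    obtain ⟨β, rfl⟩ := hβ
    refine Ideal.mem_span_pair.2 ⟨d * ↑β⁻¹ * y ^ m, c - d * ↑β⁻¹ * α, ?_⟩
    linear_combination hcd - d * ↑β⁻¹ * hζ + d * ↑β⁻¹ * hu' + d * v * β.inv_mul
  have huv'' : u ∈ Ideal.span {ω * ξ + β * τ * y ^ (p - m), v'} := by
    obtain ⟨e, f, hef⟩ := Ideal.mem_span_pair.1 huv'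
    exact Ideal.mem_span_pair.2 ⟨e * y ^ m, f, by rw [← hef, hζ]; ring⟩
  have hexp : (p - m) * p + m * p = p * p := by rw [← add_mul, Nat.sub_add_cancel hm.le]
  have hζprime := (h.mul_add_mul_pow (β * τ) hω hn).prime_left
  obtain ⟨δ₁, δ₂, a, b, c, d, -, hu'mon, hv'mon⟩ := hmon
  rw [hu'mon, mul_assoc (δ₁ : R), δ₁.dvd_mul_left] at hζdvd
  rcases hζprime.dvd_or_dvd hζdvd with hz | hw
  · refine ⟨w, hzw.symm.prime_left, hexp ▸ ?_⟩
    exact h.pow_dvd_of_dvd_left (hβ.mul hτ) hω hn hzw (hζprime.dvd_of_dvd_pow hz) hγ δ₂.isUnit hu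
      hv'mon huv'' hv''
  · refine ⟨z, hzw.prime_left, hexp ▸ ?_⟩
    exact h.pow_dvd_of_dvd_left (hβ.mul hτ) hω hn hzw.symm (hζprime.dvd_of_dvd_pow hw) hγ
      δ₂.isUnit hu (hv'mon.trans (mul_right_comm _ _ _)) huv'' hv''

end IsParameterPair

end LocalRing

section PairLocalization

variable {F : Type} [Field F] {k : Type} [Field k] [Algebra k F] {s t u v u' v' ξ y : F} {p m : ℕ}

theorem div_notMem_pairLocalization (h : AlgebraicIndependent k ![s, t]) :
    t / s ∉ pairLocalization k s t := by
  intro hmem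
  obtain ⟨f, g, hg, hfg⟩ := mem_pairLocalization.1 hmem
  have hXf : X 1 * g = X 0 * f := h (by
    have hs : s ≠ 0 := h.ne_zero 0
    simp only [map_mul, aeval_X, ← hfg, Matrix.cons_val_zero, Matrix.cons_val_one]
    field_simp)
  rcases (X_prime (i := (0 : Fin 2))).dvd_or_dvd (⟨f, hXf⟩ : X 0 ∣ X 1 * g) with hX | ⟨g', rfl⟩
  · exact absurd (X_dvd_X.1 hX) (by decide)
  · exact hg (by rw [map_mul, constantCoeff_X, zero_mul])

theorem GeneratesMaximalIdeal.exists_isUnitIn (h : AlgebraicIndependent k ![u, v])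
    (hA : GeneratesMaximalIdeal (pairLocalization k u v) u' v') :
    ∃ α ∈ pairLocalization k u v, ∃ β, IsUnitIn (pairLocalization k u v) β ∧
      (u' = α * u + β * v ∨ v' = α * u + β * v) := by
  have := isLocalRing_pairLocalization h
  obtain ⟨α, hα, β, hβ, hu'⟩ := hA.left.exists_eq_mul_add_mul h
  obtain ⟨α', hα', β', hβ', hv'⟩ := hA.right.exists_eq_mul_add_mul h
  by_contra! hcon
  have hβnon : IsNonunitIn (pairLocalization k u v) β :=
    ⟨hβ, fun hβu => (hcon α hα β hβu).1 hu'⟩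
  have hβnon' : IsNonunitIn (pairLocalization k u v) β' :=
    ⟨hβ', fun hβu => (hcon α' hα' β' hβu).2 hv'⟩
  obtain ⟨e, he, f, hf, hv⟩ := hA.exists_eq v (isNonunitIn_right h)
  have hunit := ((hβnon.mul_left he).add (hβnon'.mul_left hf)).neg.isUnitIn_add (.one _)
  have hvu : v / u = (e * α + f * α') * (1 + -(e * β + f * β'))⁻¹ := by
    have hu0 : u ≠ 0 := h.ne_zero 0
    rw [div_eq_iff hu0, mul_right_comm, eq_mul_inv_iff_mul_eq₀ hunit.ne_zero]
    linear_combination hv + e * hu' + f * hv'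
  exact div_notMem_pairLocalization h
    (hvu ▸ mul_mem (add_mem (mul_mem he hα) (mul_mem hf hα')) hunit.inv_mem)

theorem isParameterPair_pairLocalization (h : AlgebraicIndependent k ![s, t])
    [IsLocalRing (pairLocalization k s t)] (hdim : ringKrullDim (pairLocalization k s t) = 2) :
    IsParameterPair (⟨s, left_mem_pairLocalization s t⟩ : pairLocalization k s t)
      ⟨t, right_mem_pairLocalization s t⟩ := by
  refine ⟨hdim, le_antisymm (fun z hz => ?_) (Ideal.span_le.2 (Set.pair_subset
    ((isNonunitIn_iff_mem_maximalIdeal _).1 (isNonunitIn_left h))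
    ((isNonunitIn_iff_mem_maximalIdeal _).1 (isNonunitIn_right h))))⟩
  obtain ⟨a, ha, b, hb, hab⟩ :=
    ((isNonunitIn_iff_mem_maximalIdeal z.2).2 hz).exists_eq_mul_add_mul h
  exact Ideal.mem_span_pair.2 ⟨⟨a, ha⟩, ⟨b, hb⟩, Subtype.ext hab.symm⟩

theorem IsStableForm.exists_isUnit {S : Subring F} [IsLocalRing S]
    (hk : ∀ c : k, algebraMap k F c ∈ S) {ξ y u v : S}
    (h : IsStableForm k p S ((ξ * y ^ m : S) : F) y u v)
    (hξ : ξ ∈ IsLocalRing.maximalIdeal S) (hy : y ∈ IsLocalRing.maximalIdeal S) :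
    ∃ γ τ Ω : S, IsUnit γ ∧ IsUnit τ ∧ IsUnit Ω ∧ u = ξ ^ p * y ^ (m * p) * γ ∧
      v = τ * y ^ p + Ω * (ξ * y ^ m) := by
  have hx := (isNonunitIn_iff_mem_maximalIdeal (ξ * y ^ m).2).2 (Ideal.mul_mem_right _ _ hξ)
  obtain ⟨γ, hγ, hu⟩ := h.exists_eq_pow_mul_isUnitIn hk hx
    ((isNonunitIn_iff_mem_maximalIdeal y.2).2 hy)
  obtain ⟨τ, hτ, Ω, hΩ, hv⟩ := h.exists_eq_mul_pow_add
  refine ⟨⟨γ, hγ.mem⟩, ⟨τ, hτ.mem⟩, ⟨Ω, hΩ.mem⟩, (isUnit_mk_iff _).2 hγ, (isUnit_mk_iff _).2 hτ,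
    (isUnit_mk_iff _).2 hΩ, ?_, Subtype.ext hv⟩
  rw [pow_mul, ← mul_pow]
  exact Subtype.ext hu

theorem jacobianBracket_mul_pow_left (D₀ D₁ : Derivation k F F) (f g : F) (n : ℕ) :
    jacobianBracket D₀ D₁ (f * g ^ n) g = g ^ n * jacobianBracket D₀ D₁ f g := by
  simp only [jacobianBracket, Derivation.leibniz, Derivation.leibniz_pow, smul_eq_mul,
    nsmul_eq_mul]
  ring

theorem dominates_pairLocalization_mul_pow (hξ : AlgebraicIndependent k ![ξ, y]) (m : ℕ) :
    Dominates (pairLocalization k ξ y) (pairLocalization k (ξ * y ^ m) y) :=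
  have := isLocalRing_pairLocalization hξ
  dominates_pairLocalization (algebraMap_mem_pairLocalization ξ y)
    ((isNonunitIn_left hξ).mul_right (pow_mem (right_mem_pairLocalization ξ y) m))
    (isNonunitIn_right hξ)

namespace IsStableForm

variable [Fact p.Prime]

theorem dominates (hξ : AlgebraicIndependent k ![ξ, y])
    (h : IsStableForm k p (pairLocalization k ξ y) (ξ * y ^ m) y u v) :
    Dominates (pairLocalization k ξ y) (pairLocalization k u v) := by
  have := isLocalRing_pairLocalization hξ
  have hk := algebraMap_mem_pairLocalization (k := k) ξ y
  have hp := (Fact.out : p.Prime).ne_zero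
  have hx := (isNonunitIn_left hξ).mul_right (pow_mem (right_mem_pairLocalization ξ y) m)
  have hy := isNonunitIn_right hξ
  exact dominates_pairLocalization hk (h.isNonunitIn_fst hk hp hx hy) (h.isNonunitIn_snd hp hx hy)

/-- The Jacobian bracket of `u` and `v` is computed twice: from the stable form, and from `u'` and
`v' = (q ^ p) ^ p * r`, where `(q ^ p) ^ p` is a constant for both derivations. -/
theorem pow_dvd_pow_mul_pow [CharP k p] {D₀ D₁ : Derivation k F F}
    (hJ : jacobianBracket D₀ D₁ ξ y ≠ 0) (hξ : AlgebraicIndependent k ![ξ, y])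
    (hxy : AlgebraicIndependent k ![ξ * y ^ m, y]) (huv : AlgebraicIndependent k ![u, v])
    (h : IsStableForm k p (pairLocalization k (ξ * y ^ m) y) (ξ * y ^ m) y u v)
    {u' v' q : pairLocalization k ξ y}
    (hA : GeneratesMaximalIdeal (pairLocalization k u v) (u' : F) v') (hq : q ^ (p * p) ∣ v') :
    q ^ (p * p) ∣ (⟨ξ, left_mem_pairLocalization ξ y⟩ : pairLocalization k ξ y) ^ p *
      ⟨y, right_mem_pairLocalization ξ y⟩ ^ (m * p + m) := by
  have hle := (dominates_pairLocalization_mul_pow hξ m).le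
  have hle' := ((h.mono hle).dominates hξ).le
  obtain ⟨r, hr⟩ := hq
  have hv' : (v' : F) = ((q : F) ^ p) ^ p * r := by rw [hr, ← pow_mul]; rfl
  obtain ⟨ε, hε, hbracket⟩ := h.exists_jacobianBracket_eq D₀ D₁ hxy
  obtain ⟨e, he, f, hf, hu⟩ := hA.exists_eq u (isNonunitIn_left huv)
  obtain ⟨e', he', f', hf', hv⟩ := hA.exists_eq v (isNonunitIn_right huv)
  obtain ⟨ω, hω, E, hE, hbracket'⟩ := exists_isUnitIn_mul_jacobianBracket D₀ D₁ huv hA.left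
    hA.right he hf he' hf' hu hv
  obtain ⟨c, hc, hbracket''⟩ := exists_jacobianBracket_eq_mul D₀ D₁ hξ u'.2 r.2
  have hpow : jacobianBracket D₀ D₁ u' v' =
      ((q : F) ^ p) ^ p * (c * jacobianBracket D₀ D₁ ξ y) := by
    rw [← hbracket'', hv']
    simp only [jacobianBracket, derivation_pow_mul]
    ring
  have hωε : IsUnitIn (pairLocalization k ξ y) (ω * ε) := (hω.mono hle').mul (hε.mono hle)
  refine ⟨⟨_, mul_mem hωε.inv_mem (mul_mem (hle' hE) hc)⟩, Subtype.ext ?_⟩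
  refine mul_left_cancel₀ (mul_ne_zero hωε.ne_zero hJ) ?_
  rw [hbracket, jacobianBracket_mul_pow_left, hpow] at hbracket'
  simp only [Subring.coe_mul, Subring.coe_pow]
  linear_combination hbracket' - jacobianBracket D₀ D₁ ξ y * q ^ (p * p) * E * c *
    mul_inv_cancel₀ hωε.ne_zero

section Dominated

variable [IsLocalRing (pairLocalization k ξ y)] [IsNoetherianRing (pairLocalization k ξ y)]
  {y₁ y₂ : pairLocalization k ξ y}

theorem div_notMem (hm : m < p) (hξ : AlgebraicIndependent k ![ξ, y]) (hv : v ≠ 0)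
    (hy : IsParameterPair y₁ y₂)
    (h : IsStableForm k p (pairLocalization k ξ y) (ξ * y ^ m) y u v) :
    u / v ∉ pairLocalization k ξ y := by
  have hdom := h.dominates hξ
  have hpair := isParameterPair_pairLocalization hξ hy.ringKrullDim_eq
  obtain ⟨γ, τ, Ω, hγ, hτ, hΩ, hu, hv'⟩ := IsStableForm.exists_isUnit
    (algebraMap_mem_pairLocalization ξ y) (ξ := ⟨ξ, _⟩) (y := ⟨y, _⟩)
    (u := ⟨u, hdom.le (left_mem_pairLocalization u v)⟩)
    (v := ⟨v, hdom.le (right_mem_pairLocalization u v)⟩) h hpair.left_mem hpair.symm.left_mem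
  exact fun hmem => hpair.not_pow_add_mul_dvd (Fact.out : p.Prime).one_lt hm hτ hΩ hγ hu hv'
    ((dvd_mk_iff _ _ hv).2 hmem)

variable [CharP k p] {D₀ D₁ : Derivation k F F}

theorem not_isMonomialPair (hm : m < p) (hJ : jacobianBracket D₀ D₁ ξ y ≠ 0)
    (hξ : AlgebraicIndependent k ![ξ, y]) (hxy : AlgebraicIndependent k ![ξ * y ^ m, y])
    (huv : AlgebraicIndependent k ![u, v])
    (h : IsStableForm k p (pairLocalization k (ξ * y ^ m) y) (ξ * y ^ m) y u v)
    (hy : IsParameterPair y₁ y₂) {u' v' : pairLocalization k ξ y}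
    (hA : GeneratesMaximalIdeal (pairLocalization k u v) (u' : F) v') {α β : F}
    (hα : α ∈ pairLocalization k u v) (hβ : IsUnitIn (pairLocalization k u v) β)
    (hu' : (u' : F) = α * u + β * v) : ¬ IsMonomialPair y₁ y₂ u' v' := by
  intro hmon
  have hp : 1 < p := (Fact.out : p.Prime).one_lt
  have hform := h.mono (dominates_pairLocalization_mul_pow hξ m).le
  have hle := (hform.dominates hξ).le
  have hpair := isParameterPair_pairLocalization hξ hy.ringKrullDim_eq
  let U : pairLocalization k ξ y := ⟨u, hle (left_mem_pairLocalization u v)⟩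
  let W : pairLocalization k ξ y := ⟨v, hle (right_mem_pairLocalization u v)⟩
  obtain ⟨γ, τ, Ω, hγ, hτ, hΩ, hu, hv⟩ := IsStableForm.exists_isUnit
    (algebraMap_mem_pairLocalization ξ y) (ξ := ⟨ξ, _⟩) (y := ⟨y, _⟩) (u := U) (v := W) hform
    hpair.left_mem hpair.symm.left_mem
  obtain ⟨e, he, f, hf, hef⟩ := hA.right.exists_eq_mul_add_mul huv
  have hv' : v' ∈ Ideal.span {U, W} :=
    Ideal.mem_span_pair.2 ⟨⟨e, hle he⟩, ⟨f, hle hf⟩, Subtype.ext hef.symm⟩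
  obtain ⟨e', he', f', hf', hef'⟩ := hA.exists_eq u (isNonunitIn_left huv)
  have huv' : U ∈ Ideal.span {u', v'} :=
    Ideal.mem_span_pair.2 ⟨⟨e', hle he'⟩, ⟨f', hle hf'⟩, Subtype.ext hef'.symm⟩
  obtain ⟨q, hq, hqv'⟩ := hpair.exists_prime_pow_dvd hp hm hτ hΩ hγ hu hv hy hmon
    (α := ⟨α, hle hα⟩) (β := ⟨β, hle hβ.mem⟩) ((isUnit_mk_iff _).2 (hβ.mono hle))
    (Subtype.ext hu') hv' huv'
  exact hpair.not_pow_dvd_pow_mul_pow hq (by nlinarith) (by nlinarith)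
    (h.pow_dvd_pow_mul_pow hJ hξ hxy huv hA hqv')

theorem not_hasMonomialParams (hm : m < p) (hJ : jacobianBracket D₀ D₁ ξ y ≠ 0)
    (hξ : AlgebraicIndependent k ![ξ, y]) (hxy : AlgebraicIndependent k ![ξ * y ^ m, y])
    (huv : AlgebraicIndependent k ![u, v])
    (h : IsStableForm k p (pairLocalization k (ξ * y ^ m) y) (ξ * y ^ m) y u v)
    (hy : IsParameterPair y₁ y₂) :
    ¬ HasMonomialParams (pairLocalization k u v) (pairLocalization k ξ y) y₁ y₂ := by
  rintro ⟨u', v', hA, hmon⟩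
  obtain ⟨α, hα, β, hβ, hu' | hv'⟩ := hA.exists_isUnitIn huv
  · exact h.not_isMonomialPair hm hJ hξ hxy huv hy hA hα hβ hu' hmon
  · exact h.not_isMonomialPair hm hJ hξ hxy huv hy hA.symm hα hβ hv' hmon.symm

end Dominated

end IsStableForm

end PairLocalization

end MonomialContradiction

section StableSequences

variable {F : Type} [Field F] {k : Type} [Field k] [Algebra k F] {p : ℕ} {a b : ℕ → k}
  {s w : ℕ → F} {i j l m q : ℕ}

namespace IsBlowUpSequence

theorem dominates_of_le (h : IsBlowUpSequence p a s) (hp : p ≠ 0) (hil : i ≤ l) :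
    Dominates (pairLocalization k (s l) (s (l + 1))) (pairLocalization k (s i) (s (i + 1))) := by
  induction l, hil using Nat.le_induction with
  | base => exact .refl _
  | succ l _ ih => exact (h.dominates_succ hp l).trans ih

theorem dominates_div_pow (h : IsBlowUpSequence p a s) (l m : ℕ) :
    Dominates (pairLocalization k (s l / s (l + 1) ^ m) (s (l + 1)))
      (pairLocalization k (s l) (s (l + 1))) := by
  have hdom := dominates_pairLocalization_mul_pow (h.isTranscendenceBasis_div l m).1 m
  rwa [div_mul_cancel₀ _ (pow_ne_zero m (h.ne_zero _))] at hdom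

theorem mem_pairLocalization_of_le (h : IsBlowUpSequence p a s) (hp : p ≠ 0) (hji : j ≤ i + 1) :
    s j ∈ pairLocalization k (s i) (s (i + 1)) := by
  rcases hji.lt_or_eq with hji | rfl
  · exact (h.dominates_of_le hp (Nat.le_of_lt_succ hji)).le (left_mem_pairLocalization _ _)
  · exact right_mem_pairLocalization _ _

theorem div_mem_pairLocalization (h : IsBlowUpSequence p b w) (hp : 0 < p)
    (hli : l < i ∨ l = i ∧ q ≠ 0) :
    w l / w (l + 1) ∈ pairLocalization k (w i / w (i + 1) ^ q) (w (i + 1)) := by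
  rcases hli with hli | ⟨rfl, hq⟩
  · refine (h.dominates_div_pow i q).le ?_
    rw [← pow_one (w (l + 1)), h.div_pow_eq l hp]
    exact mul_mem (pow_mem (h.mem_pairLocalization_of_le hp.ne' (by lia)) _)
      (add_mem (h.mem_pairLocalization_of_le hp.ne' (by lia))
        (algebraMap_mem_pairLocalization _ _ _))
  · have hdiv : w l / w (l + 1) = w l / w (l + 1) ^ q * w (l + 1) ^ (q - 1) := by
      obtain ⟨n, rfl⟩ := Nat.exists_eq_succ_of_ne_zero hq
      rw [Nat.succ_sub_one, pow_succ, div_mul_eq_div_div_swap,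
        div_mul_cancel₀ _ (pow_ne_zero n (h.ne_zero _))]
    exact hdiv ▸ mul_mem (left_mem_pairLocalization _ _)
      (pow_mem (right_mem_pairLocalization _ _) _)

theorem jacobianBracket_ne_zero (h : IsBlowUpSequence p a s) (hp : p ≠ 0)
    {D₀ D₁ : Derivation k F F} (hJ : jacobianBracket D₀ D₁ (s 0) (s 1) ≠ 0) (l m : ℕ) :
    jacobianBracket D₀ D₁ (s l / s (l + 1) ^ m) (s (l + 1)) ≠ 0 := by
  have hle := (h.dominates_div_pow l m).le
  obtain ⟨c, -, hc⟩ := exists_jacobianBracket_eq_mul D₀ D₁ (h.isTranscendenceBasis_div l m).1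
    (hle (h.mem_pairLocalization_of_le hp (Nat.zero_le _)))
    (hle (h.mem_pairLocalization_of_le hp (Nat.le_add_left 1 l)))
  exact right_ne_zero_of_mul (hc ▸ hJ)

end IsBlowUpSequence

namespace IsStableSequence

theorem isNonunitIn_lower (h : IsStableSequence p a b s w) (hp : p ≠ 0) (i : ℕ) :
    IsNonunitIn (pairLocalization k (s i) (s (i + 1))) (w i) ∧
      IsNonunitIn (pairLocalization k (s i) (s (i + 1))) (w (i + 1)) := by
  have hs := (h.upper.isTranscendenceBasis i).1
  have := isLocalRing_pairLocalization hs
  exact ⟨(h.isStableForm i).isNonunitIn_fst (algebraMap_mem_pairLocalization _ _) hp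
    (isNonunitIn_left hs) (isNonunitIn_right hs), (h.isStableForm i).isNonunitIn_snd hp
    (isNonunitIn_left hs) (isNonunitIn_right hs)⟩

theorem isNonunitIn_lower_div_pow (h : IsStableSequence p a b s w) (hp : p ≠ 0)
    (hjl : j ≤ l + 1) :
    IsNonunitIn (pairLocalization k (s l / s (l + 1) ^ m) (s (l + 1))) (w j) := by
  refine (h.upper.dominates_div_pow l m).isNonunitIn ?_
  rcases hjl.lt_or_eq with hjl | rfl
  · exact (h.upper.dominates_of_le hp (Nat.le_of_lt_succ hjl)).isNonunitIn
      (h.isNonunitIn_lower hp j).1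
  · exact (h.isNonunitIn_lower hp l).2

section Dominated

variable [Fact p.Prime] [IsLocalRing (pairLocalization k (s l / s (l + 1) ^ m) (s (l + 1)))]
  [IsNoetherianRing (pairLocalization k (s l / s (l + 1) ^ m) (s (l + 1)))]
  {y₁ y₂ : pairLocalization k (s l / s (l + 1) ^ m) (s (l + 1))}

theorem div_lower_notMem (h : IsStableSequence p a b s w) (hm : m < p)
    (hy : IsParameterPair y₁ y₂) :
    w l / w (l + 1) ∉ pairLocalization k (s l / s (l + 1) ^ m) (s (l + 1)) := by
  refine IsStableForm.div_notMem hm (h.upper.isTranscendenceBasis_div l m).1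
    (h.lower.ne_zero _) hy ?_
  rw [div_mul_cancel₀ _ (pow_ne_zero m (h.upper.ne_zero _))]
  exact (h.isStableForm l).mono (h.upper.dominates_div_pow l m).le

variable [CharP k p]

theorem not_hasMonomialParams_lower (h : IsStableSequence p a b s w) (hm : m < p)
    {D₀ D₁ : Derivation k F F} (hJ : jacobianBracket D₀ D₁ (s 0) (s 1) ≠ 0)
    (hy : IsParameterPair y₁ y₂) : ¬ HasMonomialParams (pairLocalization k (w l) (w (l + 1)))
      (pairLocalization k (s l / s (l + 1) ^ m) (s (l + 1))) y₁ y₂ := by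
  have hcancel : s l / s (l + 1) ^ m * s (l + 1) ^ m = s l :=
    div_mul_cancel₀ _ (pow_ne_zero m (h.upper.ne_zero _))
  exact IsStableForm.not_hasMonomialParams hm
    (h.upper.jacobianBracket_ne_zero (Fact.out : p.Prime).ne_zero hJ l m)
    (h.upper.isTranscendenceBasis_div l m).1
    (hcancel.symm ▸ (h.upper.isTranscendenceBasis l).1) (h.lower.isTranscendenceBasis l).1
    (hcancel.symm ▸ h.isStableForm l) hy

theorem not_hasMonomialParams (h : IsStableSequence p a b s w) (hm : m < p) (hq : q < p)
    {D₀ D₁ : Derivation k F F} (hJ : jacobianBracket D₀ D₁ (s 0) (s 1) ≠ 0)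
    (hy : IsParameterPair y₁ y₂)
    (hle : pairLocalization k (w i / w (i + 1) ^ q) (w (i + 1)) ≤
      pairLocalization k (s l / s (l + 1) ^ m) (s (l + 1))) :
    ¬ HasMonomialParams (pairLocalization k (w i / w (i + 1) ^ q) (w (i + 1)))
      (pairLocalization k (s l / s (l + 1) ^ m) (s (l + 1))) y₁ y₂ := by
  intro hmon
  have hp := (Fact.out : p.Prime).pos
  have hk := algebraMap_mem_pairLocalization (k := k) (s l / s (l + 1) ^ m) (s (l + 1))
  have hw (j : ℕ) (hj : j ≤ l + 1) := h.isNonunitIn_lower_div_pow (m := m) hp.ne' hj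
  have hli : ¬ (l < i ∨ l = i ∧ q ≠ 0) := fun hli =>
    h.div_lower_notMem hm hy (hle (h.lower.div_mem_pairLocalization hp hli))
  refine h.not_hasMonomialParams_lower hm hJ hy ?_
  rcases lt_or_ge i l with hil | hil
  · exact h.lower.hasMonomialParams_of_le hp hy hk hw hil
      (h.lower.hasMonomialParams_succ hy hk (hw _ (by lia)) (hw _ (by lia)) hq hmon)
  · obtain ⟨rfl, rfl⟩ : i = l ∧ q = 0 := by lia
    simpa only [pow_zero, div_one] using hmon

end Dominated

end IsStableSequence

end StableSequences

section RegularLocalSubrings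

variable {F : Type} [Field F] {k : Type} [Field k] [Algebra k F] {S : Subring F} {n : ℕ}

theorem ringKrullDim_subring_le_of_trdeg_le (h : Algebra.trdeg k F ≤ n)
    (hk : ∀ c : k, algebraMap k F c ∈ S) : ringKrullDim S ≤ n :=
  let S' : Subalgebra k F := { S with algebraMap_mem' := hk }
  ringKrullDim_le_of_trdeg_le (D := S')
    ((trdeg_le_of_injective S'.val Subtype.val_injective).trans h)

theorem maximalIdeal_eq_span_of_forall_mem_iff {R : Type*} [CommRing R] [IsLocalRing R]
    {T : Set R} (h : ∀ z, z ∈ Ideal.span T ↔ ¬ IsUnit z) :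
    IsLocalRing.maximalIdeal R = Ideal.span T :=
  Ideal.ext fun z => ((h z).trans (IsLocalRing.mem_maximalIdeal z).symm).symm

theorem range_fin_two {α : Type*} (t : Fin 2 → α) : Set.range t = {t 0, t 1} :=
  Set.ext fun z => by simp [Fin.exists_fin_two, eq_comm]

theorem isParameterPair_of_forall_mem_iff {R : Type*} [CommRing R] [IsLocalRing R]
    (hdim : ringKrullDim R = 2) {t : Fin 2 → R}
    (h : ∀ z, z ∈ Ideal.span (Set.range t) ↔ ¬ IsUnit z) : IsParameterPair (t 0) (t 1) :=
  ⟨hdim, by rw [maximalIdeal_eq_span_of_forall_mem_iff h, range_fin_two]⟩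

theorem generatesMaximalIdeal_of_forall_mem_iff {t : Fin 2 → S}
    (h : ∀ z, z ∈ Ideal.span (Set.range t) ↔ ¬ IsUnit z) :
    GeneratesMaximalIdeal S (t 0 : F) (t 1) := by
  have ht (i : Fin 2) : IsNonunitIn S (t i : F) :=
    ⟨(t i).2, fun hu => (h (t i)).1 (Ideal.subset_span ⟨i, rfl⟩) ((isUnit_mk_iff _).2 hu)⟩
  refine ⟨ht 0, ht 1, fun z hz => ?_⟩
  have hmem := (h ⟨z, hz.mem⟩).2 fun hu => hz.2 ((isUnit_mk_iff _).1 hu)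
  rw [range_fin_two, Ideal.mem_span_pair] at hmem
  obtain ⟨a, b, hab⟩ := hmem
  exact ⟨a, a.2, b, b.2, congrArg Subtype.val hab.symm⟩

namespace IsRegularLocalOfDim

theorem valuationRing (h : IsRegularLocalOfDim S n) (hn : n ≤ 1) : ValuationRing S := by
  obtain ⟨hnoeth, hloc, -, t, ht⟩ := h
  refine ((tfae_of_isNoetherianRing_of_isLocalRing_of_isDomain (R := S)).out 1 4 :).2 ?_
  rw [maximalIdeal_eq_span_of_forall_mem_iff ht]
  interval_cases n
  · exact ⟨0, by simp⟩
  · exact ⟨t 0, by simp [Set.range_unique]⟩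

theorem exists_eq_pairLocalization {p : ℕ} {a : ℕ → k} {s : ℕ → F} {V : Subring F}
    (h : IsRegularLocalOfDim S n) (hs : IsBlowUpSequence p a s) (hp : 1 < p)
    (hV : ∀ i, IsNonunitIn V (s i)) (hVS : Dominates V S)
    (hle : pairLocalization k (s 0) (s 1) ≤ S)
    (hS : ∀ z ∈ S, z ∈ IntermediateField.adjoin k {s 0, s 1}) :
    n = 2 ∧ ∃ i m, m < p ∧ S = pairLocalization k (s i / s (i + 1) ^ m) (s (i + 1)) := by
  obtain ⟨hnoeth, hloc, hdim, t, ht⟩ := id h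
  have hk (c : k) := hle (algebraMap_mem_pairLocalization (s 0) (s 1) c)
  have h0 := hle (left_mem_pairLocalization (s 0) (s 1))
  have h1 := hle (right_mem_pairLocalization (s 0) (s 1))
  have hn : n ≤ 2 := by
    have htr : Algebra.trdeg k F ≤ (2 : ℕ) := by
      simpa using (hs.isTranscendenceBasis 0).cardinalMk_eq_trdeg.ge
    exact_mod_cast hdim ▸ ringKrullDim_subring_le_of_trdeg_le htr hk
  obtain rfl : n = 2 := le_antisymm hn <| not_lt.1 fun hlt =>
    hs.not_valuationRing hp hk hVS hV h0 h1 (h.valuationRing (Nat.le_of_lt_succ hlt))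
  have := (isParameterPair_of_forall_mem_iff hdim ht).uniqueFactorizationMonoid
  exact ⟨rfl, hs.exists_eq_pairLocalization hp hk hVS hV h0 h1 hS⟩

end IsRegularLocalOfDim

theorem IsMonomialExtension.exists_hasMonomialParams {A B : Subring F} [IsLocalRing B]
    (h : IsMonomialExtension A B) (hdim : ringKrullDim A = 2) :
    ∃ y₁ y₂ : B, IsParameterPair y₁ y₂ ∧ HasMonomialParams A B y₁ y₂ := by
  obtain ⟨n, hAB, hA, hB, xs, ys, δ, M, hxs, hys, hδ, hdet, hM⟩ := h
  obtain rfl : n = 2 := by exact_mod_cast hA.2.2.1.symm.trans hdim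
  refine ⟨ys 0, ys 1, isParameterPair_of_forall_mem_iff hB.2.2.1 hys,
    Subring.inclusion hAB (xs 0), Subring.inclusion hAB (xs 1),
    generatesMaximalIdeal_of_forall_mem_iff hxs,
    (hδ 0).unit, (hδ 1).unit, M 0 0, M 0 1, M 1 0, M 1 1, fun heq => hdet ?_, ?_, ?_⟩
  · simp only [Matrix.det_fin_two, Matrix.map_apply]
    exact sub_eq_zero.2 (by exact_mod_cast heq)
  all_goals rw [hM, Fin.prod_univ_two, ← mul_assoc, IsUnit.unit_spec]

theorem IsStableSequence.not_isMonomialExtension {p : ℕ} [Fact p.Prime] [CharP k p]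
    {a b : ℕ → k} {s w : ℕ → F} (h : IsStableSequence p a b s w)
    {D₀ D₁ : Derivation k F F} (hJ : jacobianBracket D₀ D₁ (s 0) (s 1) ≠ 0) {V A B : Subring F}
    (hV : ∀ i, Dominates V (pairLocalization k (s i) (s (i + 1))))
    (hA : ∀ z ∈ A, z ∈ IntermediateField.adjoin k {w 0, w 1})
    (hB : ∀ z ∈ B, z ∈ IntermediateField.adjoin k {s 0, s 1})
    (hwA : pairLocalization k (w 0) (w 1) ≤ A) (hsB : pairLocalization k (s 0) (s 1) ≤ B)
    (hVB : Dominates V B) (hBA : Dominates B A) : ¬ IsMonomialExtension A B := by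
  intro hmon
  have hp := (Fact.out : p.Prime)
  obtain ⟨n, -, hregA, hregB, -⟩ := id hmon
  obtain ⟨-, l, m, hm, rfl⟩ := hregB.exists_eq_pairLocalization h.upper hp.one_lt
    (fun i => (hV i).isNonunitIn (isNonunitIn_left (h.upper.isTranscendenceBasis i).1))
    hVB hsB hB
  obtain ⟨rfl, i, q, hq, rfl⟩ := hregA.exists_eq_pairLocalization h.lower hp.one_lt
    (fun i => (hV i).isNonunitIn (h.isNonunitIn_lower hp.ne_zero i).1) (hVB.trans hBA) hwA hA
  have := hregB.1
  have := hregB.2.1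
  obtain ⟨y₁, y₂, hy, hparams⟩ := hmon.exists_hasMonomialParams hregA.2.2.1
  exact h.not_hasMonomialParams hm hq hJ hy hBA.le hparams

end RegularLocalSubrings

section Counterexample

variable {k F : Type} [Field k] [Field F] [Algebra k F] {x y u v : F} {p : ℕ}

theorem IsStableForm.exists_valuationSubring_not_isMonomialExtension [Fact p.Prime] [CharP k p]
    (hcard : 3 ≤ Cardinal.mk k) (hxy : IsTranscendenceBasis k ![x, y])
    (huv : IsTranscendenceBasis k ![u, v]) (hF : IntermediateField.adjoin k {x, y} = ⊤)
    {D₀ D₁ : Derivation k F F} (hJ : jacobianBracket D₀ D₁ x y ≠ 0)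
    (h : IsStableForm k p (pairLocalization k x y) x y u v) :
    ∃ V : Subring F, IsValuationSubring V ∧ Dominates V (pairLocalization k x y) ∧
      ∀ A B : Subring F, (A : Set F) ⊆ IntermediateField.adjoin k {u, v} →
        pairLocalization k u v ≤ A → pairLocalization k x y ≤ B →
        Dominates V B → Dominates B A → ¬ IsMonomialExtension A B := by
  obtain ⟨a, b, s, w, hsw, rfl, rfl, rfl, rfl⟩ := h.exists_isStableSequence hcard hxy huv
  obtain ⟨V, hV⟩ := exists_valuationSubring_dominates_of_chain
    (R := fun i => pairLocalization k (s i) (s (i + 1)))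
    (fun i => isLocalRing_pairLocalization (hsw.upper.isTranscendenceBasis i).1)
    (hsw.upper.dominates_succ (Fact.out : p.Prime).ne_zero)
  exact ⟨V.toSubring, isValuationSubring_toSubring V ((hV 0).isNonunitIn (isNonunitIn_left hxy.1))
    (hsw.upper.ne_zero 0), hV 0, fun A B hA hwA hsB hVB hBA =>
    hsw.not_isMonomialExtension hJ hV hA (fun z _ => hF ▸ IntermediateField.mem_top) hwA hsB
      hVB hBA⟩

theorem isStableForm_pow_mul_one_add (x y : F) :
    IsStableForm k p (pairLocalization k x y) x y (x ^ p * (1 + y)) (y ^ p + x) :=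
  ⟨⟨1, one_ne_zero, 0, zero_mem _, 1, .one _, by rw [map_one, zero_mul, add_zero, one_mul]⟩,
    ⟨1, .one _, 1, .one _, by rw [one_mul, one_mul]⟩⟩

theorem dominates_pow_mul_one_add (h : AlgebraicIndependent k ![x, y]) (hp : p ≠ 0) :
    Dominates (pairLocalization k x y) (pairLocalization k (x ^ p * (1 + y)) (y ^ p + x)) := by
  have := isLocalRing_pairLocalization h
  have hx := isNonunitIn_left h
  have hy := isNonunitIn_right h
  exact dominates_pairLocalization (algebraMap_mem_pairLocalization x y)
    ((hx.pow hp).mul_right (add_mem (one_mem _) hy.mem)) ((hy.pow hp).add hx)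

end Counterexample

theorem stmt1_general {k F : Type} [Field k] [Field F] [Algebra k F]
    [Algebra (MvPolynomial (Fin 2) k) F] [IsScalarTower k (MvPolynomial (Fin 2) k) F]
    [IsFractionRing (MvPolynomial (Fin 2) k) F] {p : ℕ} (hp : p.Prime) [CharP k p]
    (hcard : 3 ≤ Cardinal.mk k) {x y u v : F}
    (hx : x = algebraMap (MvPolynomial (Fin 2) k) F (X 0))
    (hy : y = algebraMap (MvPolynomial (Fin 2) k) F (X 1))
    (hu : u = x ^ p * (1 + y)) (hv : v = y ^ p + x) {B A : Subring F}
    (hB : B = localSubring (algebraMap (MvPolynomial (Fin 2) k) F))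
    (hA : A = localSubring
      (aeval ![u, v] : MvPolynomial (Fin 2) k →ₐ[k] F).toRingHom) :
    Dominates B A ∧ ∃ V : Subring F, IsValuationSubring V ∧ (∀ c : k, algebraMap k F c ∈ V) ∧
      Dominates V B ∧ ∀ A' B' : Subring F, (A' : Set F) ⊆ IntermediateField.adjoin k {u, v} →
        A ≤ A' → B ≤ B' → Dominates V B' → Dominates B' A' → ¬ IsMonomialExtension A' B' := by
  have : Fact p.Prime := ⟨hp⟩
  have hX : (fun i : Fin 2 => algebraMap (MvPolynomial (Fin 2) k) F (X i)) = ![x, y] := by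
    rw [hx, hy]
    exact funext (Fin.forall_fin_two.2 ⟨rfl, rfl⟩)
  have hxy : IsTranscendenceBasis k ![x, y] := hX ▸ isTranscendenceBasis_algebraMap_X k (Fin 2) F
  have hF : IntermediateField.adjoin k {x, y} = ⊤ := by
    rw [← adjoin_range_algebraMap_X k (Fin 2) F, hX, Matrix.range_cons_cons_empty]
  obtain ⟨D₀, D₁, hJ⟩ := exists_jacobianBracket_eq_one (k := k) (F := F)
  rw [localSubring_algebraMap, ← hx, ← hy] at hB
  rw [← hx, ← hy] at hJ
  subst hB hA hu hv
  obtain ⟨V, hV, hVB, hmon⟩ :=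
    (isStableForm_pow_mul_one_add x y).exists_valuationSubring_not_isMonomialExtension hcard hxy
      (isTranscendenceBasis_pow_mul_one_add_pow_add hxy) hF (hJ.trans_ne one_ne_zero)
  exact ⟨dominates_pow_mul_one_add hxy.1 hp.ne_zero, V, hV,
    fun c => hVB.le (algebraMap_mem_pairLocalization x y c), hVB, hmon⟩

/-- the counterexample of Section 3 of the paper.
Let `k` be a field of characteristic `p > 0` with at least 3 elements,
`K* = k(x,y)`, `u = x^p (1+y)`, `v = y^p + x`, `K = k(u,v) ⊆ K*`,
`B = k[x,y]_(x,y)` and `A = k[u,v]_(u,v)`.  Then `B` dominates `A` and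
there is a valuation ring `V*` of `K*` containing `k` which dominates `B`
such that there do not exist regular algebraic local rings `A'` of `K` over
`k` and `B'` of `K*` over `k` with `V*` dominating `B'`, `B'` dominating
`A'`, `A'` dominating `A`, `B'` dominating `B`, and `A' → B'` a monomial
extension. -/
theorem stmt1 (k : Type) [Field k] (p : ℕ) (hp : p.Prime) [CharP k p]
    (hcard : 3 ≤ Cardinal.mk k)
    (x y u v : FractionRing (MvPolynomial (Fin 2) k))
    (hx : x = algebraMap (MvPolynomial (Fin 2) k) _ (X 0))
    (hy : y = algebraMap (MvPolynomial (Fin 2) k) _ (X 1))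
    (huv : u = x ^ p * (1 + y)) (hvv : v = y ^ p + x)
    (K : IntermediateField k (FractionRing (MvPolynomial (Fin 2) k)))
    (hK : K = IntermediateField.adjoin k {u, v})
    (B : Subring (FractionRing (MvPolynomial (Fin 2) k)))
    (hB : B = localSubring
      (algebraMap (MvPolynomial (Fin 2) k) (FractionRing (MvPolynomial (Fin 2) k))))
    (A : Subring (FractionRing (MvPolynomial (Fin 2) k)))
    (hA : A = localSubring
      ((MvPolynomial.aeval ![u, v] :
        MvPolynomial (Fin 2) k →ₐ[k] FractionRing (MvPolynomial (Fin 2) k)).toRingHom)) :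
    Dominates B A ∧
    ∃ V : Subring (FractionRing (MvPolynomial (Fin 2) k)),
      IsValuationSubring V ∧
      (∀ c : k, algebraMap k (FractionRing (MvPolynomial (Fin 2) k)) c ∈ V) ∧
      Dominates V B ∧
      ¬ ∃ A' B' : Subring (FractionRing (MvPolynomial (Fin 2) k)),
          IsAlgebraicLocalRingOf k K A' ∧
          IsAlgebraicLocalRingOf k
            (⊤ : IntermediateField k (FractionRing (MvPolynomial (Fin 2) k))) B' ∧
          (∃ m, IsRegularLocalOfDim A' m) ∧
          (∃ m, IsRegularLocalOfDim B' m) ∧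
          Dominates V B' ∧ Dominates B' A' ∧
          Dominates A' A ∧ Dominates B' B ∧
          IsMonomialExtension A' B' := by
  obtain ⟨hBA, V, hV, hk, hVB, h⟩ := stmt1_general hp hcard hx hy huv hvv hB hA
  exact ⟨hBA, V, hV, hk, hVB, fun ⟨A', B', hA', _, _, _, hVB', hBA', hAA, hBB, hmon⟩ =>
    h A' B' (hK ▸ hA'.1) hAA.le hBB.le hVB' hBA' hmon⟩
end

section
/- Let k be a field of characteristic p > 0, let r ≥ 1, and let t₁, …, t_r, x, y be indeterminates. Set u = x^p(1+y) and v = y^p + x, let K* = k(t₁,…,t_r,x,y), and let K = k(t₁,…,t_r,u,v) ⊆ K*. Then K ⊆ K* is a finite separable field extension, and K and K* are finitely generated field extensions of k of transcendence degree r + 2. -/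
open MvPolynomial IntermediateField

/-!
Put `u = x ^ m * (1 + y)` and `v = y ^ n + x`. Substituting `x = v - y ^ n` into `u` shows that
`K* = K(y)` and that `y` is a root of `(v - Y ^ n) ^ m * (1 + Y) - u`, a polynomial over `K`. The
derivative of this polynomial at `y` is the Jacobian determinant `∂(u, v) / ∂(y, x)`, which is not
the zero polynomial in `x` and `y`: its value at `(x, y) = (1, -1)` is `1`. (If `m = n = p` is the
characteristic, it is simply `x ^ p`.) So `y` is separable over `K`, and a transcendence basis of
`K` over `k` remains one of the algebraic extension `K*`.
-/

section FieldExtensions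

theorem adjoin_image_algebraMap_eq_top {k A : Type*} (L : Type*) [Field k] [CommRing A] [Field L]
    [Algebra k A] [Algebra k L] [Algebra A L] [IsScalarTower k A L] [IsFractionRing A L]
    {s : Set A} (hs : Algebra.adjoin k s = ⊤) :
    IntermediateField.adjoin k (algebraMap A L '' s) = ⊤ := by
  have algebraMap_mem (a : A) :
      algebraMap A L a ∈ IntermediateField.adjoin k (algebraMap A L '' s) :=
    algebra_adjoin_le_adjoin k _ <| by
      rw [Algebra.adjoin_algebraMap, hs]
      exact ⟨a, Algebra.mem_top, rfl⟩
  refine eq_top_iff.2 fun z _ ↦ ?_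
  obtain ⟨a, b, -, rfl⟩ := IsFractionRing.div_surjective (A := A) z
  exact div_mem (algebraMap_mem a) (algebraMap_mem b)

theorem adjoin_range_algebraMap_X_eq_top (σ k : Type*) [Field k] :
    IntermediateField.adjoin k (Set.range fun i : σ ↦
      algebraMap (MvPolynomial σ k) (FractionRing (MvPolynomial σ k)) (X i)) = ⊤ := by
  simpa only [← Set.range_comp, Function.comp_def] using
    adjoin_image_algebraMap_eq_top (FractionRing (MvPolynomial σ k)) (adjoin_range_X (R := k))

theorem isTranscendenceBasis_algebraMap_X_s12 (σ R : Type*) [CommRing R] [IsDomain R] :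
    IsTranscendenceBasis R fun i : σ ↦
      algebraMap (MvPolynomial σ R) (FractionRing (MvPolynomial σ R)) (X i) :=
  have : Algebra.IsAlgebraic (MvPolynomial σ R) (FractionRing (MvPolynomial σ R)) :=
    IsLocalization.isAlgebraic _ (nonZeroDivisors _)
  (IsTranscendenceBasis.mvPolynomial σ R).algebraMap_comp

theorem exists_isTranscendenceBasis_of_isAlgebraic {ι R A : Type*} (S : Type*) [CommRing R]
    [CommRing S] [CommRing A] [IsDomain A] [Algebra R S] [Algebra R A] [Algebra S A]
    [IsScalarTower R S A] [FaithfulSMul R S] [FaithfulSMul S A] [Algebra.IsAlgebraic S A]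
    {b : ι → A} (hb : IsTranscendenceBasis R b) : ∃ b' : ι → S, IsTranscendenceBasis R b' := by
  have : IsDomain S := (FaithfulSMul.algebraMap_injective S A).isDomain
  have : Nontrivial R := (algebraMap R S).domain_nontrivial
  obtain ⟨s, hs⟩ := exists_isTranscendenceBasis R S
  obtain ⟨e⟩ := Cardinal.lift_mk_eq'.1 (hb.lift_cardinalMk_eq (hs.algebraMap_comp (A := A)))
  exact ⟨_, (isTranscendenceBasis_equiv e).2 hs⟩

theorem isSeparable_of_aeval_derivative_ne_zero {F A : Type*} [Field F] [CommRing A] [IsDomain A]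
    [Algebra F A] {a : A} {f : Polynomial F} (hf : Polynomial.aeval a f = 0)
    (hf' : Polynomial.aeval a (Polynomial.derivative f) ≠ 0) : IsSeparable F a := by
  have hf0 : f ≠ 0 := by
    rintro rfl
    exact hf' (by rw [Polynomial.derivative_zero, map_zero])
  have ha : IsIntegral F a := IsAlgebraic.isIntegral ⟨f, hf0, hf⟩
  refine (Polynomial.separable_iff_derivative_ne_zero (minpoly.irreducible ha)).2 fun h ↦ hf' ?_
  obtain ⟨g, rfl⟩ := minpoly.dvd F a hf
  rw [Polynomial.derivative_mul, h, zero_mul, zero_add, map_mul, minpoly.aeval, zero_mul]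

variable {F E : Type*} [Field F] [Field E] [Algebra F E] {a : E}

theorem finiteDimensional_of_adjoin_simple_eq_top (ha : IsIntegral F a) (htop : F⟮a⟯ = ⊤) :
    FiniteDimensional F E := by
  have := adjoin.finiteDimensional ha
  rw [htop] at this
  exact topEquiv.toLinearEquiv.finiteDimensional

theorem algebraIsSeparable_of_adjoin_simple_eq_top (ha : IsSeparable F a) (htop : F⟮a⟯ = ⊤) :
    Algebra.IsSeparable F E := by
  rw [← isSeparable_top F E, ← htop]
  exact (isSeparable_adjoin_simple_iff_isSeparable F E).2 ha

end FieldExtensions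

section Jacobian

variable {R S : Type*} [CommRing R] [CommRing S]

/-- The Jacobian determinant `∂(u, v) / ∂(y, x)` of `u = x ^ m * (1 + y)` and `v = y ^ n + x`.
It is the value at `Y = y` of the derivative of `eliminant m n u v`. The exponents `m - 1` and
`n - 1` are truncated only where the factor `m` or `n` is zero. -/
def jacobian (m n : ℕ) (x y : R) : R :=
  x ^ m - m * x ^ (m - 1) * (n * y ^ (n - 1)) * (1 + y)

theorem map_jacobian (f : R →+* S) (m n : ℕ) (x y : R) :
    f (jacobian m n x y) = jacobian m n (f x) (f y) := by
  simp only [jacobian, map_sub, map_mul, map_pow, map_add, map_one, map_natCast]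

theorem jacobian_one_neg_one (m n : ℕ) : jacobian m n (1 : R) (-1) = 1 := by
  simp only [jacobian, one_pow, add_neg_cancel, mul_zero, sub_zero]

theorem jacobian_X_ne_zero [Nontrivial R] {σ : Type*} {i j : σ} (hij : i ≠ j) (m n : ℕ) :
    jacobian m n (X i : MvPolynomial σ R) (X j) ≠ 0 := by
  classical
  intro h
  have heval := congrArg (eval (Function.update 1 j (-1))) h
  rw [map_jacobian, eval_X, eval_X, Function.update_self, Function.update_of_ne hij,
    Pi.one_apply, jacobian_one_neg_one, map_zero] at heval
  exact one_ne_zero heval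

/-- The polynomial in `Y` obtained by eliminating `x` from `u = x ^ m * (1 + Y)` and
`v = Y ^ n + x`. -/
noncomputable def eliminant (m n : ℕ) (u v : R) : Polynomial R :=
  (Polynomial.C v - Polynomial.X ^ n) ^ m * (1 + Polynomial.X) - Polynomial.C u

variable [Algebra R S] {m n : ℕ} {u v : R} {x y : S}

theorem aeval_eliminant (hu : algebraMap R S u = x ^ m * (1 + y))
    (hv : algebraMap R S v = y ^ n + x) : Polynomial.aeval y (eliminant m n u v) = 0 := by
  simp only [eliminant, map_sub, map_mul, map_pow, map_add, map_one, Polynomial.aeval_C,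
    Polynomial.aeval_X, hu, hv, add_sub_cancel_left, sub_self]

theorem aeval_derivative_eliminant (hv : algebraMap R S v = y ^ n + x) :
    Polynomial.aeval y (Polynomial.derivative (eliminant m n u v)) = jacobian m n x y := by
  simp only [eliminant, jacobian, Polynomial.derivative_mul, Polynomial.derivative_pow,
    Polynomial.derivative_one, Polynomial.derivative_C, Polynomial.derivative_X, map_sub, map_mul,
    map_pow, map_add, map_one, map_zero, map_natCast, Polynomial.aeval_C, Polynomial.aeval_X, hv,
    add_sub_cancel_left]
  ring

end Jacobian

section Generators

variable {k E : Type*} [Field k] [Field E] [Algebra k E] {K : IntermediateField k E} {s : Set E}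
  {m n : ℕ} {x y : E}

theorem isSeparable_of_jacobian_ne_zero (hu : x ^ m * (1 + y) ∈ K) (hv : y ^ n + x ∈ K)
    (hJ : jacobian m n x y ≠ 0) : IsSeparable K y := by
  refine isSeparable_of_aeval_derivative_ne_zero (f := eliminant m n ⟨_, hu⟩ ⟨_, hv⟩)
    (aeval_eliminant rfl rfl) ?_
  rwa [aeval_derivative_eliminant rfl]

theorem adjoin_simple_eq_top_of_pow_add_mem (htop : IntermediateField.adjoin k (s ∪ {x, y}) = ⊤)
    (hs : s ⊆ K) (hv : y ^ n + x ∈ K) : K⟮y⟯ = ⊤ := by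
  have hy : y ∈ K⟮y⟯ := mem_adjoin_simple_self K y
  have mem_of_mem {z : E} (hz : z ∈ K) : z ∈ K⟮y⟯ := K⟮y⟯.algebraMap_mem ⟨z, hz⟩
  have hx : x ∈ K⟮y⟯ := by
    simpa only [add_sub_cancel_left] using sub_mem (mem_of_mem hv) (pow_mem hy n)
  rw [← restrictScalars_eq_top_iff (K := k), eq_top_iff, ← htop, adjoin_le_iff]
  rintro z (hz | rfl | rfl)
  exacts [mem_of_mem (hs hz), hx, hy]

theorem finiteDimensional_and_isSeparable_of_jacobian_ne_zero
    (htop : IntermediateField.adjoin k (s ∪ {x, y}) = ⊤) (hJ : jacobian m n x y ≠ 0)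
    (hK : K = IntermediateField.adjoin k (s ∪ {x ^ m * (1 + y), y ^ n + x})) :
    FiniteDimensional K E ∧ Algebra.IsSeparable K E := by
  have hsub : s ∪ {x ^ m * (1 + y), y ^ n + x} ⊆ (K : Set E) := hK ▸ subset_adjoin k _
  have hu : x ^ m * (1 + y) ∈ K := hsub (by simp)
  have hv : y ^ n + x ∈ K := hsub (by simp)
  have hsep : IsSeparable K y := isSeparable_of_jacobian_ne_zero hu hv hJ
  have hKy : K⟮y⟯ = ⊤ :=
    adjoin_simple_eq_top_of_pow_add_mem htop (Set.subset_union_left.trans hsub) hv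
  exact ⟨finiteDimensional_of_adjoin_simple_eq_top hsep.isIntegral hKy,
    algebraIsSeparable_of_adjoin_simple_eq_top hsep hKy⟩

end Generators

theorem stmt12_general (k : Type*) [Field k] (m n r : ℕ)
    (t : Fin r → FractionRing (MvPolynomial (Fin r ⊕ Fin 2) k))
    (x y u v : FractionRing (MvPolynomial (Fin r ⊕ Fin 2) k))
    (ht : ∀ i, t i = algebraMap (MvPolynomial (Fin r ⊕ Fin 2) k) _ (X (Sum.inl i)))
    (hx : x = algebraMap (MvPolynomial (Fin r ⊕ Fin 2) k) _ (X (Sum.inr 0)))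
    (hy : y = algebraMap (MvPolynomial (Fin r ⊕ Fin 2) k) _ (X (Sum.inr 1)))
    (hu : u = x ^ m * (1 + y)) (hv : v = y ^ n + x)
    (K : IntermediateField k (FractionRing (MvPolynomial (Fin r ⊕ Fin 2) k)))
    (hK : K = IntermediateField.adjoin k (Set.range t ∪ {u, v})) :
    FiniteDimensional K (FractionRing (MvPolynomial (Fin r ⊕ Fin 2) k)) ∧
    Algebra.IsSeparable K (FractionRing (MvPolynomial (Fin r ⊕ Fin 2) k)) ∧
    K.FG ∧
    (∃ s : Finset (FractionRing (MvPolynomial (Fin r ⊕ Fin 2) k)),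
      IntermediateField.adjoin k (s : Set (FractionRing (MvPolynomial (Fin r ⊕ Fin 2) k))) = ⊤) ∧
    (∃ b : Fin (r + 2) → K, IsTranscendenceBasis k b) ∧
    (∃ b : Fin (r + 2) → FractionRing (MvPolynomial (Fin r ⊕ Fin 2) k),
      IsTranscendenceBasis k b) := by
  have htop : IntermediateField.adjoin k (Set.range t ∪ {x, y}) = ⊤ := by
    rw [← adjoin_range_algebraMap_X_eq_top, Sum.range_eq, hx, hy, funext ht]
    congr 2
    ext z
    simp only [Set.mem_insert_iff, Set.mem_singleton_iff, Set.mem_range, Function.comp_apply,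
      Fin.exists_fin_two, eq_comm]
  have hJ : jacobian m n x y ≠ 0 := by
    rw [hx, hy, ← map_jacobian]
    exact (map_ne_zero_iff _ (IsFractionRing.injective _ _)).2
      (jacobian_X_ne_zero (by simp) m n)
  subst hu hv
  obtain ⟨hfin, hsep⟩ := finiteDimensional_and_isSeparable_of_jacobian_ne_zero htop hJ hK
  have hbasis := (isTranscendenceBasis_equiv finSumFinEquiv.symm).2
    (isTranscendenceBasis_algebraMap_X_s12 (Fin r ⊕ Fin 2) k)
  have fg_adjoin (a b : FractionRing (MvPolynomial (Fin r ⊕ Fin 2) k)) :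
      (IntermediateField.adjoin k (Set.range t ∪ {a, b})).FG :=
    fg_adjoin_of_finite ((Set.finite_range t).union (Set.toFinite _))
  exact ⟨hfin, hsep, hK ▸ fg_adjoin _ _, htop ▸ fg_adjoin x y,
    exists_isTranscendenceBasis_of_isAlgebraic K hbasis, _, hbasis⟩

/-- Let `k` be a field of characteristic `p > 0`, `r ≥ 1`, and
`t₁, …, t_r, x, y` indeterminates.  Set `u = x^p(1+y)`, `v = y^p + x`, let
`K* = k(t₁,…,t_r,x,y)` and `K = k(t₁,…,t_r,u,v) ⊆ K*`.  Then `K ⊆ K*` is a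
finite separable field extension, and `K` and `K*` are finitely generated
field extensions of `k` of transcendence degree `r + 2`. -/
theorem stmt12 (k : Type) [Field k] (p : ℕ) (hp : p.Prime) [CharP k p]
    (r : ℕ) (hr : 1 ≤ r)
    (t : Fin r → FractionRing (MvPolynomial (Fin r ⊕ Fin 2) k))
    (x y u v : FractionRing (MvPolynomial (Fin r ⊕ Fin 2) k))
    (ht : ∀ i, t i = algebraMap (MvPolynomial (Fin r ⊕ Fin 2) k) _ (X (Sum.inl i)))
    (hx : x = algebraMap (MvPolynomial (Fin r ⊕ Fin 2) k) _ (X (Sum.inr 0)))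
    (hy : y = algebraMap (MvPolynomial (Fin r ⊕ Fin 2) k) _ (X (Sum.inr 1)))
    (huv : u = x ^ p * (1 + y)) (hvv : v = y ^ p + x)
    (K : IntermediateField k (FractionRing (MvPolynomial (Fin r ⊕ Fin 2) k)))
    (hK : K = IntermediateField.adjoin k (Set.range t ∪ {u, v})) :
    FiniteDimensional K (FractionRing (MvPolynomial (Fin r ⊕ Fin 2) k)) ∧
    Algebra.IsSeparable K (FractionRing (MvPolynomial (Fin r ⊕ Fin 2) k)) ∧
    -- `K` is a finitely generated field extension of `k`:
    K.FG ∧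
    -- `K*` is a finitely generated field extension of `k`:
    (∃ s : Finset (FractionRing (MvPolynomial (Fin r ⊕ Fin 2) k)),
      IntermediateField.adjoin k (s : Set (FractionRing (MvPolynomial (Fin r ⊕ Fin 2) k))) = ⊤) ∧
    -- `K` has transcendence degree `r + 2` over `k`:
    (∃ b : Fin (r + 2) → K, IsTranscendenceBasis k b) ∧
    -- `K*` has transcendence degree `r + 2` over `k`:
    (∃ b : Fin (r + 2) → FractionRing (MvPolynomial (Fin r ⊕ Fin 2) k),
      IsTranscendenceBasis k b) := by
  exact stmt12_general k p p r t x y u v ht hx hy huv hvv K hK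
end
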